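/- arXiv:1408.6775 — 2 statements merged into one kernel-verified Lean document; each statement's English description precedes it below -/
import Mathlib

section
/- (Theorem 2.2, sufficiency part) Let γ > 1 and let the initial data (τ₀,u₀) satisfy Assumption A. If s_x(x,0) ≥ 0 and r_x(x,0) ≥ 0 for all x ∈ ℝ (i.e., the initial data are nowhere compressive), then the Cauchy problem for the p-system admits a unique global-in-time C¹ solution on ℝ × [0,∞). -/
open Real Set MeasureTheory Filter

/-- `η(τ) = (2√(K₁γ)/(γ−1)) τ^{−(γ−1)/2}`. -/
noncomputable def etaP (K₁ γ τv : ℝ) : ℝ :=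
  2 * Real.sqrt (K₁ * γ) / (γ - 1) * τv ^ (-(γ - 1) / 2)

/-- Lagrangian sound speed `c(τ) = √(K₁γ) τ^{−(γ+1)/2}`. -/
noncomputable def soundP (K₁ γ τv : ℝ) : ℝ :=
  Real.sqrt (K₁ * γ) * τv ^ (-(γ + 1) / 2)

/-- `K_τ = (2√(K₁γ)/(γ−1))^{2/(γ−1)}`. -/
noncomputable def KtauP (K₁ γ : ℝ) : ℝ :=
  (2 * Real.sqrt (K₁ * γ) / (γ - 1)) ^ (2 / (γ - 1))

/-- `K_c = √(K₁γ) K_τ^{−(γ+1)/2}`. -/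
noncomputable def KcP (K₁ γ : ℝ) : ℝ :=
  Real.sqrt (K₁ * γ) * KtauP K₁ γ ^ (-(γ + 1) / 2)

/-- A `Cᵏ` solution `(τ, u)` of the p-system with `γ`-law pressure `p = K₁ τ^{−γ}`
on `ℝ × I`:  `τ > 0`, both components are `Cᵏ`, and the equations
`τ_t − u_x = 0`, `u_t + (p(τ))_x = 0` hold pointwise. -/
def PSysSol (K₁ γ : ℝ) (I : Set ℝ) (k : ℕ) (τ u : ℝ → ℝ → ℝ) : Prop :=
  (∀ x t, t ∈ I → 0 < τ x t) ∧
  ContDiffOn ℝ k (fun p : ℝ × ℝ => τ p.1 p.2) (Set.univ ×ˢ I) ∧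
  ContDiffOn ℝ k (fun p : ℝ × ℝ => u p.1 p.2) (Set.univ ×ˢ I) ∧
  (∀ x : ℝ, ∀ t ∈ I, deriv (fun t' => τ x t') t - deriv (fun x' => u x' t) x = 0) ∧
  (∀ x : ℝ, ∀ t ∈ I, deriv (fun t' => u x t') t + deriv (fun x' => K₁ * τ x' t ^ (-γ)) x = 0)

/-- Assumption A: `τ₀, u₀` are `C¹` with `‖τ₀‖_{C¹} + ‖u₀‖_{C¹} ≤ M₁` and `τ₀ ≥ M₂ > 0`. -/
def AssumptionA (M₁ M₂ : ℝ) (τ₀ u₀ : ℝ → ℝ) : Prop :=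
  ContDiff ℝ 1 τ₀ ∧ ContDiff ℝ 1 u₀ ∧ 0 < M₁ ∧ 0 < M₂ ∧
  (∀ x, |τ₀ x| + |deriv τ₀ x| + |u₀ x| + |deriv u₀ x| ≤ M₁) ∧
  (∀ x, M₂ ≤ τ₀ x)


open scoped Topology

lemma psx_left {f : ℝ → ℝ} {f' b : ℝ} (hf : HasDerivAt f f' b)
    (h : ∀ᶠ y in 𝓝[<] b, f b ≤ f y) : f' ≤ 0 := by
  have h1 := (hasDerivAt_iff_tendsto_slope.1 hf).mono_left
    (nhdsWithin_mono b (s := Set.Iio b) (fun y hy => ne_of_lt hy))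
  refine le_of_tendsto h1 ?_
  filter_upwards [h, self_mem_nhdsWithin] with y hy hyb
  have hyb' : y < b := hyb
  rw [slope_def_field]
  exact div_nonpos_of_nonneg_of_nonpos (by linarith) (by linarith)

lemma psx_right {f : ℝ → ℝ} {f' b : ℝ} (hf : HasDerivAt f f' b)
    (h : ∀ᶠ y in 𝓝[>] b, f b ≤ f y) : 0 ≤ f' := by
  have h1 := (hasDerivAt_iff_tendsto_slope.1 hf).mono_left
    (nhdsWithin_mono b (s := Set.Ioi b) (fun y hy => ne_of_gt hy))
  refine ge_of_tendsto h1 ?_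
  filter_upwards [h, self_mem_nhdsWithin] with y hy hyb
  have hyb' : b < y := hyb
  rw [slope_def_field]
  exact div_nonneg (by linarith) (by linarith)

lemma psx_quasi_pos (Y Z m₁ n₁ m₂ n₂ : ℝ → ℝ → ℝ)
    (hY : Continuous fun p : ℝ × ℝ => Y p.1 p.2) (hZ : Continuous fun p : ℝ × ℝ => Z p.1 p.2)
    (hm₁ : Continuous fun p : ℝ × ℝ => m₁ p.1 p.2) (hn₁ : Continuous fun p : ℝ × ℝ => n₁ p.1 p.2)
    (hm₂ : Continuous fun p : ℝ × ℝ => m₂ p.1 p.2) (hn₂ : Continuous fun p : ℝ × ℝ => n₂ p.1 p.2)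
    (pm₁ : ∀ a b, a ≤ b → 0 ≤ m₁ a b) (pm₂ : ∀ a b, a ≤ b → 0 ≤ m₂ a b)
    (dY : ∀ a b, a ≤ b → HasDerivAt (fun y => Y a y) (m₁ a b * Z a b - n₁ a b * Y a b) b)
    (dZ : ∀ a b, a ≤ b → HasDerivAt (fun y => Z y b) (-(m₂ a b * Y a b - n₂ a b * Z a b)) a)
    (Y0 : ∀ a, 0 ≤ Y a a) (Z0 : ∀ a, 0 ≤ Z a a) :
    ∀ a b, a ≤ b → 0 ≤ Y a b ∧ 0 ≤ Z a b := by
  intro a₀ b₀ hab₀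
  set Tr : Set (ℝ × ℝ) := {p | a₀ ≤ p.1 ∧ p.1 ≤ p.2 ∧ p.2 ≤ b₀} with hTr
  have hTrc : IsCompact Tr := by
    refine IsCompact.of_isClosed_subset (isCompact_Icc (a := ((a₀, a₀) : ℝ × ℝ)) (b := (b₀, b₀))) ?_ ?_
    · exact (isClosed_le continuous_const continuous_fst).inter
        ((isClosed_le continuous_fst continuous_snd).inter
          (isClosed_le continuous_snd continuous_const))
    · rintro ⟨x, y⟩ ⟨h1, h2, h3⟩
      simp only at h1 h2 h3
      exact ⟨⟨h1, h1.trans h2⟩, ⟨h2.trans h3, h3⟩⟩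
  obtain ⟨N, hN⟩ : ∃ N : ℝ, ∀ p ∈ Tr, |m₁ p.1 p.2| + |n₁ p.1 p.2| + |m₂ p.1 p.2| + |n₂ p.1 p.2| ≤ N := by
    obtain ⟨N, hN⟩ := hTrc.bddAbove_image
      (f := fun p : ℝ × ℝ => |m₁ p.1 p.2| + |n₁ p.1 p.2| + |m₂ p.1 p.2| + |n₂ p.1 p.2|)
      (by fun_prop)
    exact ⟨N, fun p hp => hN ⟨p, hp, rfl⟩⟩
  have key : ∀ ε > 0, ∀ p ∈ Tr, 0 < Y p.1 p.2 + ε * exp ((N + 1) * (p.2 - p.1)) ∧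
      0 < Z p.1 p.2 + ε * exp ((N + 1) * (p.2 - p.1)) := by
    intro ε hε
    by_contra! hcon
    set FY : ℝ × ℝ → ℝ := fun p => Y p.1 p.2 + ε * exp ((N + 1) * (p.2 - p.1)) with hFY
    set FZ : ℝ × ℝ → ℝ := fun p => Z p.1 p.2 + ε * exp ((N + 1) * (p.2 - p.1)) with hFZ
    have cFY : Continuous FY := by fun_prop
    have cFZ : Continuous FZ := by fun_prop
    set Bad : Set (ℝ × ℝ) := Tr ∩ {p | FY p ≤ 0 ∨ FZ p ≤ 0} with hBad
    have hBc : IsCompact Bad := hTrc.inter_right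
      ((isClosed_le cFY continuous_const).union (isClosed_le cFZ continuous_const))
    have hBne : Bad.Nonempty := by
      obtain ⟨p, hp, h⟩ := hcon
      refine ⟨p, hp, ?_⟩
      by_cases h1 : 0 < FY p
      · exact Or.inr (h h1)
      · exact Or.inl (not_lt.1 h1)
    obtain ⟨⟨a, b⟩, ⟨hpT, hpB⟩, hmin⟩ := hBc.exists_isMinOn hBne
      (f := fun p : ℝ × ℝ => p.2 - p.1) (by fun_prop)
    have hpT' := hpT
    obtain ⟨h1, h2, h3⟩ := hpT
    simp only at h1 h2 h3
    have hlt : a < b := by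
      rcases lt_or_eq_of_le h2 with h | h
      · exact h
      · exfalso
        subst h
        simp only [hFY, hFZ, mem_ofPred_eq, sub_self, mul_zero, exp_zero, mul_one] at hpB
        rcases hpB with h | h
        · linarith [Y0 a]
        · linarith [Z0 a]
    have good : ∀ p ∈ Tr, p.2 - p.1 < b - a → 0 < FY p ∧ 0 < FZ p := by
      intro p hp hlt
      by_contra hc
      have : p ∈ Bad := ⟨hp, by
        by_cases h : 0 < FY p
        · right; by_contra h'; exact hc ⟨h, not_le.1 h'⟩
        · left; exact not_lt.1 h⟩
      have := hmin this
      simp only [mem_ofPred_eq] at this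
      linarith
    have evL : ∀ᶠ y in 𝓝[<] b, 0 < FY (a, y) ∧ 0 < FZ (a, y) := by
      filter_upwards [Ioo_mem_nhdsLT hlt] with y hy
      exact good (a, y) ⟨h1, hy.1.le, hy.2.le.trans h3⟩ (by simp; exact hy.2)
    have evR : ∀ᶠ y in 𝓝[>] a, 0 < FY (y, b) ∧ 0 < FZ (y, b) := by
      filter_upwards [Ioo_mem_nhdsGT hlt] with y hy
      exact good (y, b) ⟨h1.trans hy.1.le, hy.2.le, h3⟩ (by simp; exact hy.1)
    have gY : 0 ≤ FY (a, b) := by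
      have : Tendsto (fun y => FY (a, y)) (𝓝[<] b) (𝓝 (FY (a, b))) :=
        ((cFY.comp (by fun_prop : Continuous fun y : ℝ => (a, y))).tendsto b).mono_left
          nhdsWithin_le_nhds
      exact ge_of_tendsto this (evL.mono fun y hy => hy.1.le)
    have gZ : 0 ≤ FZ (a, b) := by
      have : Tendsto (fun y => FZ (a, y)) (𝓝[<] b) (𝓝 (FZ (a, b))) :=
        ((cFZ.comp (by fun_prop : Continuous fun y : ℝ => (a, y))).tendsto b).mono_left
          nhdsWithin_le_nhds
      exact ge_of_tendsto this (evL.mono fun y hy => hy.2.le)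
    have hE : 0 < ε * exp ((N + 1) * (b - a)) := by positivity
    have hNp := hN (a, b) hpT'
    simp only at hNp
    have p1 := pm₁ a b h2
    have p2 := pm₂ a b h2
    have e1 := le_abs_self (m₁ a b)
    have e2 := le_abs_self (m₂ a b)
    have e3 := neg_abs_le (n₁ a b)
    have e4 := neg_abs_le (n₂ a b)
    have e5 := abs_nonneg (n₁ a b)
    have e6 := abs_nonneg (n₂ a b)
    simp only [hFY, hFZ] at gY gZ
    rcases hpB with h | h
    · have hd : HasDerivAt (fun y => FY (a, y))
          ((m₁ a b * Z a b - n₁ a b * Y a b) +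
            ε * (exp ((N + 1) * (b - a)) * ((N + 1) * 1))) b := by
        refine (dY a b h2).add (HasDerivAt.const_mul ε (HasDerivAt.exp ?_))
        exact ((hasDerivAt_id b).sub_const a).const_mul (N + 1)
      have := psx_left hd (evL.mono fun y hy => h.trans hy.1.le)
      simp only [hFY] at h
      have hYe : Y a b = - (ε * exp ((N + 1) * (b - a))) := by linarith
      have hm : -(m₁ a b * (ε * exp ((N + 1) * (b - a)))) ≤ m₁ a b * Z a b := by nlinarith
      rw [hYe] at this
      have h5 : 0 < (-m₁ a b + n₁ a b + (N + 1)) * (ε * exp ((N + 1) * (b - a))) := by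
        apply mul_pos _ hE
        linarith
      nlinarith
    · have hd : HasDerivAt (fun y => FZ (y, b))
          (-(m₂ a b * Y a b - n₂ a b * Z a b) +
            ε * (exp ((N + 1) * (b - a)) * ((N + 1) * (-1)))) a := by
        refine (dZ a b h2).add (HasDerivAt.const_mul ε (HasDerivAt.exp ?_))
        exact ((hasDerivAt_id a).const_sub b).const_mul (N + 1)
      have := psx_right hd (evR.mono fun y hy => h.trans hy.2.le)
      simp only [hFZ] at h
      have hYe : Z a b = - (ε * exp ((N + 1) * (b - a))) := by linarith
      have hm : -(m₂ a b * (ε * exp ((N + 1) * (b - a)))) ≤ m₂ a b * Y a b := by nlinarith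
      rw [hYe] at this
      have h5 : 0 < (-m₂ a b + n₂ a b + (N + 1)) * (ε * exp ((N + 1) * (b - a))) := by
        apply mul_pos _ hE
        linarith
      nlinarith
  have hlim : Tendsto (fun ε : ℝ => ε * exp ((N + 1) * (b₀ - a₀))) (𝓝[>] 0) (𝓝 0) := by
    have : Tendsto (fun ε : ℝ => ε * exp ((N + 1) * (b₀ - a₀))) (𝓝 0)
        (𝓝 (0 * exp ((N + 1) * (b₀ - a₀)))) := tendsto_id.mul_const _
    rw [zero_mul] at this
    exact this.mono_left nhdsWithin_le_nhds
  have hmem : (a₀, b₀) ∈ Tr := ⟨le_refl _, hab₀, le_refl _⟩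
  constructor
  · have := hlim.const_add (Y a₀ b₀)
    rw [add_zero] at this
    refine ge_of_tendsto this ?_
    filter_upwards [self_mem_nhdsWithin] with ε hε
    exact (key ε hε _ hmem).1.le
  · have := hlim.const_add (Z a₀ b₀)
    rw [add_zero] at this
    refine ge_of_tendsto this ?_
    filter_upwards [self_mem_nhdsWithin] with ε hε
    exact (key ε hε _ hmem).2.le

lemma psx_cosh_int1 (K a b : ℝ) (hK : 0 < K) :
    ∫ y in a..b, cosh (K * (y - a)) = sinh (K * (b - a)) / K := by
  rw [intervalIntegral.integral_eq_sub_of_hasDerivAt (f := fun y => sinh (K * (y - a)) / K)]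
  · simp
  · intro y _
    have := ((((hasDerivAt_id y).sub_const a).const_mul K).sinh).div_const K
    refine this.congr_deriv ?_
    simp only [id_eq]
    field_simp
  · exact Continuous.intervalIntegrable (by fun_prop) _ _

lemma psx_cosh_int2 (K a b : ℝ) (hK : 0 < K) :
    ∫ y in a..b, cosh (K * (b - y)) = sinh (K * (b - a)) / K := by
  rw [intervalIntegral.integral_eq_sub_of_hasDerivAt (f := fun y => -(sinh (K * (b - y)) / K))]
  · simp
  · intro y _
    have := (((((hasDerivAt_id y).const_sub b).const_mul K).sinh).div_const K).neg
    refine this.congr_deriv ?_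
    simp only [id_eq]
    field_simp
  · exact Continuous.intervalIntegrable (by fun_prop) _ _

lemma psx_abs_sinh_le (x : ℝ) : |sinh x| ≤ cosh x := by
  rw [abs_le]
  have h1 := exp_pos x
  have h2 := exp_pos (-x)
  rw [sinh_eq, cosh_eq]
  constructor <;> linarith

/-- parametric integral continuity -/
lemma psx_cont_int1 (f : ℝ → ℝ → ℝ → ℝ)
    (hf : Continuous fun p : (ℝ × ℝ) × ℝ => f p.1.1 p.1.2 p.2) :
    Continuous fun p : ℝ × ℝ => ∫ y in p.1..p.2, f p.1 p.2 y := by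
  have h : (fun p : ℝ × ℝ => ∫ y in p.1..p.2, f p.1 p.2 y) =
      fun p : ℝ × ℝ => (∫ y in (0:ℝ)..p.2, f p.1 p.2 y) - ∫ y in (0:ℝ)..p.1, f p.1 p.2 y := by
    funext p
    have hc : Continuous fun y => f p.1 p.2 y :=
      hf.comp (by fun_prop : Continuous fun y : ℝ => ((p.1, p.2), y))
    rw [intervalIntegral.integral_interval_sub_left (hc.intervalIntegrable _ _)
      (hc.intervalIntegrable _ _)]
  rw [h]
  refine Continuous.sub ?_ ?_
  · exact intervalIntegral.continuous_parametric_intervalIntegral_of_continuous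
      (f := fun p : ℝ × ℝ => fun y => f p.1 p.2 y) hf continuous_snd
  · exact intervalIntegral.continuous_parametric_intervalIntegral_of_continuous
      (f := fun p : ℝ × ℝ => fun y => f p.1 p.2 y) hf continuous_fst

lemma psx_goursat (p q : ℝ → ℝ → ℝ) (B : ℝ)
    (hp : Continuous fun z : ℝ × ℝ => p z.1 z.2) (hq : Continuous fun z : ℝ × ℝ => q z.1 z.2)
    (hpB : ∀ a b, |p a b| ≤ B) (hqB : ∀ a b, |q a b| ≤ B) :
    ∃ V W : ℝ → ℝ → ℝ, Continuous (fun z : ℝ × ℝ => V z.1 z.2) ∧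
      Continuous (fun z : ℝ × ℝ => W z.1 z.2) ∧
      (∀ a b, HasDerivAt (fun y => V a y) (p a b * W a b - q a b * V a b) b) ∧
      (∀ a b, HasDerivAt (fun y => W y b) (p a b * W a b - q a b * V a b) a) ∧
      (∀ a, V a a = 1) ∧ (∀ a, W a a = 1) := by
  have hB : 0 ≤ B := (abs_nonneg _).trans (hpB 0 0)
  set K : ℝ := 4 * B + 1 with hKdef
  have hK : 0 < K := by positivity
  set I1 : (ℝ × ℝ → ℝ) → ℝ → ℝ → ℝ := fun h a b => ∫ y in a..b, cosh (K * (y - a)) * h (a, y)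
    with hI1
  set I2 : (ℝ × ℝ → ℝ) → ℝ → ℝ → ℝ := fun h a b => ∫ y in a..b, cosh (K * (b - y)) * h (y, b)
    with hI2
  have cI1 : ∀ h : ℝ × ℝ → ℝ, Continuous h → Continuous fun z : ℝ × ℝ => I1 h z.1 z.2 := by
    intro h hh
    exact psx_cont_int1 (fun a b y => cosh (K * (y - a)) * h (a, y)) (by fun_prop)
  have cI2 : ∀ h : ℝ × ℝ → ℝ, Continuous h → Continuous fun z : ℝ × ℝ => I2 h z.1 z.2 := by
    intro h hh
    exact psx_cont_int1 (fun a b y => cosh (K * (b - y)) * h (y, b)) (by fun_prop)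
  have bI1 : ∀ (h : ℝ × ℝ → ℝ) (c : ℝ), (∀ z, |h z| ≤ c) → ∀ a b,
      |I1 h a b| ≤ c / K * cosh (K * (b - a)) := by
    intro h c hc a b
    have hc0 : 0 ≤ c := (abs_nonneg _).trans (hc 0)
    have := intervalIntegral.norm_integral_le_abs_of_norm_le (μ := volume) (a := a) (b := b)
      (f := fun y => cosh (K * (y - a)) * h (a, y)) (g := fun y => cosh (K * (y - a)) * c)
      (ae_of_all _ fun y => by
        rw [Real.norm_eq_abs, abs_mul, abs_of_pos (cosh_pos _)]
        exact mul_le_mul_of_nonneg_left (hc _) (cosh_pos _).le)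
      (Continuous.intervalIntegrable (by fun_prop) _ _)
    rw [intervalIntegral.integral_mul_const, psx_cosh_int1 K a b hK, abs_mul, abs_div,
      abs_of_pos hK, abs_of_nonneg hc0] at this
    refine this.trans ?_
    have h2 := psx_abs_sinh_le (K * (b - a))
    calc |sinh (K * (b - a))| / K * c ≤ cosh (K * (b - a)) / K * c := by gcongr
      _ = _ := by ring
  have bI2 : ∀ (h : ℝ × ℝ → ℝ) (c : ℝ), (∀ z, |h z| ≤ c) → ∀ a b,
      |I2 h a b| ≤ c / K * cosh (K * (b - a)) := by
    intro h c hc a b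
    have hc0 : 0 ≤ c := (abs_nonneg _).trans (hc 0)
    have := intervalIntegral.norm_integral_le_abs_of_norm_le (μ := volume) (a := a) (b := b)
      (f := fun y => cosh (K * (b - y)) * h (y, b)) (g := fun y => cosh (K * (b - y)) * c)
      (ae_of_all _ fun y => by
        rw [Real.norm_eq_abs, abs_mul, abs_of_pos (cosh_pos _)]
        exact mul_le_mul_of_nonneg_left (hc _) (cosh_pos _).le)
      (Continuous.intervalIntegrable (by fun_prop) _ _)
    rw [intervalIntegral.integral_mul_const, psx_cosh_int2 K a b hK, abs_mul, abs_div,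
      abs_of_pos hK, abs_of_nonneg hc0] at this
    refine this.trans ?_
    have h2 := psx_abs_sinh_le (K * (b - a))
    calc |sinh (K * (b - a))| / K * c ≤ cosh (K * (b - a)) / K * c := by gcongr
      _ = _ := by ring
  set R : (ℝ × ℝ → ℝ) → ℝ × ℝ → ℝ := fun h z =>
    (p z.1 z.2 * (1 - I2 h z.1 z.2) - q z.1 z.2 * (1 + I1 h z.1 z.2)) / cosh (K * (z.2 - z.1))
    with hR
  have cR : ∀ h : ℝ × ℝ → ℝ, Continuous h → Continuous (R h) := by
    intro h hh
    have h1 := cI1 h hh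
    have h2 := cI2 h hh
    refine Continuous.div (by fun_prop) (by fun_prop) (fun z => (cosh_pos _).ne')
  have bR : ∀ (h : ℝ × ℝ → ℝ) (c : ℝ), (∀ z, |h z| ≤ c) → ∀ z, |R h z| ≤ 2 * B * (1 + c / K) := by
    intro h c hc z
    have hc0 : 0 ≤ c := (abs_nonneg _).trans (hc 0)
    have hch := cosh_pos (K * (z.2 - z.1))
    have hch1 := one_le_cosh (K * (z.2 - z.1))
    rw [hR]
    simp only
    rw [abs_div, abs_of_pos hch, div_le_iff₀ hch]
    have h1 := bI1 h c hc z.1 z.2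
    have h2 := bI2 h c hc z.1 z.2
    have a1 : |p z.1 z.2 * (1 - I2 h z.1 z.2)| ≤ B * (1 + c / K * cosh (K * (z.2 - z.1))) := by
      rw [abs_mul]
      refine mul_le_mul (hpB _ _) ?_ (abs_nonneg _) hB
      refine (abs_sub _ _).trans ?_
      rw [abs_one]; linarith
    have a2 : |q z.1 z.2 * (1 + I1 h z.1 z.2)| ≤ B * (1 + c / K * cosh (K * (z.2 - z.1))) := by
      rw [abs_mul]
      refine mul_le_mul (hqB _ _) ?_ (abs_nonneg _) hB
      refine (abs_add_le _ _).trans ?_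
      rw [abs_one]; linarith
    refine (abs_sub _ _).trans ((add_le_add a1 a2).trans ?_)
    have : B * 1 ≤ B * cosh (K * (z.2 - z.1)) := by gcongr
    linarith
  have dI1 : ∀ (h k : ℝ × ℝ → ℝ), Continuous h → Continuous k → ∀ a b,
      I1 h a b - I1 k a b = I1 (fun z => h z - k z) a b := by
    intro h k hh hk a b
    simp only [hI1]
    rw [← intervalIntegral.integral_sub (Continuous.intervalIntegrable (by fun_prop) _ _)
      (Continuous.intervalIntegrable (by fun_prop) _ _)]
    congr 1; funext y; ring
  have dI2 : ∀ (h k : ℝ × ℝ → ℝ), Continuous h → Continuous k → ∀ a b,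
      I2 h a b - I2 k a b = I2 (fun z => h z - k z) a b := by
    intro h k hh hk a b
    simp only [hI2]
    rw [← intervalIntegral.integral_sub (Continuous.intervalIntegrable (by fun_prop) _ _)
      (Continuous.intervalIntegrable (by fun_prop) _ _)]
    congr 1; funext y; ring
  set op : BoundedContinuousFunction (ℝ × ℝ) ℝ → BoundedContinuousFunction (ℝ × ℝ) ℝ := fun h =>
    BoundedContinuousFunction.ofNormedAddCommGroup (R h) (cR h h.continuous)
      (2 * B * (1 + ‖h‖ / K)) (bR h ‖h‖ h.norm_coe_le_norm) with hop
  have hopa : ∀ h z, op h z = R h z := fun h z => rfl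
  have hcontr : ContractingWith (1 / 2) op := by
    refine ⟨by rw [← NNReal.coe_lt_coe]; norm_num, LipschitzWith.of_dist_le_mul fun h k => ?_⟩
    rw [BoundedContinuousFunction.dist_le (by positivity)]
    intro z
    rw [hopa, hopa, Real.dist_eq]
    have hch := cosh_pos (K * (z.2 - z.1))
    have hbd : ∀ w, |h w - k w| ≤ dist h k := fun w => by
      rw [← Real.dist_eq]; exact BoundedContinuousFunction.dist_coe_le_dist w
    have e1 := bI1 _ _ hbd z.1 z.2
    have e2 := bI2 _ _ hbd z.1 z.2
    have : R h z - R k z = -(p z.1 z.2 * I2 (fun w => h w - k w) z.1 z.2 +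
        q z.1 z.2 * I1 (fun w => h w - k w) z.1 z.2) / cosh (K * (z.2 - z.1)) := by
      rw [← dI1 h k h.continuous k.continuous, ← dI2 h k h.continuous k.continuous]
      simp only [hR]
      ring
    rw [this, abs_div, abs_neg, abs_of_pos hch, div_le_iff₀ hch]
    have a1 := mul_le_mul (hpB z.1 z.2) e2 (abs_nonneg _) hB
    have a2 := mul_le_mul (hqB z.1 z.2) e1 (abs_nonneg _) hB
    rw [← abs_mul] at a1 a2
    refine (abs_add_le _ _).trans ((add_le_add a1 a2).trans ?_)
    have hd : 0 ≤ dist h k := dist_nonneg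
    have : 2 * B / K ≤ 1 / 2 := by
      rw [div_le_iff₀ hK, hKdef]; linarith
    calc _ = (2 * B / K) * dist h k * cosh (K * (z.2 - z.1)) := by ring
      _ ≤ (1 / 2) * dist h k * cosh (K * (z.2 - z.1)) := by gcongr
      _ = _ := by norm_num
  set h := ContractingWith.fixedPoint op hcontr with hh
  have hfix : op h = h := hcontr.fixedPoint_isFixedPt
  have hc : Continuous h := h.continuous
  have hfix' : ∀ a b, cosh (K * (b - a)) * h (a, b) =
      p a b * (1 - I2 h a b) - q a b * (1 + I1 h a b) := by
    intro a b
    have h1 : op h (a, b) = h (a, b) := by rw [hfix]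
    rw [hopa] at h1
    rw [← h1]
    simp only [hR]
    field_simp [(cosh_pos (K * (b - a))).ne']
  refine ⟨fun a b => 1 + I1 h a b, fun a b => 1 - I2 h a b, ?_, ?_, ?_, ?_, ?_, ?_⟩
  · exact (cI1 h hc).const_add 1
  · exact continuous_const.sub (cI2 h hc)
  · intro a b
    rw [← hfix' a b]
    refine HasDerivAt.const_add 1 ?_
    have hcc : Continuous fun y => cosh (K * (y - a)) * h (a, y) := by fun_prop
    exact intervalIntegral.integral_hasDerivAt_right (hcc.intervalIntegrable _ _)
      (hcc.stronglyMeasurableAtFilter _ _) hcc.continuousAt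
  · intro a b
    rw [← hfix' a b]
    have hcc : Continuous fun y => cosh (K * (b - y)) * h (y, b) := by fun_prop
    have := intervalIntegral.integral_hasDerivAt_left (hcc.intervalIntegrable a b)
      (hcc.stronglyMeasurableAtFilter _ _) hcc.continuousAt
    have := this.const_sub 1
    rw [neg_neg] at this
    exact this
  · intro a; simp [hI1]
  · intro a; simp [hI2]

/-- the linear form `(x, y) ↦ a x + b y` -/
noncomputable def psxLf (a b : ℝ) : ℝ × ℝ →L[ℝ] ℝ :=
  a • ContinuousLinearMap.fst ℝ ℝ ℝ + b • ContinuousLinearMap.snd ℝ ℝ ℝ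

@[simp] lemma psxLf_apply (a b : ℝ) (z : ℝ × ℝ) : psxLf a b z = a * z.1 + b * z.2 := by
  simp [psxLf]

lemma psx_potential (V W g : ℝ → ℝ → ℝ)
    (hV : Continuous fun z : ℝ × ℝ => V z.1 z.2) (hW : Continuous fun z : ℝ × ℝ => W z.1 z.2)
    (hg : Continuous fun z : ℝ × ℝ => g z.1 z.2)
    (dV : ∀ a b, HasDerivAt (fun y => V a y) (g a b) b)
    (dW : ∀ a b, HasDerivAt (fun y => W y b) (g a b) a) :
    ∃ F : ℝ × ℝ → ℝ, F (0, 0) = 0 ∧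
      ∀ z : ℝ × ℝ, HasFDerivAt F (psxLf (V z.1 z.2) (W z.1 z.2)) z := by
  set F : ℝ → ℝ → ℝ := fun a b => (∫ y in (0:ℝ)..b, W a y) + ∫ y in (0:ℝ)..a, V y 0 with hF
  have cW : ∀ a, Continuous fun y => W a y := fun a =>
    hW.comp (by fun_prop : Continuous fun y : ℝ => (a, y))
  have cg : ∀ a, Continuous fun y => g a y := fun a =>
    hg.comp (by fun_prop : Continuous fun y : ℝ => (a, y))
  have cV0 : Continuous fun y => V y 0 := hV.comp (by fun_prop : Continuous fun y : ℝ => (y, (0:ℝ)))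
  have d2 : ∀ a b, HasDerivAt (fun y => F a y) (W a b) b := by
    intro a b
    refine HasDerivAt.add_const _ ?_
    exact intervalIntegral.integral_hasDerivAt_right ((cW a).intervalIntegrable _ _)
      ((cW a).stronglyMeasurableAtFilter _ _) (cW a).continuousAt
  have d1 : ∀ a b, HasDerivAt (fun y => F y b) (V a b) a := by
    intro a b
    have e1 : HasDerivAt (fun x => ∫ y in (0:ℝ)..x, V y 0) (V a 0) a :=
      intervalIntegral.integral_hasDerivAt_right (cV0.intervalIntegrable _ _)
        (cV0.stronglyMeasurableAtFilter _ _) cV0.continuousAt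
    obtain ⟨N, hN⟩ := ((isCompact_Icc (a := a - 1) (b := a + 1)).prod
      (isCompact_uIcc (a := (0:ℝ)) (b := b))).bddAbove_image
      (f := fun z : ℝ × ℝ => |g z.1 z.2|) (by fun_prop)
    have e2 : HasDerivAt (fun x => ∫ y in (0:ℝ)..b, W x y) (∫ y in (0:ℝ)..b, g a y) a := by
      refine (intervalIntegral.hasDerivAt_integral_of_dominated_loc_of_deriv_le
        (μ := volume) (F := fun x y => W x y) (F' := fun x y => g x y) (bound := fun _ => N)
        (Icc_mem_nhds (by linarith : a - 1 < a) (by linarith : a < a + 1)) ?_ ?_ ?_ ?_ ?_ ?_).2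
      · exact Eventually.of_forall fun x => (cW x).aestronglyMeasurable
      · exact (cW a).intervalIntegrable _ _
      · exact (cg a).aestronglyMeasurable
      · refine ae_of_all _ fun y hy x hx => ?_
        exact hN ⟨(x, y), ⟨hx, uIoc_subset_uIcc hy⟩, rfl⟩
      · exact intervalIntegrable_const
      · exact ae_of_all _ fun y hy x hx => dW x y
    have e3 : ∫ y in (0:ℝ)..b, g a y = V a b - V a 0 :=
      intervalIntegral.integral_eq_sub_of_hasDerivAt (fun y _ => dV a y)
        ((cg a).intervalIntegrable _ _)
    rw [e3] at e2
    have := e2.add e1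
    rw [sub_add_cancel] at this
    exact this
  refine ⟨fun z => F z.1 z.2, by simp [hF], fun z => ?_⟩
  have := (hasStrictFDerivAt_uncurry_coprod (𝕜 := ℝ) (u := z) (f := F)
    (f₁ := fun a b => ContinuousLinearMap.toSpanSingleton ℝ (V a b))
    (f₂ := fun a b => ContinuousLinearMap.toSpanSingleton ℝ (W a b))
    (Eventually.of_forall fun v => (d1 v.1 v.2).hasFDerivAt)
    (Eventually.of_forall fun v => (d2 v.1 v.2).hasFDerivAt)
    ?_ ?_).hasFDerivAt
  · refine this.congr_fderiv ?_
    ext <;> simp [psxLf, Function.HasUncurry.uncurry]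
  · exact ((ContinuousLinearMap.toSpanSingletonCLE (𝕜 := ℝ) (E := ℝ)).continuous.comp hV).continuousAt
  · exact ((ContinuousLinearMap.toSpanSingletonCLE (𝕜 := ℝ) (E := ℝ)).continuous.comp hW).continuousAt

lemma psx_glue (F G a b a' b' : ℝ × ℝ → ℝ)
    (hF : ∀ z, HasFDerivAt F (psxLf (a z) (b z)) z)
    (hG : ∀ z, HasFDerivAt G (psxLf (a' z) (b' z)) z)
    (hd : ∀ z : ℝ × ℝ, z.1 = z.2 → F z = G z ∧ a z = a' z ∧ b z = b' z) (z : ℝ × ℝ) :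
    HasFDerivAt (fun z : ℝ × ℝ => if z.1 ≤ z.2 then F z else G z)
      (psxLf (if z.1 ≤ z.2 then a z else a' z) (if z.1 ≤ z.2 then b z else b' z)) z := by
  rcases lt_trichotomy z.1 z.2 with h | h | h
  · simp only [h.le, if_true]
    refine (hF z).congr_of_eventuallyEq ?_
    filter_upwards [(isOpen_lt continuous_fst continuous_snd).mem_nhds h] with w hw
    have hw' : w.1 < w.2 := hw
    simp [hw'.le]
  · simp only [h.le, if_true]
    obtain ⟨e1, e2, e3⟩ := hd z h
    have h1 : HasFDerivWithinAt (fun z : ℝ × ℝ => if z.1 ≤ z.2 then F z else G z)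
        (psxLf (a z) (b z)) {w | w.1 ≤ w.2} z := by
      refine (hF z).hasFDerivWithinAt.congr (fun w hw => ?_) ?_
      · have hw' : w.1 ≤ w.2 := hw
        simp [hw']
      · simp [h.le]
    have h2 : HasFDerivWithinAt (fun z : ℝ × ℝ => if z.1 ≤ z.2 then F z else G z)
        (psxLf (a z) (b z)) {w | w.2 ≤ w.1} z := by
      rw [e2, e3]
      refine (hG z).hasFDerivWithinAt.congr (fun w hw => ?_) ?_
      · have hw' : w.2 ≤ w.1 := hw
        by_cases h' : w.1 ≤ w.2
        · simp [h', (hd w (le_antisymm h' hw')).1]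
        · simp [h']
      · simp [h.le, e1]
    have h3 := h1.union h2
    have h4 : ({w : ℝ × ℝ | w.1 ≤ w.2} ∪ {w | w.2 ≤ w.1}) = univ := by
      ext w; simp [le_total]
    rw [h4, hasFDerivWithinAt_univ] at h3
    exact h3
  · simp only [not_le.2 h, if_false]
    refine (hG z).congr_of_eventuallyEq ?_
    filter_upwards [(isOpen_lt continuous_snd continuous_fst).mem_nhds h] with w hw
    have hw' : w.2 < w.1 := hw
    simp [not_le.2 hw']

lemma psx_lf_cont (a b : ℝ × ℝ → ℝ) (ha : Continuous a) (hb : Continuous b) :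
    Continuous fun z => psxLf (a z) (b z) := by
  unfold psxLf; fun_prop

lemma psx_partial1 {F : ℝ × ℝ → ℝ} {a b x y : ℝ} (h : HasFDerivAt F (psxLf a b) (x, y)) :
    HasDerivAt (fun x' => F (x', y)) a x := by
  have h1 : HasDerivAt (fun x' : ℝ => (x', y)) ((1 : ℝ), (0 : ℝ)) x :=
    (hasDerivAt_id x).prodMk (hasDerivAt_const x y)
  exact (h.comp_hasDerivAt x h1).congr_deriv (by simp)

lemma psx_partial2 {F : ℝ × ℝ → ℝ} {a b x y : ℝ} (h : HasFDerivAt F (psxLf a b) (x, y)) :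
    HasDerivAt (fun y' => F (x, y')) b y := by
  have h1 : HasDerivAt (fun y' : ℝ => (x, y')) ((0 : ℝ), (1 : ℝ)) y :=
    (hasDerivAt_const y x).prodMk (hasDerivAt_id y)
  exact (h.comp_hasDerivAt y h1).congr_deriv (by simp)

/-- growth from derivative bound -/
lemma psx_grow {f f' : ℝ → ℝ} {δ : ℝ} (hf : ∀ x, HasDerivAt f (f' x) x) (h : ∀ x, δ ≤ f' x)
    {x y : ℝ} (hxy : x ≤ y) : δ * (y - x) ≤ f y - f x := by
  have : Monotone fun x => f x - δ * x := by
    refine monotone_of_deriv_nonneg (fun x => ?_) (fun x => ?_)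
    · exact ((hf x).sub ((hasDerivAt_id x).const_mul δ)).differentiableAt
    · have := ((hf x).sub ((hasDerivAt_id x).const_mul δ)).deriv
      have h2 := h x
      simp only [mul_one] at this
      have h3 : deriv (fun x => f x - δ * x) x = f' x - δ := this
      rw [h3]; linarith
  have := this hxy
  simp only at this
  linarith

/-- the linear equivalence with matrix `[[a, b], [-p, q]]` -/
noncomputable def psxEquiv (a b p q : ℝ) (h : a * q + b * p ≠ 0) : (ℝ × ℝ) ≃L[ℝ] (ℝ × ℝ) :=
  ContinuousLinearEquiv.equivOfInverse ((psxLf a b).prod (psxLf (-p) q))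
    ((psxLf (q / (a * q + b * p)) (-b / (a * q + b * p))).prod
      (psxLf (p / (a * q + b * p)) (a / (a * q + b * p))))
    (by
      rintro ⟨x, y⟩
      simp only [ContinuousLinearMap.prod_apply, psxLf_apply]
      generalize hD : a * q + b * p = D at h ⊢
      refine Prod.ext ?_ ?_
      · simp only; field_simp; rw [← hD]; ring
      · simp only; field_simp; rw [← hD]; ring)
    (by
      rintro ⟨x, y⟩
      simp only [ContinuousLinearMap.prod_apply, psxLf_apply]
      generalize hD : a * q + b * p = D at h ⊢
      refine Prod.ext ?_ ?_
      · simp only; field_simp; rw [← hD]; ring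
      · simp only; field_simp; rw [← hD]; ring)

lemma psx_global_inverse (X T A₁ A₂ P Q : ℝ × ℝ → ℝ) (δ : ℝ) (hδ : 0 < δ)
    (hX : ∀ z, HasFDerivAt X (psxLf (A₁ z) (A₂ z)) z)
    (hT : ∀ z, HasFDerivAt T (psxLf (-P z) (Q z)) z)
    (cA₁ : Continuous A₁) (cA₂ : Continuous A₂) (cP : Continuous P) (cQ : Continuous Q)
    (hA₁ : ∀ z, δ ≤ A₁ z) (hA₂ : ∀ z, δ ≤ A₂ z) (hP : ∀ z, δ ≤ P z) (hQ : ∀ z, δ ≤ Q z) :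
    ∃ Ψ : ℝ × ℝ → ℝ × ℝ, ContDiff ℝ 1 Ψ ∧ (∀ y, X (Ψ y) = y.1 ∧ T (Ψ y) = y.2) ∧
      ∀ y, HasFDerivAt (fun y => (Ψ y).1)
          (psxLf (Q (Ψ y) / (A₁ (Ψ y) * Q (Ψ y) + A₂ (Ψ y) * P (Ψ y)))
            (-A₂ (Ψ y) / (A₁ (Ψ y) * Q (Ψ y) + A₂ (Ψ y) * P (Ψ y)))) y ∧
        HasFDerivAt (fun y => (Ψ y).2)
          (psxLf (P (Ψ y) / (A₁ (Ψ y) * Q (Ψ y) + A₂ (Ψ y) * P (Ψ y)))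
            (A₁ (Ψ y) / (A₁ (Ψ y) * Q (Ψ y) + A₂ (Ψ y) * P (Ψ y)))) y := by
  set Φ : ℝ × ℝ → ℝ × ℝ := fun z => (X z, T z) with hΦ
  have pA₁ := fun z => hδ.trans_le (hA₁ z)
  have pA₂ := fun z => hδ.trans_le (hA₂ z)
  have pP := fun z => hδ.trans_le (hP z)
  have pQ := fun z => hδ.trans_le (hQ z)
  have hJ : ∀ z, A₁ z * Q z + A₂ z * P z ≠ 0 := fun z =>
    (add_pos (mul_pos (pA₁ z) (pQ z)) (mul_pos (pA₂ z) (pP z))).ne'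
  set e : ∀ z, (ℝ × ℝ) ≃L[ℝ] (ℝ × ℝ) := fun z => psxEquiv (A₁ z) (A₂ z) (P z) (Q z) (hJ z) with he
  have dΦ : ∀ z, HasFDerivAt Φ ((e z : (ℝ × ℝ) ≃L[ℝ] (ℝ × ℝ)) : (ℝ × ℝ) →L[ℝ] (ℝ × ℝ)) z :=
    fun z => (hX z).prodMk (hT z)
  have cΦ : ContDiff ℝ 1 Φ := by
    rw [contDiff_one_iff_hasFDerivAt]
    refine ⟨fun z => (psxLf (A₁ z) (A₂ z)).prod (psxLf (-P z) (Q z)), ?_, fun z => dΦ z⟩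
    have h1 := psx_lf_cont A₁ A₂ cA₁ cA₂
    have h2 := psx_lf_cont (fun z => -P z) Q cP.neg cQ
    exact (ContinuousLinearMap.prodₗᵢ (𝕜 := ℝ) (E := ℝ × ℝ) (F := ℝ) (G := ℝ) ℝ).continuous.comp (h1.prodMk h2)
  have sΦ : ∀ z, HasStrictFDerivAt Φ ((e z : (ℝ × ℝ) ≃L[ℝ] (ℝ × ℝ)) : (ℝ × ℝ) →L[ℝ] (ℝ × ℝ)) z :=
    fun z => cΦ.contDiffAt.hasStrictFDerivAt' (dΦ z) (by simp)
  have hopen : IsOpenMap Φ := isOpenMap_of_hasStrictFDerivAt_equiv sΦ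
  have gX1 : ∀ a a' b, a ≤ a' → δ * (a' - a) ≤ X (a', b) - X (a, b) := fun a a' b h =>
    psx_grow (f := fun a => X (a, b)) (fun x => psx_partial1 (hX (x, b))) (fun x => hA₁ _) h
  have gX2 : ∀ a b b', b ≤ b' → δ * (b' - b) ≤ X (a, b') - X (a, b) := fun a b b' h =>
    psx_grow (f := fun b => X (a, b)) (fun x => psx_partial2 (hX (a, x))) (fun x => hA₂ _) h
  have gT1 : ∀ a a' b, a ≤ a' → δ * (a' - a) ≤ -T (a', b) - -T (a, b) := fun a a' b h =>
    psx_grow (f := fun a => -T (a, b)) (f' := fun a => P (a, b))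
      (fun x => (psx_partial1 (hT (x, b))).neg.congr_deriv (by simp)) (fun x => hP _) h
  have gT2 : ∀ a b b', b ≤ b' → δ * (b' - b) ≤ T (a, b') - T (a, b) := fun a b b' h =>
    psx_grow (f := fun b => T (a, b)) (fun x => psx_partial2 (hT (a, x))) (fun x => hQ _) h
  have hanti : AntilipschitzWith (Real.toNNReal δ⁻¹) Φ := by
    refine AntilipschitzWith.of_le_mul_dist fun z w => ?_
    rw [Real.coe_toNNReal _ (by positivity), inv_mul_eq_div, le_div_iff₀ hδ]
    obtain ⟨a, b⟩ := z
    obtain ⟨a', b'⟩ := w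
    simp only [hΦ, Prod.dist_eq, Real.dist_eq]
    have m0 : ∀ p q r : ℝ, p * δ ≤ r → q * δ ≤ r → max p q * δ ≤ r := by
      intro p q r h1 h2
      rcases max_cases p q with ⟨h, _⟩ | ⟨h, _⟩ <;> rw [h] <;> assumption
    rcases le_total a a' with ha | ha <;> rcases le_total b b' with hb | hb
    · have h1 := gX1 a a' b ha
      have h2 := gX2 a' b b' hb
      have h3 : 0 ≤ δ * (a' - a) := mul_nonneg hδ.le (by linarith)
      have h4 : 0 ≤ δ * (b' - b) := mul_nonneg hδ.le (by linarith)
      refine le_trans ?_ (le_max_left _ _)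
      have h5 := neg_abs_le (X (a, b) - X (a', b'))
      rw [abs_sub_comm a a', abs_sub_comm b b', abs_of_nonneg (by linarith : 0 ≤ a' - a),
        abs_of_nonneg (by linarith : 0 ≤ b' - b)]
      apply m0 <;> linarith
    · have h1 := gT1 a a' b ha
      have h2 := gT2 a' b' b hb
      have h3 : 0 ≤ δ * (a' - a) := mul_nonneg hδ.le (by linarith)
      have h4 : 0 ≤ δ * (b - b') := mul_nonneg hδ.le (by linarith)
      refine le_trans ?_ (le_max_right _ _)
      have h5 := le_abs_self (T (a, b) - T (a', b'))
      rw [abs_sub_comm a a', abs_of_nonneg (by linarith : 0 ≤ a' - a),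
        abs_of_nonneg (by linarith : 0 ≤ b - b')]
      apply m0 <;> linarith
    · have h1 := gT1 a' a b ha
      have h2 := gT2 a' b b' hb
      have h3 : 0 ≤ δ * (a - a') := mul_nonneg hδ.le (by linarith)
      have h4 : 0 ≤ δ * (b' - b) := mul_nonneg hδ.le (by linarith)
      refine le_trans ?_ (le_max_right _ _)
      have h5 := neg_abs_le (T (a, b) - T (a', b'))
      rw [abs_sub_comm b b', abs_of_nonneg (by linarith : 0 ≤ a - a'),
        abs_of_nonneg (by linarith : 0 ≤ b' - b)]
      apply m0 <;> linarith
    · have h1 := gX1 a' a b ha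
      have h2 := gX2 a' b' b hb
      have h3 : 0 ≤ δ * (a - a') := mul_nonneg hδ.le (by linarith)
      have h4 : 0 ≤ δ * (b - b') := mul_nonneg hδ.le (by linarith)
      refine le_trans ?_ (le_max_left _ _)
      have h5 := le_abs_self (X (a, b) - X (a', b'))
      rw [abs_of_nonneg (by linarith : 0 ≤ a - a'),
        abs_of_nonneg (by linarith : 0 ≤ b - b')]
      apply m0 <;> linarith
  have hsurj : Function.Surjective Φ := by
    rw [← range_eq_univ]
    -- the range is clopen
    have hLip : ∀ s : Set (ℝ × ℝ), IsCompact s → IsCompact (Φ ⁻¹' s) := by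
      intro s hs
      refine Metric.isCompact_of_isClosed_isBounded (hs.isClosed.preimage cΦ.continuous) ?_
      exact hanti.isBounded_preimage hs.isBounded
    have hclosed : IsClosedMap Φ :=
      (isProperMap_iff_isCompact_preimage.2 ⟨cΦ.continuous, fun {s} hs => hLip s hs⟩).isClosedMap
    exact IsClopen.eq_univ ⟨hclosed.isClosed_range, hopen.isOpen_range⟩ ⟨Φ 0, mem_range_self 0⟩
  set E : (ℝ × ℝ) ≃ₜ (ℝ × ℝ) :=
    (Equiv.ofBijective Φ ⟨hanti.injective, hsurj⟩).toHomeomorphOfContinuousOpen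
      cΦ.continuous hopen with hE
  have hEΦ : (E : ℝ × ℝ → ℝ × ℝ) = Φ := rfl
  have hinv : ∀ y, Φ (E.symm y) = y := fun y => E.apply_symm_apply y
  have hd : ∀ y, HasFDerivAt E.symm
      (((e (E.symm y)).symm : (ℝ × ℝ) ≃L[ℝ] (ℝ × ℝ)) : (ℝ × ℝ) →L[ℝ] (ℝ × ℝ)) y := by
    intro y
    exact HasFDerivAt.of_local_left_inverse (f := Φ) E.symm.continuous.continuousAt (dΦ _)
      (Eventually.of_forall hinv)
  refine ⟨E.symm, E.contDiff_symm (f₀' := e) (fun z => dΦ z) cΦ, fun y => ?_, fun y => ?_⟩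
  · have := hinv y
    simp only [hΦ] at this
    exact ⟨congrArg Prod.fst this, congrArg Prod.snd this⟩
  · constructor
    · exact (hd y).fst
    · exact (hd y).snd

lemma psx_swap_deriv {F a b : ℝ × ℝ → ℝ} (hF : ∀ z, HasFDerivAt F (psxLf (a z) (b z)) z)
    (z : ℝ × ℝ) :
    HasFDerivAt (fun z : ℝ × ℝ => F z.swap) (psxLf (b z.swap) (a z.swap)) z := by
  have h1 : HasFDerivAt (Prod.swap : ℝ × ℝ → ℝ × ℝ)
      (((ContinuousLinearEquiv.prodComm ℝ ℝ ℝ) : (ℝ × ℝ) ≃L[ℝ] (ℝ × ℝ)) : (ℝ × ℝ) →L[ℝ] (ℝ × ℝ)) z :=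
    (ContinuousLinearEquiv.prodComm ℝ ℝ ℝ).hasFDerivAt
  refine ((hF z.swap).comp z h1).congr_fderiv ?_
  ext <;> simp

lemma psx_half_inverse (X T A₁ A₂ P Q : ℝ × ℝ → ℝ) (δ : ℝ) (hδ : 0 < δ)
    (hX : ∀ z, HasFDerivAt X (psxLf (A₁ z) (A₂ z)) z)
    (hT : ∀ z, HasFDerivAt T (psxLf (-P z) (Q z)) z)
    (cA₁ : Continuous A₁) (cA₂ : Continuous A₂) (cP : Continuous P) (cQ : Continuous Q)
    (hA₁ : ∀ z : ℝ × ℝ, z.1 ≤ z.2 → δ ≤ A₁ z) (hA₂ : ∀ z : ℝ × ℝ, z.1 ≤ z.2 → δ ≤ A₂ z)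
    (hP : ∀ z : ℝ × ℝ, z.1 ≤ z.2 → δ ≤ P z) (hQ : ∀ z : ℝ × ℝ, z.1 ≤ z.2 → δ ≤ Q z)
    (dA : ∀ a, A₁ (a, a) = A₂ (a, a)) (dP : ∀ a, P (a, a) = Q (a, a)) (T0 : ∀ a, T (a, a) = 0) :
    ∃ Ψ : ℝ × ℝ → ℝ × ℝ, ContDiff ℝ 1 Ψ ∧
      ∀ y : ℝ × ℝ, 0 ≤ y.2 → (Ψ y).1 ≤ (Ψ y).2 ∧ X (Ψ y) = y.1 ∧ T (Ψ y) = y.2 ∧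
        (y.2 = 0 → (Ψ y).1 = (Ψ y).2) ∧
        HasFDerivAt (fun y => (Ψ y).1)
          (psxLf (Q (Ψ y) / (A₁ (Ψ y) * Q (Ψ y) + A₂ (Ψ y) * P (Ψ y)))
            (-A₂ (Ψ y) / (A₁ (Ψ y) * Q (Ψ y) + A₂ (Ψ y) * P (Ψ y)))) y ∧
        HasFDerivAt (fun y => (Ψ y).2)
          (psxLf (P (Ψ y) / (A₁ (Ψ y) * Q (Ψ y) + A₂ (Ψ y) * P (Ψ y)))
            (A₁ (Ψ y) / (A₁ (Ψ y) * Q (Ψ y) + A₂ (Ψ y) * P (Ψ y)))) y := by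
  have sw : ∀ z : ℝ × ℝ, z.1 = z.2 → z.swap = z := fun z h => Prod.ext h.symm h
  have dA' : ∀ z : ℝ × ℝ, z.1 = z.2 → A₁ z = A₂ z := by
    rintro ⟨a, b⟩ h; simp only at h; subst h; exact dA a
  have dP' : ∀ z : ℝ × ℝ, z.1 = z.2 → P z = Q z := by
    rintro ⟨a, b⟩ h; simp only at h; subst h; exact dP a
  have T0' : ∀ z : ℝ × ℝ, z.1 = z.2 → T z = 0 := by
    rintro ⟨a, b⟩ h; simp only at h; subst h; exact T0 a
  set gl : (ℝ × ℝ → ℝ) → (ℝ × ℝ → ℝ) → ℝ × ℝ → ℝ := fun F G z => if z.1 ≤ z.2 then F z else G z.swap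
    with hgl
  have gle : ∀ F G z, z.1 ≤ z.2 → gl F G z = F z := fun F G z h => by simp [hgl, h]
  have glc : ∀ F G, Continuous F → Continuous G → (∀ z : ℝ × ℝ, z.1 = z.2 → F z = G z) →
      Continuous (gl F G) := by
    intro F G hF hG h
    refine Continuous.if_le hF (hG.comp continuous_swap) continuous_fst continuous_snd ?_
    intro z hz
    show F z = G z.swap
    rw [sw z hz, h z hz]
  have glb : ∀ F G : ℝ × ℝ → ℝ, (∀ z : ℝ × ℝ, z.1 ≤ z.2 → δ ≤ F z) →
      (∀ z : ℝ × ℝ, z.1 ≤ z.2 → δ ≤ G z) → ∀ z, δ ≤ gl F G z := by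
    intro F G h1 h2 z
    by_cases h : z.1 ≤ z.2
    · simp [hgl, h, h1 z h]
    · simp only [hgl, h, if_false]
      exact h2 z.swap (not_le.1 h).le
  have hX' : ∀ z, HasFDerivAt (gl X X) (psxLf (gl A₁ A₂ z) (gl A₂ A₁ z)) z := by
    intro z
    exact psx_glue X (fun z => X z.swap) A₁ A₂ (fun z => A₂ z.swap) (fun z => A₁ z.swap) hX
      (psx_swap_deriv hX) (fun z hz => by simp only [sw z hz, dA' z hz, and_self]) z
  have hT' : ∀ z, HasFDerivAt (gl T (fun z => -T z)) (psxLf (-gl P Q z) (gl Q P z)) z := by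
    intro z
    have := psx_glue T (fun z => -T z.swap) (fun z => -P z) Q (fun z => -Q z.swap)
      (fun z => P z.swap) hT (fun z => by
        refine (psx_swap_deriv hT z).neg.congr_fderiv ?_
        ext <;> simp)
      (fun z hz => by simp only [sw z hz, dP' z hz, T0' z hz, neg_zero, and_self]) z
    refine this.congr_fderiv ?_
    by_cases h : z.1 ≤ z.2 <;> simp [hgl, h]
  obtain ⟨Ψ, h1, h2, h3⟩ := psx_global_inverse (gl X X) (gl T (fun z => -T z)) (gl A₁ A₂) (gl A₂ A₁)
    (gl P Q) (gl Q P) δ hδ hX' hT' (glc _ _ cA₁ cA₂ dA') (glc _ _ cA₂ cA₁ fun z hz => (dA' z hz).symm)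
    (glc _ _ cP cQ dP') (glc _ _ cQ cP fun z hz => (dP' z hz).symm) (glb _ _ hA₁ hA₂) (glb _ _ hA₂ hA₁)
    (glb _ _ hP hQ) (glb _ _ hQ hP)
  have gT2 : ∀ a b b', b ≤ b' → δ * (b' - b) ≤
      gl T (fun z => -T z) (a, b') - gl T (fun z => -T z) (a, b) := fun a b b' h =>
    psx_grow (f := fun b => gl T (fun z => -T z) (a, b)) (fun x => psx_partial2 (hT' (a, x)))
      (fun x => glb _ _ hQ hP _) h
  have gT0 : ∀ a, gl T (fun z => -T z) (a, a) = 0 := fun a =>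
    (gle T (fun z => -T z) (a, a) le_rfl).trans (T0 a)
  refine ⟨Ψ, h1, fun y hy => ?_⟩
  obtain ⟨e1, e2⟩ := h2 y
  obtain ⟨d1, d2⟩ := h3 y
  have hle : (Ψ y).1 ≤ (Ψ y).2 := by
    by_contra hlt
    rw [not_le] at hlt
    have := gT2 (Ψ y).1 (Ψ y).2 (Ψ y).1 hlt.le
    rw [gT0, Prod.mk.eta, e2] at this
    have : 0 < δ * ((Ψ y).1 - (Ψ y).2) := mul_pos hδ (by linarith)
    linarith
  simp only [gle _ _ _ hle] at e1 e2 d1 d2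
  refine ⟨hle, e1, e2, fun h0 => ?_, d1, d2⟩
  have := gT2 (Ψ y).1 (Ψ y).1 (Ψ y).2 hle
  rw [gT0, Prod.mk.eta, gle T (fun z => -T z) _ hle, e2, h0] at this
  have h4 : (Ψ y).2 - (Ψ y).1 ≤ 0 := by
    by_contra h
    rw [not_le] at h
    have := mul_pos hδ h
    linarith
  linarith

lemma psx_abstract_existence (C k s₀ r₀ s₀' r₀' : ℝ → ℝ) (B M c₁ c₂ : ℝ)
    (hc₁ : 0 < c₁)
    (hC : ∀ σ, HasDerivAt C (2 * k σ * C σ) σ) (ck : Continuous k) (k0 : ∀ σ, 0 ≤ k σ)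
    (kB : ∀ σ, k σ ≤ B)
    (hs : ∀ x, HasDerivAt s₀ (s₀' x) x) (hr : ∀ x, HasDerivAt r₀ (r₀' x) x)
    (cs' : Continuous s₀') (cr' : Continuous r₀')
    (s0 : ∀ x, 0 ≤ s₀' x) (sM : ∀ x, s₀' x ≤ M) (r0 : ∀ x, 0 ≤ r₀' x) (rM : ∀ x, r₀' x ≤ M)
    (hCl : ∀ a b, c₁ ≤ C (s₀ a - r₀ b)) (hCu : ∀ a b, C (s₀ a - r₀ b) ≤ c₂) :
    ∃ s r : ℝ × ℝ → ℝ, ContDiff ℝ 1 s ∧ ContDiff ℝ 1 r ∧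
      (∀ x, s (x, 0) = s₀ x ∧ r (x, 0) = r₀ x) ∧
      ∀ y : ℝ × ℝ, 0 ≤ y.2 → ∃ sx rx : ℝ, sx ≤ M ∧ rx ≤ M ∧
        HasFDerivAt s (psxLf sx (-(C (s y - r y) * sx))) y ∧
        HasFDerivAt r (psxLf rx (C (s y - r y) * rx)) y := by
  have cC : Continuous C := continuous_iff_continuousAt.2 fun σ => (hC σ).continuousAt
  have cs : Continuous s₀ := continuous_iff_continuousAt.2 fun σ => (hs σ).continuousAt
  have cr : Continuous r₀ := continuous_iff_continuousAt.2 fun σ => (hr σ).continuousAt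
  have hM : 0 ≤ M := (s0 0).trans (sM 0)
  have hB : 0 ≤ B := (k0 0).trans (kB 0)
  set c : ℝ → ℝ → ℝ := fun a b => C (s₀ a - r₀ b) with hc
  set p : ℝ → ℝ → ℝ := fun a b => k (s₀ a - r₀ b) * s₀' a with hp
  set q : ℝ → ℝ → ℝ := fun a b => k (s₀ a - r₀ b) * r₀' b with hq
  have p0 : ∀ a b, 0 ≤ p a b := fun a b => mul_nonneg (k0 _) (s0 _)
  have q0 : ∀ a b, 0 ≤ q a b := fun a b => mul_nonneg (k0 _) (r0 _)
  have cp : Continuous fun z : ℝ × ℝ => p z.1 z.2 := by fun_prop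
  have cq : Continuous fun z : ℝ × ℝ => q z.1 z.2 := by fun_prop
  have cc : Continuous fun z : ℝ × ℝ => c z.1 z.2 := by fun_prop
  have c0 : ∀ a b, 0 < c a b := fun a b => hc₁.trans_le (hCl a b)
  have hc₂ : 0 < c₂ := (c0 0 0).trans_le (hCu 0 0)
  obtain ⟨V, W, cV, cW, dV, dW, V1, W1⟩ := psx_goursat p q (B * M) cp cq
    (fun a b => by
      rw [abs_of_nonneg (p0 a b)]; exact mul_le_mul (kB _) (sM _) (s0 _) hB)
    (fun a b => by
      rw [abs_of_nonneg (q0 a b)]; exact mul_le_mul (kB _) (rM _) (r0 _) hB)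
  have pos := psx_quasi_pos V W p q q p cV cW cp cq cq cp (fun a b _ => p0 a b)
    (fun a b _ => q0 a b) (fun a b _ => dV a b)
    (fun a b _ => (dW a b).congr_deriv (by ring)) (fun a => by rw [V1]; norm_num)
    (fun a => by rw [W1]; norm_num)
  have ckk : Continuous fun z : ℝ × ℝ => k (s₀ z.1 - r₀ z.2) := by fun_prop
  have bnd := psx_quasi_pos (fun a b => M * V a b - s₀' a) (fun a b => M * W a b - r₀' b)
    (fun a b => k (s₀ a - r₀ b) * M * V a b) (fun a b => k (s₀ a - r₀ b) * M * W a b)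
    (fun a b => k (s₀ a - r₀ b) * M * W a b) (fun a b => k (s₀ a - r₀ b) * M * V a b)
    (by fun_prop) (by fun_prop) (by fun_prop) (by fun_prop) (by fun_prop) (by fun_prop)
    (fun a b h => mul_nonneg (mul_nonneg (k0 _) hM) (pos a b h).1)
    (fun a b h => mul_nonneg (mul_nonneg (k0 _) hM) (pos a b h).2)
    (fun a b _ => (((dV a b).const_mul M).sub_const _).congr_deriv (by simp only [hp, hq]; ring))
    (fun a b _ => (((dW a b).const_mul M).sub_const _).congr_deriv (by simp only [hp, hq]; ring))
    (fun a => by simp only [V1]; linarith [sM a]) (fun a => by simp only [W1]; linarith [rM a])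
  -- derivatives of c
  have dca : ∀ a b, HasDerivAt (fun y => c y b) (2 * p a b * c a b) a := fun a b =>
    ((hC (s₀ a - r₀ b)).comp a ((hs a).sub_const (r₀ b))).congr_deriv (by simp only [hp, hc]; ring)
  have dcb : ∀ a b, HasDerivAt (fun y => c a y) (-(2 * q a b * c a b)) b := fun a b =>
    ((hC (s₀ a - r₀ b)).comp b ((hr b).const_sub (s₀ a))).congr_deriv (by simp only [hq, hc]; ring)
  -- P and Q
  have dP : ∀ a b, HasDerivAt (fun y => V a y / (2 * c a y))
      ((p a b * W a b + q a b * V a b) / (2 * c a b)) b := fun a b => by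
    have h := c0 a b
    refine ((dV a b).div ((dcb a b).const_mul 2) (by positivity)).congr_deriv ?_
    field_simp
    ring
  have dQ : ∀ a b, HasDerivAt (fun y => W y b / (2 * c y b))
      (-((p a b * W a b + q a b * V a b) / (2 * c a b))) a := fun a b => by
    have h := c0 a b
    refine ((dW a b).div ((dca a b).const_mul 2) (by positivity)).congr_deriv ?_
    field_simp
    ring
  have cQ : Continuous fun z : ℝ × ℝ => W z.1 z.2 / (2 * c z.1 z.2) :=
    cW.div (by fun_prop) fun z => (mul_pos two_pos (c0 _ _)).ne'
  have cP : Continuous fun z : ℝ × ℝ => V z.1 z.2 / (2 * c z.1 z.2) :=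
    cV.div (by fun_prop) fun z => (mul_pos two_pos (c0 _ _)).ne'
  have Plow : ∀ a b, a ≤ b → 1 / (2 * c₂) ≤ V a b / (2 * c a b) := by
    intro a b hab
    have hmono : MonotoneOn (fun y => V a y / (2 * c a y)) (Icc a b) := by
      refine monotoneOn_of_deriv_nonneg (convex_Icc a b)
        (fun y _ => (dP a y).continuousAt.continuousWithinAt)
        (fun y _ => (dP a y).differentiableAt.differentiableWithinAt) (fun y hy => ?_)
      rw [interior_Icc] at hy
      rw [(dP a y).deriv]
      have := pos a y hy.1.le
      have h1 := c0 a y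
      exact div_nonneg (add_nonneg (mul_nonneg (p0 _ _) this.2) (mul_nonneg (q0 _ _) this.1))
        (by positivity)
    have := hmono ⟨le_rfl, hab⟩ ⟨hab, le_rfl⟩ hab
    simp only [V1] at this
    refine le_trans ?_ this
    have h1 := c0 a a
    have h2 := hCu a a
    gcongr
  have Qlow : ∀ a b, a ≤ b → 1 / (2 * c₂) ≤ W a b / (2 * c a b) := by
    intro a b hab
    have hmono : AntitoneOn (fun y => W y b / (2 * c y b)) (Icc a b) := by
      refine antitoneOn_of_deriv_nonpos (convex_Icc a b)
        (fun y _ => (dQ y b).continuousAt.continuousWithinAt)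
        (fun y _ => (dQ y b).differentiableAt.differentiableWithinAt) (fun y hy => ?_)
      rw [interior_Icc] at hy
      rw [(dQ y b).deriv]
      have := pos y b hy.2.le
      have h1 := c0 y b
      rw [neg_nonpos]
      exact div_nonneg (add_nonneg (mul_nonneg (p0 _ _) this.2) (mul_nonneg (q0 _ _) this.1))
        (by positivity)
    have := hmono ⟨le_rfl, hab⟩ ⟨hab, le_rfl⟩ hab
    simp only [W1] at this
    refine le_trans ?_ this
    have h1 := c0 b b
    have h2 := hCu b b
    gcongr
  have Vlow : ∀ a b, a ≤ b → c₁ * (1 / (2 * c₂)) ≤ V a b / 2 := by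
    intro a b hab
    have h1 := c0 a b
    have : V a b / 2 = c a b * (V a b / (2 * c a b)) := by field_simp
    rw [this]
    exact mul_le_mul (hCl a b) (Plow a b hab) (by positivity) h1.le
  have Wlow : ∀ a b, a ≤ b → c₁ * (1 / (2 * c₂)) ≤ W a b / 2 := by
    intro a b hab
    have h1 := c0 a b
    have : W a b / 2 = c a b * (W a b / (2 * c a b)) := by field_simp
    rw [this]
    exact mul_le_mul (hCl a b) (Qlow a b hab) (by positivity) h1.le
  obtain ⟨X, X0, dX⟩ := psx_potential (fun a b => V a b / 2) (fun a b => W a b / 2)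
    (fun a b => (p a b * W a b - q a b * V a b) / 2) (by fun_prop) (by fun_prop) (by fun_prop)
    (fun a b => (dV a b).div_const 2) (fun a b => (dW a b).div_const 2)
  obtain ⟨T, T0, dT⟩ := psx_potential (fun a b => -(V a b / (2 * c a b))) (fun a b => W a b / (2 * c a b))
    (fun a b => -((p a b * W a b + q a b * V a b) / (2 * c a b))) cP.neg cQ
    (Continuous.neg (Continuous.div (by fun_prop) (by fun_prop)
      fun z => (mul_pos two_pos (c0 _ _)).ne'))
    (fun a b => (dP a b).neg) (fun a b => dQ a b)
  have diag : ∀ a : ℝ, HasDerivAt (fun y : ℝ => (y, y)) ((1 : ℝ), (1 : ℝ)) a := fun a =>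
    (hasDerivAt_id a).prodMk (hasDerivAt_id a)
  have Xd : ∀ a, X (a, a) = a := by
    intro a
    have h1 : ∀ y, HasDerivAt (fun y => X (y, y) - y) 0 y := fun y => by
      refine ((HasFDerivAt.comp_hasDerivAt (f := fun y : ℝ => (y, y)) y (dX (y, y)) (diag y)).sub (hasDerivAt_id y)).congr_deriv ?_
      simp [V1, W1]; norm_num
    have := is_const_of_deriv_eq_zero (fun y => (h1 y).differentiableAt) (fun y => (h1 y).deriv) a 0
    simp only [X0] at this
    linarith
  have Td : ∀ a, T (a, a) = 0 := by
    intro a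
    have h1 : ∀ y, HasDerivAt (fun y => T (y, y)) 0 y := fun y => by
      refine (HasFDerivAt.comp_hasDerivAt (f := fun y : ℝ => (y, y)) y (dT (y, y)) (diag y)).congr_deriv ?_
      simp [V1, W1]
    have := is_const_of_deriv_eq_zero (fun y => (h1 y).differentiableAt) (fun y => (h1 y).deriv) a 0
    simpa only [T0] using this
  obtain ⟨Ψ, cΨ, hΨ⟩ := psx_half_inverse X T (fun z => V z.1 z.2 / 2) (fun z => W z.1 z.2 / 2)
    (fun z => V z.1 z.2 / (2 * c z.1 z.2)) (fun z => W z.1 z.2 / (2 * c z.1 z.2))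
    (min (c₁ * (1 / (2 * c₂))) (1 / (2 * c₂))) (by positivity) dX dT (by fun_prop) (by fun_prop) cP cQ
    (fun z hz => (min_le_left _ _).trans (Vlow _ _ hz))
    (fun z hz => (min_le_left _ _).trans (Wlow _ _ hz))
    (fun z hz => (min_le_right _ _).trans (Plow _ _ hz))
    (fun z hz => (min_le_right _ _).trans (Qlow _ _ hz))
    (fun a => by simp only [V1, W1]) (fun a => by simp only [V1, W1]) Td
  have cs1 : ContDiff ℝ 1 s₀ := by
    rw [contDiff_one_iff_deriv]
    exact ⟨fun x => (hs x).differentiableAt, by rw [show deriv s₀ = s₀' from funext fun x => (hs x).deriv]; exact cs'⟩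
  have cr1 : ContDiff ℝ 1 r₀ := by
    rw [contDiff_one_iff_deriv]
    exact ⟨fun x => (hr x).differentiableAt, by rw [show deriv r₀ = r₀' from funext fun x => (hr x).deriv]; exact cr'⟩
  refine ⟨fun y => s₀ (Ψ y).1, fun y => r₀ (Ψ y).2, cs1.comp cΨ.fst, cr1.comp cΨ.snd, ?_, ?_⟩
  · intro x
    obtain ⟨_, h2, _, h4, _⟩ := hΨ (x, 0) le_rfl
    have h5 := h4 rfl
    have h6 : (Ψ (x, 0)).1 = x := by
      have : Ψ (x, 0) = ((Ψ (x, 0)).1, (Ψ (x, 0)).1) := Prod.ext rfl h5.symm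
      rw [this, Xd] at h2
      exact h2
    exact ⟨by show s₀ (Ψ (x, 0)).1 = s₀ x; rw [h6], by show r₀ (Ψ (x, 0)).2 = r₀ x; rw [← h5, h6]⟩
  · intro y hy
    obtain ⟨hle, _, _, _, d1, d2⟩ := hΨ y hy
    set w := Ψ y with hw
    have hV : 0 < V w.1 w.2 := by
      have := Vlow w.1 w.2 hle
      have h2 : 0 < c₁ * (1 / (2 * c₂)) := by positivity
      linarith
    have hW : 0 < W w.1 w.2 := by
      have := Wlow w.1 w.2 hle
      have h2 : 0 < c₁ * (1 / (2 * c₂)) := by positivity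
      linarith
    have hcw := c0 w.1 w.2
    have hb := bnd w.1 w.2 hle
    refine ⟨s₀' w.1 / V w.1 w.2, r₀' w.2 / W w.1 w.2, ?_, ?_, ?_, ?_⟩
    · rw [div_le_iff₀ hV]; linarith [hb.1]
    · rw [div_le_iff₀ hW]; linarith [hb.2]
    · have h := HasDerivAt.comp_hasFDerivAt (f := fun y => (Ψ y).1) y (hs w.1) d1
      refine h.congr_fderiv ?_
      show _ = psxLf _ (-(c w.1 w.2 * _))
      ext
      · simp; field_simp; norm_num
      · simp; field_simp; norm_num
    · have h := HasDerivAt.comp_hasFDerivAt (f := fun y => (Ψ y).2) y (hr w.2) d2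
      refine h.congr_fderiv ?_
      show _ = psxLf _ (c w.1 w.2 * _)
      ext
      · simp; field_simp; norm_num
      · simp; field_simp; norm_num

/-- Riemann-invariant form of a solution. -/
def psxRS (C : ℝ → ℝ) (T : ℝ) (s r : ℝ × ℝ → ℝ) : Prop :=
  ContinuousOn s (univ ×ˢ Ico 0 T) ∧ ContinuousOn r (univ ×ˢ Ico 0 T) ∧
  (∀ p : ℝ × ℝ, p.2 ∈ Ico 0 T → r p < s p) ∧
  ∃ sx rx : ℝ × ℝ → ℝ, ContinuousOn sx (univ ×ˢ Ico 0 T) ∧ ContinuousOn rx (univ ×ˢ Ico 0 T) ∧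
    ∀ p : ℝ × ℝ, p.2 ∈ Ioo 0 T →
      HasFDerivAt s (psxLf (sx p) (-(C (s p - r p) * sx p))) p ∧
      HasFDerivAt r (psxLf (rx p) (C (s p - r p) * rx p)) p

def psxTr (x₀ t₁ L : ℝ) : Set (ℝ × ℝ) :=
  {p | 0 ≤ p.2 ∧ p.2 ≤ t₁ ∧ |p.1 - x₀| ≤ L * (t₁ - p.2)}

lemma psx_tr_compact (x₀ t₁ L : ℝ) (hL : 0 ≤ L) : IsCompact (psxTr x₀ t₁ L) := by
  refine IsCompact.of_isClosed_subset
    ((isCompact_Icc (a := x₀ - L * t₁) (b := x₀ + L * t₁)).prod (isCompact_Icc (a := (0:ℝ)) (b := t₁))) ?_ ?_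
  · have e : psxTr x₀ t₁ L = {p | 0 ≤ p.2} ∩ ({p | p.2 ≤ t₁} ∩ {p | |p.1 - x₀| ≤ L * (t₁ - p.2)}) := rfl
    rw [e]
    exact (isClosed_le continuous_const continuous_snd).inter
      ((isClosed_le continuous_snd continuous_const).inter
        (isClosed_le (by fun_prop) (by fun_prop)))
  · rintro ⟨x, t⟩ ⟨h1, h2, h3⟩
    simp only at h1 h2 h3
    have h4 := abs_le.1 h3
    have : 0 ≤ L * t := mul_nonneg hL h1
    exact ⟨⟨by simp only; linarith, by simp only; linarith⟩, h1, h2⟩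

lemma psx_tr_back {x₀ t₁ L c h : ℝ} {p : ℝ × ℝ} (hp : p ∈ psxTr x₀ t₁ L) (hc : |c| ≤ L)
    (h0 : h ≤ 0) (h1 : -h ≤ p.2) : (p.1 + h * c, p.2 + h) ∈ psxTr x₀ t₁ L := by
  obtain ⟨a1, a2, a3⟩ := hp
  refine ⟨by simp only; linarith, by simp only; linarith, ?_⟩
  simp only
  have : |p.1 + h * c - x₀| ≤ |p.1 - x₀| + |h * c| := by
    rw [show p.1 + h * c - x₀ = (p.1 - x₀) + h * c by ring]; exact abs_add_le _ _
  rw [abs_mul, abs_of_nonpos h0] at this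
  have h3 : -h * |c| ≤ -h * L := mul_le_mul_of_nonneg_left hc (by linarith)
  nlinarith

lemma psx_line {f : ℝ × ℝ → ℝ} {f' : ℝ × ℝ →L[ℝ] ℝ} {p : ℝ × ℝ} (hf : HasFDerivAt f f' p) (c : ℝ) :
    HasDerivAt (fun h : ℝ => f (p.1 + h * c, p.2 + h)) (f' (c, 1)) 0 := by
  have h1 : HasDerivAt (fun h : ℝ => (p.1 + h * c, p.2 + h)) (c, (1 : ℝ)) 0 := by
    refine HasDerivAt.prodMk ?_ ?_
    · exact (((hasDerivAt_id (0:ℝ)).mul_const c).const_add p.1).congr_deriv (by simp)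
    · exact (hasDerivAt_id (0:ℝ)).const_add p.2
  have hf' : HasFDerivAt f f' (p.1 + 0 * c, p.2 + 0) := by simpa using hf
  exact HasFDerivAt.comp_hasDerivAt (f := fun h : ℝ => (p.1 + h * c, p.2 + h)) 0 hf' h1

lemma psx_back {x₀ t₁ L c : ℝ} {p : ℝ × ℝ} (hp : p ∈ psxTr x₀ t₁ L) (hp0 : 0 < p.2) (hc : |c| ≤ L)
    {f : ℝ × ℝ → ℝ} {f' : ℝ × ℝ →L[ℝ] ℝ} (hf : HasFDerivAt f f' p)
    (hm : ∀ q ∈ psxTr x₀ t₁ L, q.2 < p.2 → f q ≤ f p) : 0 ≤ f' (c, 1) := by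
  have h1 := (psx_line hf c).neg
  have := psx_left h1 (by
    have : Ioo (-p.2) 0 ∈ 𝓝[<] (0:ℝ) := Ioo_mem_nhdsLT (by linarith)
    filter_upwards [this] with h hh
    have := hm _ (psx_tr_back hp hc hh.2.le (by linarith [hh.1])) (by simp only; linarith [hh.2])
    simp only [Pi.neg_apply, zero_mul, add_zero, Prod.mk.eta]
    linarith)
  linarith

lemma psx_bounds {C : ℝ → ℝ} {T : ℝ} {s r : ℝ × ℝ → ℝ} (hC0 : ∀ σ, 0 < σ → 0 ≤ C σ)
    (hCm : MonotoneOn C (Ioi 0)) (h : psxRS C T s r) (S R : ℝ)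
    (hS : ∀ x, s (x, 0) ≤ S) (hR : ∀ x, R ≤ r (x, 0)) {x₀ t₁ : ℝ} (h0 : 0 ≤ t₁) (h1 : t₁ < T)
    (hSR : R < S) {L : ℝ} (hL : C (S - R + 1) ≤ L) :
    ∀ p ∈ psxTr x₀ t₁ L, s p ≤ S ∧ R ≤ r p := by
  obtain ⟨cs, cr, hlt, sx, rx, csx, crx, hd⟩ := h
  have hL0 : 0 ≤ L := (hC0 _ (by linarith)).trans hL
  have sub : psxTr x₀ t₁ L ⊆ univ ×ˢ Ico 0 T := fun q hq => ⟨trivial, hq.1, hq.2.1.trans_lt h1⟩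
  have cK := psx_tr_compact x₀ t₁ L hL0
  -- the quantitative claim
  have key : ∀ ε : ℝ, 0 < ε → 2 * ε * (1 + t₁) ≤ 1 → ∀ p ∈ psxTr x₀ t₁ L,
      s p < S + ε * (1 + p.2) ∧ R - ε * (1 + p.2) < r p := by
    intro ε hε hε1
    by_contra hcon
    push Not at hcon
    set φ : ℝ × ℝ → ℝ := fun p => max (s p - (S + ε * (1 + p.2))) (R - ε * (1 + p.2) - r p) with hφ
    have cφ : ContinuousOn φ (psxTr x₀ t₁ L) := by
      refine ContinuousOn.sup ?_ ?_
      · exact (cs.mono sub).sub (by fun_prop)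
      · exact ContinuousOn.sub (by fun_prop) (cr.mono sub)
    set Bd : Set (ℝ × ℝ) := psxTr x₀ t₁ L ∩ φ ⁻¹' Ici 0 with hBd
    have cB : IsCompact Bd := cK.of_isClosed_subset
      (cφ.preimage_isClosed_of_isClosed cK.isClosed isClosed_Ici) inter_subset_left
    have nB : Bd.Nonempty := by
      obtain ⟨p, hp, hp2⟩ := hcon
      refine ⟨p, hp, ?_⟩
      show 0 ≤ φ p
      by_cases h : s p < S + ε * (1 + p.2)
      · exact le_max_of_le_right (by linarith [hp2 h])
      · exact le_max_of_le_left (by linarith [not_lt.1 h])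
    obtain ⟨p, ⟨hpK, hpφ⟩, hmin⟩ := cB.exists_isMinOn nB continuous_snd.continuousOn
    have good : ∀ q ∈ psxTr x₀ t₁ L, q.2 < p.2 →
        s q - (S + ε * (1 + q.2)) < 0 ∧ R - ε * (1 + q.2) - r q < 0 := by
      intro q hq hlt
      by_contra hn
      have : q ∈ Bd := by
        refine ⟨hq, ?_⟩
        show 0 ≤ φ q
        by_contra hh
        exact hn (max_lt_iff.1 (not_le.1 hh))
      exact absurd (hmin this) (not_le.2 hlt)
    have hp0 : 0 < p.2 := by
      rcases hpK.1.lt_or_eq with h | h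
      · exact h
      · exfalso
        have e : p = (p.1, 0) := Prod.ext rfl h.symm
        have a := hS p.1
        have b := hR p.1
        rw [← e] at a b
        have : φ p < 0 := max_lt (by rw [← h]; linarith) (by rw [← h]; linarith)
        exact absurd hpφ (not_le.2 this)
    have hpT : p.2 ∈ Ioo 0 T := ⟨hp0, hpK.2.1.trans_lt h1⟩
    obtain ⟨ds, dr⟩ := hd p hpT
    have dt : HasFDerivAt (fun p : ℝ × ℝ => ε * (1 + p.2)) (psxLf 0 ε) p := by
      refine ((hasFDerivAt_snd.const_add 1).const_mul ε).congr_fderiv ?_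
      ext <;> simp
    have d1 : HasFDerivAt (fun q => s q - (S + ε * (1 + q.2)))
      (psxLf (sx p) (-(C (s p - r p) * sx p) - ε)) p := by
      refine (ds.sub (dt.const_add S)).congr_fderiv ?_
      ext <;> simp
    have d2 : HasFDerivAt (fun q => R - ε * (1 + q.2) - r q)
      (psxLf (-rx p) (-(C (s p - r p) * rx p) - ε)) p := by
      refine ((dt.const_sub R).sub dr).congr_fderiv ?_
      ext <;> simp
      ring
    have lim : ∀ f : ℝ × ℝ → ℝ, ContinuousAt f p → (∀ q ∈ psxTr x₀ t₁ L, q.2 < p.2 → f q < 0) → f p ≤ 0 := by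
      intro f hf hneg
      have h2 : Tendsto (fun h : ℝ => f (p.1 + h * 0, p.2 + h)) (𝓝[<] 0) (𝓝 (f p)) := by
        have h3 : ContinuousAt (fun h : ℝ => f (p.1 + h * 0, p.2 + h)) 0 := by
          refine ContinuousAt.comp (f := fun h : ℝ => (p.1 + h * 0, p.2 + h)) ?_ (by fun_prop)
          simpa using hf
        have h4 := h3.tendsto.mono_left (nhdsWithin_le_nhds (s := Iio 0))
        simpa using h4
      refine le_of_tendsto h2 ?_
      have : Ioo (-p.2) 0 ∈ 𝓝[<] (0:ℝ) := Ioo_mem_nhdsLT (by linarith)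
      filter_upwards [this] with h hh
      exact (hneg _ (psx_tr_back hpK (c := 0) (by simpa using hL0) hh.2.le (by linarith [hh.1]))
        (by simp only; linarith [hh.2])).le
    have b1 := lim _ d1.continuousAt fun q hq hl => (good q hq hl).1
    have b2 := lim _ d2.continuousAt fun q hq hl => (good q hq hl).2
    have hσ : 0 < s p - r p := sub_pos.2 (hlt p ⟨hp0.le, hpT.2⟩)
    have hσ' : s p - r p ≤ S - R + 1 := by
      have : ε * (1 + p.2) ≤ ε * (1 + t₁) := by
        have := hpK.2.1
        gcongr
      nlinarith
    have hc : |C (s p - r p)| ≤ L := by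
      rw [abs_of_nonneg (hC0 _ hσ)]
      exact (hCm hσ (show (0:ℝ) < S - R + 1 by linarith) hσ').trans hL
    rcases le_max_iff.1 (show 0 ≤ φ p from hpφ) with hc1 | hc1
    · have := psx_back hpK hp0 hc d1 fun q hq hl => ((good q hq hl).1.le.trans hc1)
      simp at this
      linarith
    · have := psx_back hpK hp0 (c := -C (s p - r p)) (by rwa [abs_neg]) d2
        fun q hq hl => ((good q hq hl).2.le.trans hc1)
      simp at this
      linarith
  intro p hp
  have hp2 := hp.1
  have hp3 := hp.2.1
  have aux : ∀ δ, 0 < δ → ∃ ε : ℝ, 0 < ε ∧ 2 * ε * (1 + t₁) ≤ 1 ∧ ε * (1 + p.2) ≤ δ := by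
    intro δ hδ
    refine ⟨min δ 1 / (2 * (1 + t₁)), by positivity, ?_, ?_⟩
    · have : 2 * (min δ 1 / (2 * (1 + t₁))) * (1 + t₁) = min δ 1 := by field_simp
      rw [this]; exact min_le_right _ _
    · have h2 : min δ 1 / (2 * (1 + t₁)) * (1 + p.2) ≤ min δ 1 / (2 * (1 + t₁)) * (1 + t₁) := by
        gcongr
      have : (min δ 1 / (2 * (1 + t₁))) * (1 + t₁) = min δ 1 / 2 := by field_simp
      have h4 := min_le_left δ 1
      linarith
  constructor
  · refine le_of_forall_pos_le_add fun δ hδ => ?_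
    obtain ⟨ε, e1, e2, e3⟩ := aux δ hδ
    linarith [(key ε e1 e2 p hp).1]
  · refine le_of_forall_pos_le_add fun δ hδ => ?_
    obtain ⟨ε, e1, e2, e3⟩ := aux δ hδ
    linarith [(key ε e1 e2 p hp).2]

lemma psx_uniq {C C' : ℝ → ℝ} {T : ℝ} {s r s' r' : ℝ × ℝ → ℝ} (hC0 : ∀ σ, 0 < σ → 0 ≤ C σ)
    (hCm : MonotoneOn C (Ioi 0)) (hCd : ∀ σ, 0 < σ → HasDerivAt C (C' σ) σ)
    (cC' : ContinuousOn C' (Ioi 0))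
    (h : psxRS C T s r) (h' : psxRS C T s' r') (S R : ℝ) (hSR : R < S)
    (hS : ∀ x, s (x, 0) ≤ S) (hR : ∀ x, R ≤ r (x, 0))
    (es : ∀ x, s' (x, 0) = s (x, 0)) (er : ∀ x, r' (x, 0) = r (x, 0)) :
    ∀ x t, 0 ≤ t → t < T → s (x, t) = s' (x, t) ∧ r (x, t) = r' (x, t) := by
  intro x₀ t₁ h0 h1
  set L := C (S - R + 1) with hL
  have hL0 : 0 ≤ L := hC0 _ (by linarith)
  have hb := psx_bounds hC0 hCm h S R hS hR (x₀ := x₀) h0 h1 hSR le_rfl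
  rw [← hL] at hb
  obtain ⟨cs, cr, hlt, sx, rx, csx, crx, hd⟩ := h
  obtain ⟨cs', cr', hlt', sx', rx', csx', crx', hd'⟩ := h'
  have sub : psxTr x₀ t₁ L ⊆ univ ×ˢ Ico 0 T := fun q hq => ⟨trivial, hq.1, hq.2.1.trans_lt h1⟩
  have cK := psx_tr_compact x₀ t₁ L hL0
  have nK : (x₀, t₁) ∈ psxTr x₀ t₁ L := ⟨h0, le_rfl, by simp⟩
  -- range of the differences
  obtain ⟨σ₀, hσ₀, hσl⟩ : ∃ σ₀ > 0, ∀ p ∈ psxTr x₀ t₁ L, σ₀ ≤ s p - r p ∧ σ₀ ≤ s' p - r' p := by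
    obtain ⟨p, hp, hpm⟩ := cK.exists_isMinOn ⟨_, nK⟩
      (((cs.sub cr).inf (cs'.sub cr')).mono sub)
    refine ⟨_, ?_, fun q hq => le_min_iff.1 (hpm hq)⟩
    exact lt_min (sub_pos.2 (hlt p (sub hp).2)) (sub_pos.2 (hlt' p (sub hp).2))
  obtain ⟨σ₁, hσu⟩ : ∃ σ₁, ∀ p ∈ psxTr x₀ t₁ L, s p - r p ≤ σ₁ ∧ s' p - r' p ≤ σ₁ := by
    obtain ⟨p, hp, hpm⟩ := cK.exists_isMaxOn ⟨_, nK⟩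
      (((cs.sub cr).sup (cs'.sub cr')).mono sub)
    exact ⟨_, fun q hq => max_le_iff.1 (hpm hq)⟩
  obtain ⟨Λ, hΛ⟩ := (isCompact_Icc (a := σ₀) (b := σ₁)).exists_bound_of_continuousOn
    (cC'.mono fun y hy => hσ₀.trans_le hy.1)
  obtain ⟨B₁, hB₁⟩ := cK.exists_bound_of_continuousOn (csx'.mono sub)
  obtain ⟨B₂, hB₂⟩ := cK.exists_bound_of_continuousOn (crx'.mono sub)
  have lip : ∀ a ∈ Icc σ₀ σ₁, ∀ b ∈ Icc σ₀ σ₁, |C b - C a| ≤ Λ * |b - a| := by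
    intro a ha b hb
    exact (convex_Icc σ₀ σ₁).norm_image_sub_le_of_norm_hasDerivWithin_le
      (fun y hy => (hCd y (hσ₀.trans_le hy.1)).hasDerivWithinAt) hΛ ha hb
  set B := max B₁ B₂ with hB
  have hB0 : 0 ≤ B := (norm_nonneg _).trans ((hB₁ _ nK).trans (le_max_left _ _))
  have hΛ0 : 0 ≤ Λ := (norm_nonneg _).trans (hΛ (s (x₀, t₁) - r (x₀, t₁)) ⟨(hσl _ nK).1, (hσu _ nK).1⟩)
  set κ := 2 * Λ * B + 1 with hκ
  set m : ℝ × ℝ → ℝ := fun p => max |s p - s' p| |r p - r' p| with hm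
  set φ : ℝ × ℝ → ℝ := fun p => m p * Real.exp (-κ * p.2) with hφ
  have cφ : ContinuousOn φ (psxTr x₀ t₁ L) := by
    refine ContinuousOn.mul ?_ (by fun_prop)
    exact (((cs.sub cs').abs).sup ((cr.sub cr').abs)).mono sub
  obtain ⟨p, hpK, hmax⟩ := cK.exists_isMaxOn ⟨_, nK⟩ cφ
  have hmax' : ∀ q ∈ psxTr x₀ t₁ L, φ q ≤ φ p := fun q hq => hmax hq
  have main : m p ≤ 0 := by
    by_contra hpos
    rw [not_le] at hpos
    have hp0 : 0 < p.2 := by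
      rcases hpK.1.lt_or_eq with h | h
      · exact h
      · exfalso
        have e : p = (p.1, 0) := Prod.ext rfl h.symm
        have : m p = 0 := by
          rw [e]; simp [hm, es, er]
        linarith
    have hpT : p.2 ∈ Ioo 0 T := ⟨hp0, hpK.2.1.trans_lt h1⟩
    obtain ⟨ds, dr⟩ := hd p hpT
    obtain ⟨ds', dr'⟩ := hd' p hpT
    set c := C (s p - r p) with hc
    set c' := C (s' p - r' p) with hc'
    have hσ : 0 < s p - r p := hσ₀.trans_le (hσl p hpK).1
    have hcL : |c| ≤ L := by
      rw [abs_of_nonneg (hC0 _ hσ)]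
      refine hCm hσ (show (0:ℝ) < S - R + 1 by linarith) ?_
      have := hb p hpK
      linarith
    have hcc : |c - c'| ≤ Λ * (2 * m p) := by
      refine (lip _ ⟨(hσl p hpK).2, (hσu p hpK).2⟩ _ ⟨(hσl p hpK).1, (hσu p hpK).1⟩).trans ?_
      refine mul_le_mul_of_nonneg_left ?_ hΛ0
      have e : s p - r p - (s' p - r' p) = (s p - s' p) - (r p - r' p) := by ring
      rw [e]
      refine (abs_sub _ _).trans ?_
      have a1 : |s p - s' p| ≤ m p := le_max_left _ _
      have a2 : |r p - r' p| ≤ m p := le_max_right _ _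
      linarith
    have core : ∀ (g : ℝ × ℝ → ℝ) (a b d : ℝ), HasFDerivAt g (psxLf a b) p → |d| ≤ L →
        (∀ q, |g q| ≤ m q) → |g p| = m p → |d * a + b| ≤ |c - c'| * B → False := by
      intro g a b d hg hdL hgm hgp hD
      obtain ⟨e, he1, he2⟩ : ∃ e : ℝ, |e| = 1 ∧ e * g p = m p := by
        rcases abs_choice (g p) with h | h
        · exact ⟨1, by simp, by rw [← hgp, h, one_mul]⟩
        · exact ⟨-1, by simp, by rw [← hgp, h]; ring⟩
      have dE : HasFDerivAt (fun q : ℝ × ℝ => Real.exp (-κ * q.2))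
          (psxLf 0 (-κ * Real.exp (-κ * p.2))) p := by
        refine ((hasFDerivAt_snd (𝕜 := ℝ) (p := p)).const_mul (-κ)).exp.congr_fderiv ?_
        ext <;> simp
        ring
      have df := (hg.const_mul e).mul dE
      have := psx_back hpK hp0 hdL df fun q hq _ => by
        show e * g q * Real.exp (-κ * q.2) ≤ e * g p * Real.exp (-κ * p.2)
        rw [he2]
        refine le_trans ?_ (hmax' q hq)
        refine mul_le_mul_of_nonneg_right ?_ (Real.exp_pos _).le
        refine (le_abs_self _).trans ?_
        rw [abs_mul, he1, one_mul]
        exact hgm q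
      simp at this
      set E := Real.exp (-(κ * p.2)) with hE
      have hEp : 0 < E := Real.exp_pos _
      have h2 : 0 ≤ E * (e * (d * a + b) - κ * m p) := by
        rw [← he2]
        nlinarith [this]
      have h3 : 0 ≤ e * (d * a + b) - κ * m p := nonneg_of_mul_nonneg_right h2 hEp
      have h4 : e * (d * a + b) ≤ |c - c'| * B := by
        refine (le_abs_self _).trans ?_
        rw [abs_mul, he1, one_mul]; exact hD
      have h5 : |c - c'| * B ≤ Λ * (2 * m p) * B := mul_le_mul_of_nonneg_right hcc hB0
      have h6 : κ * m p = Λ * (2 * m p) * B + m p := by rw [hκ]; ring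
      linarith
    have hsx : |sx' p| ≤ B := (hB₁ p hpK).trans (le_max_left _ _)
    have hrx : |rx' p| ≤ B := (hB₂ p hpK).trans (le_max_right _ _)
    rcases max_choice |s p - s' p| |r p - r' p| with hch | hch
    · refine core (fun q => s q - s' q) (sx p - sx' p) (-(c * sx p) + c' * sx' p) c ?_ hcL
        (fun q => le_max_left _ _) hch.symm ?_
      · refine (ds.sub ds').congr_fderiv ?_
        ext <;> simp
      · rw [show c * (sx p - sx' p) + (-(c * sx p) + c' * sx' p) = -((c - c') * sx' p) by ring, abs_neg,
          abs_mul]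
        exact mul_le_mul_of_nonneg_left hsx (abs_nonneg _)
    · refine core (fun q => r q - r' q) (rx p - rx' p) (c * rx p - c' * rx' p) (-c) ?_
        (by rwa [abs_neg]) (fun q => le_max_right _ _) hch.symm ?_
      · refine (dr.sub dr').congr_fderiv ?_
        ext <;> simp
      · rw [show -c * (rx p - rx' p) + (c * rx p - c' * rx' p) = (c - c') * rx' p by ring, abs_mul]
        exact mul_le_mul_of_nonneg_left hrx (abs_nonneg _)
  have hfin : m (x₀, t₁) ≤ 0 := by
    have a1 := hmax' _ nK
    have a2 : φ p ≤ 0 := mul_nonpos_of_nonpos_of_nonneg main (Real.exp_pos _).le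
    by_contra hh
    have : 0 < φ (x₀, t₁) := mul_pos (not_le.1 hh) (Real.exp_pos _)
    linarith
  have a1 := (le_max_left _ _).trans hfin
  have a2 := (le_max_right _ _).trans hfin
  exact ⟨sub_eq_zero.1 (abs_nonpos_iff.1 a1), sub_eq_zero.1 (abs_nonpos_iff.1 a2)⟩

noncomputable def psxTau (K γ σ : ℝ) : ℝ :=
  (σ / (2 * (2 * Real.sqrt (K * γ) / (γ - 1)))) ^ (-2 / (γ - 1))

noncomputable def psxC (K γ σ : ℝ) : ℝ :=
  Real.sqrt (K * γ) * (σ / (2 * (2 * Real.sqrt (K * γ) / (γ - 1)))) ^ ((γ + 1) / (γ - 1))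

section
variable {K γ : ℝ}

lemma psx_q_pos (hK : 0 < K) (hγ : 1 < γ) : 0 < Real.sqrt (K * γ) :=
  Real.sqrt_pos.2 (mul_pos hK (by linarith))

lemma psx_A_pos (hK : 0 < K) (hγ : 1 < γ) : 0 < 2 * Real.sqrt (K * γ) / (γ - 1) :=
  div_pos (mul_pos two_pos (psx_q_pos hK hγ)) (by linarith)

lemma psx_eta_pos (hK : 0 < K) (hγ : 1 < γ) {τ : ℝ} (h : 0 < τ) : 0 < etaP K γ τ :=
  mul_pos (psx_A_pos hK hγ) (Real.rpow_pos_of_pos h _)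

lemma psx_sound_pos (hK : 0 < K) (hγ : 1 < γ) {τ : ℝ} (h : 0 < τ) : 0 < soundP K γ τ :=
  mul_pos (psx_q_pos hK hγ) (Real.rpow_pos_of_pos h _)

lemma psx_C_pos (hK : 0 < K) (hγ : 1 < γ) {σ : ℝ} (h : 0 < σ) : 0 < psxC K γ σ :=
  mul_pos (psx_q_pos hK hγ) (Real.rpow_pos_of_pos (div_pos h (mul_pos two_pos (psx_A_pos hK hγ))) _)

lemma psx_tau_pos (hK : 0 < K) (hγ : 1 < γ) {σ : ℝ} (h : 0 < σ) : 0 < psxTau K γ σ :=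
  Real.rpow_pos_of_pos (div_pos h (mul_pos two_pos (psx_A_pos hK hγ))) _

lemma psx_eta_div (hK : 0 < K) (hγ : 1 < γ) (τ : ℝ) :
    2 * etaP K γ τ / (2 * (2 * Real.sqrt (K * γ) / (γ - 1))) = τ ^ (-(γ - 1) / 2) := by
  have := psx_A_pos hK hγ
  rw [etaP, mul_div_mul_left _ _ two_ne_zero, mul_div_cancel_left₀ _ this.ne']

lemma psx_tau_eta (hK : 0 < K) (hγ : 1 < γ) {τ : ℝ} (h : 0 < τ) : psxTau K γ (2 * etaP K γ τ) = τ := by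
  rw [psxTau, psx_eta_div hK hγ, ← Real.rpow_mul h.le]
  have : γ - 1 ≠ 0 := by linarith
  rw [show -(γ - 1) / 2 * (-2 / (γ - 1)) = 1 by field_simp, Real.rpow_one]

lemma psx_C_eta (hK : 0 < K) (hγ : 1 < γ) {τ : ℝ} (h : 0 < τ) :
    psxC K γ (2 * etaP K γ τ) = soundP K γ τ := by
  rw [psxC, psx_eta_div hK hγ, ← Real.rpow_mul h.le, soundP]
  have : γ - 1 ≠ 0 := by linarith
  rw [show -(γ - 1) / 2 * ((γ + 1) / (γ - 1)) = -(γ + 1) / 2 by field_simp]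

lemma psx_eta_tau (hK : 0 < K) (hγ : 1 < γ) {σ : ℝ} (h : 0 < σ) : 2 * etaP K γ (psxTau K γ σ) = σ := by
  have hA := psx_A_pos hK hγ
  have : γ - 1 ≠ 0 := by linarith
  rw [psxTau, etaP, ← Real.rpow_mul (by positivity),
    show -2 / (γ - 1) * (-(γ - 1) / 2) = 1 by field_simp, Real.rpow_one]
  field_simp

lemma psx_sound_tau (hK : 0 < K) (hγ : 1 < γ) {σ : ℝ} (h : 0 < σ) :
    soundP K γ (psxTau K γ σ) = psxC K γ σ := by
  rw [← psx_C_eta hK hγ (psx_tau_pos hK hγ h), psx_eta_tau hK hγ h]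

lemma psx_d_eta (hγ : 1 < γ) {τ : ℝ} (h : 0 < τ) : HasDerivAt (etaP K γ) (-soundP K γ τ) τ := by
  have : γ - 1 ≠ 0 := by linarith
  refine ((Real.hasDerivAt_rpow_const (p := -(γ - 1) / 2) (Or.inl h.ne')).const_mul
    (2 * Real.sqrt (K * γ) / (γ - 1))).congr_deriv ?_
  rw [soundP, show -(γ - 1) / 2 - 1 = -(γ + 1) / 2 by ring]
  field_simp

lemma psx_d_tau (hK : 0 < K) (hγ : 1 < γ) {σ : ℝ} (h : 0 < σ) :
    HasDerivAt (psxTau K γ) (-(1 / (2 * psxC K γ σ))) σ := by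
  have h1 : γ - 1 ≠ 0 := by linarith
  have hA := psx_A_pos hK hγ
  have hq := psx_q_pos hK hγ
  set D := 2 * (2 * Real.sqrt (K * γ) / (γ - 1)) with hD
  have hDp : 0 < D := by positivity
  have hb : 0 < σ / D := by positivity
  refine (((hasDerivAt_id σ).div_const D).rpow_const (p := -2 / (γ - 1)) (Or.inl hb.ne')).congr_deriv ?_
  rw [psxC, ← hD, id, show -2 / (γ - 1) - 1 = -((γ + 1) / (γ - 1)) by field_simp; ring,
    Real.rpow_neg hb.le]
  have := Real.rpow_pos_of_pos hb ((γ + 1) / (γ - 1))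
  generalize (σ / D) ^ ((γ + 1) / (γ - 1)) = X at *
  rw [hD]
  field_simp

lemma psx_d_C (hK : 0 < K) (hγ : 1 < γ) {σ : ℝ} (h : 0 < σ) :
    HasDerivAt (psxC K γ) ((γ + 1) / (γ - 1) / σ * psxC K γ σ) σ := by
  have h1 : γ - 1 ≠ 0 := by linarith
  have hA := psx_A_pos hK hγ
  set D := 2 * (2 * Real.sqrt (K * γ) / (γ - 1)) with hD
  have hDp : 0 < D := by positivity
  have hb : 0 < σ / D := by positivity
  refine ((((hasDerivAt_id σ).div_const D).rpow_const (p := (γ + 1) / (γ - 1)) (Or.inl hb.ne')).const_mul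
    (Real.sqrt (K * γ))).congr_deriv ?_
  rw [psxC, ← hD, id, Real.rpow_sub_one hb.ne']
  field_simp

lemma psx_d_p (hK : 0 < K) (hγ : 1 < γ) {τ : ℝ} (h : 0 < τ) :
    HasDerivAt (fun y => K * y ^ (-γ)) (-(soundP K γ τ * soundP K γ τ)) τ := by
  refine ((Real.hasDerivAt_rpow_const (p := -γ) (Or.inl h.ne')).const_mul K).congr_deriv ?_
  have e : soundP K γ τ * soundP K γ τ = (Real.sqrt (K * γ) * Real.sqrt (K * γ)) *
      (τ ^ (-(γ + 1) / 2) * τ ^ (-(γ + 1) / 2)) := by rw [soundP]; ring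
  rw [e, Real.mul_self_sqrt (mul_pos hK (by linarith)).le, ← Real.rpow_add h,
    show -(γ + 1) / 2 + -(γ + 1) / 2 = -γ - 1 by ring]
  ring

lemma psx_C_mono (hK : 0 < K) (hγ : 1 < γ) : MonotoneOn (psxC K γ) (Ioi 0) := by
  intro a ha b hb hab
  have hA := psx_A_pos hK hγ
  have h1 : 0 < γ - 1 := by linarith
  have ha' : (0:ℝ) < a := ha
  unfold psxC
  gcongr

lemma psx_C_cont (hK : 0 < K) (hγ : 1 < γ) :
    ContinuousOn (fun σ => (γ + 1) / (γ - 1) / σ * psxC K γ σ) (Ioi 0) := by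
  refine ContinuousOn.mul (ContinuousOn.div continuousOn_const continuousOn_id fun x hx => (ne_of_gt hx)) ?_
  exact fun x hx => (psx_d_C hK hγ hx).continuousAt.continuousWithinAt

lemma psx_sound_cont : ContinuousOn (soundP K γ) (Ioi 0) := by
  unfold soundP
  exact continuousOn_const.mul (continuousOn_id.rpow_const fun x hx => Or.inl (ne_of_gt hx))

lemma psx_lf_eta (f : ℝ × ℝ →L[ℝ] ℝ) : f = psxLf (f (1, 0)) (f (0, 1)) := by
  ext <;> simp

lemma psx_to_RS (hK : 0 < K) (hγ : 1 < γ) {T : ℝ} (hT : 0 < T) {τ u : ℝ → ℝ → ℝ}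
    (h : PSysSol K γ (Ico 0 T) 1 τ u) :
    psxRS (psxC K γ) T (fun p => u p.1 p.2 + etaP K γ (τ p.1 p.2))
      (fun p => u p.1 p.2 - etaP K γ (τ p.1 p.2)) := by
  obtain ⟨hpos, cτ, cu, e1, e2⟩ := h
  set D : Set (ℝ × ℝ) := univ ×ˢ Ico 0 T with hD
  have uD : UniqueDiffOn ℝ D := uniqueDiffOn_univ.prod (uniqueDiffOn_Ico 0 T)
  have pos' : ∀ p ∈ D, 0 < τ p.1 p.2 := fun p hp => hpos _ _ hp.2
  have ceta : ContinuousOn (fun p : ℝ × ℝ => etaP K γ (τ p.1 p.2)) D := fun p hp =>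
    ContinuousAt.comp_continuousWithinAt (f := fun p : ℝ × ℝ => τ p.1 p.2)
      (psx_d_eta hγ (pos' p hp)).continuousAt (cτ.continuousOn p hp)
  have csnd : ContinuousOn (fun p : ℝ × ℝ => soundP K γ (τ p.1 p.2)) D :=
    psx_sound_cont.comp cτ.continuousOn pos'
  have cτx : ContinuousOn (fun p => fderivWithin ℝ (fun p : ℝ × ℝ => τ p.1 p.2) D p (1, 0)) D :=
    (cτ.continuousOn_fderivWithin uD (by simp)).clm_apply continuousOn_const
  have cux : ContinuousOn (fun p => fderivWithin ℝ (fun p : ℝ × ℝ => u p.1 p.2) D p (1, 0)) D :=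
    (cu.continuousOn_fderivWithin uD (by simp)).clm_apply continuousOn_const
  refine ⟨cu.continuousOn.add ceta, cu.continuousOn.sub ceta, fun p hp => ?_, _, _,
    cux.sub (csnd.mul cτx), cux.add (csnd.mul cτx), fun p hp => ?_⟩
  · have := psx_eta_pos hK hγ (pos' p ⟨trivial, hp⟩)
    simp only; linarith
  · have hpD : p ∈ D := ⟨trivial, hp.1.le, hp.2⟩
    have nD : D ∈ 𝓝 p := prod_mem_nhds univ_mem (Ico_mem_nhds hp.1 hp.2)
    have hτp := pos' p hpD
    have dτ := ((cτ.differentiableOn (by simp) p hpD).differentiableAt nD).hasFDerivAt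
    have du := ((cu.differentiableOn (by simp) p hpD).differentiableAt nD).hasFDerivAt
    simp only [Pi.sub_apply, Pi.add_apply, Pi.mul_apply]
    rw [fderivWithin_of_mem_nhds nD, fderivWithin_of_mem_nhds nD]
    rw [psx_lf_eta (fderiv ℝ (fun p : ℝ × ℝ => τ p.1 p.2) p)] at dτ
    rw [psx_lf_eta (fderiv ℝ (fun p : ℝ × ℝ => u p.1 p.2) p)] at du
    generalize (fderiv ℝ (fun p : ℝ × ℝ => τ p.1 p.2) p) (1, 0) = τx at *
    generalize (fderiv ℝ (fun p : ℝ × ℝ => τ p.1 p.2) p) (0, 1) = τt at *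
    generalize (fderiv ℝ (fun p : ℝ × ℝ => u p.1 p.2) p) (1, 0) = ux at *
    generalize (fderiv ℝ (fun p : ℝ × ℝ => u p.1 p.2) p) (0, 1) = ut at *
    have E1 := e1 p.1 p.2 ⟨hp.1.le, hp.2⟩
    have E2 := e2 p.1 p.2 ⟨hp.1.le, hp.2⟩
    have q1 : deriv (fun t' => τ p.1 t') p.2 = τt := (psx_partial2 (x := p.1) (y := p.2) dτ).deriv
    have q2 : deriv (fun x' => u x' p.2) p.1 = ux := (psx_partial1 (x := p.1) (y := p.2) du).deriv
    have q3 : deriv (fun t' => u p.1 t') p.2 = ut := (psx_partial2 (x := p.1) (y := p.2) du).deriv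
    have q4 : deriv (fun x' => K * τ x' p.2 ^ (-γ)) p.1 = -(soundP K γ (τ p.1 p.2) * soundP K γ (τ p.1 p.2)) * τx :=
      (HasDerivAt.comp (h₂ := fun y => K * y ^ (-γ)) (h := fun x' => τ x' p.2) p.1 (psx_d_p hK hγ hτp) (psx_partial1 (x := p.1) (y := p.2) dτ)).deriv
    rw [q1, q2] at E1
    rw [q3, q4] at E2
    have hτt : τt = ux := by linarith
    have hut : ut = soundP K γ (τ p.1 p.2) * soundP K γ (τ p.1 p.2) * τx := by linarith
    have dη := HasDerivAt.comp_hasFDerivAt (f := fun p : ℝ × ℝ => τ p.1 p.2) p (psx_d_eta (K := K) hγ hτp) dτ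
    have hσ : u p.1 p.2 + etaP K γ (τ p.1 p.2) - (u p.1 p.2 - etaP K γ (τ p.1 p.2)) =
      2 * etaP K γ (τ p.1 p.2) := by ring
    simp only [hσ, psx_C_eta hK hγ hτp]
    subst hτt hut
    constructor
    · refine (du.add dη).congr_fderiv ?_
      ext <;> simp <;> ring
    · refine (du.sub dη).congr_fderiv ?_
      ext <;> simp <;> ring

lemma psx_of_RS (hK : 0 < K) (hγ : 1 < γ) {T : ℝ} {s r : ℝ × ℝ → ℝ}
    (cs : ContDiff ℝ 1 s) (cr : ContDiff ℝ 1 r)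
    (hlt : ∀ p : ℝ × ℝ, p.2 ∈ Ico 0 T → r p < s p)
    (hd : ∀ p : ℝ × ℝ, p.2 ∈ Ico 0 T → ∃ sx rx : ℝ,
      HasFDerivAt s (psxLf sx (-(psxC K γ (s p - r p) * sx))) p ∧
      HasFDerivAt r (psxLf rx (psxC K γ (s p - r p) * rx)) p) :
    PSysSol K γ (Ico 0 T) 1 (fun x t => psxTau K γ (s (x, t) - r (x, t)))
      (fun x t => (s (x, t) + r (x, t)) / 2) := by
  have hA := psx_A_pos hK hγ
  have key : ∀ x : ℝ, ∀ t ∈ Ico 0 T, ∃ τx ux : ℝ,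
      HasFDerivAt (fun p => psxTau K γ (s p - r p)) (psxLf τx ux) (x, t) ∧
      HasFDerivAt (fun p => (s p + r p) / 2) (psxLf ux (psxC K γ (s (x, t) - r (x, t)) *
        psxC K γ (s (x, t) - r (x, t)) * τx)) (x, t) := by
    intro x t ht
    obtain ⟨sx, rx, ds, dr⟩ := hd (x, t) ht
    have hσ : 0 < s (x, t) - r (x, t) := sub_pos.2 (hlt (x, t) ht)
    have hc := psx_C_pos hK hγ hσ
    set c := psxC K γ (s (x, t) - r (x, t)) with hcdef
    refine ⟨-(sx - rx) / (2 * c), (sx + rx) / 2, ?_, ?_⟩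
    · have := HasDerivAt.comp_hasFDerivAt (f := fun p => s p - r p) (x, t) (psx_d_tau hK hγ hσ) (ds.sub dr)
      refine this.congr_fderiv ?_
      rw [← hcdef]
      ext
      · simp; field_simp; ring
      · simp; field_simp; ring
    · refine ((ds.add dr).mul_const (1 / 2)).congr_fderiv ?_ |>.congr_of_eventuallyEq ?_
      · ext
        · simp; ring
        · simp; field_simp; ring
      · exact Eventually.of_forall fun p => by simp; ring
  refine ⟨fun x t ht => psx_tau_pos hK hγ (sub_pos.2 (hlt (x, t) ht)), ?_, ?_, ?_, ?_⟩
  · show ContDiffOn ℝ _ (fun p : ℝ × ℝ => psxTau K γ (s p - r p)) _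
    unfold psxTau
    refine ContDiffOn.rpow_const_of_ne ?_ ?_
    · exact ((cs.sub cr).div_const _).contDiffOn
    · intro p hp
      have := sub_pos.2 (hlt p hp.2)
      positivity
  · exact ((cs.add cr).div_const 2).contDiffOn
  · intro x t ht
    obtain ⟨τx, ux, d1, d2⟩ := key x t ht
    rw [(psx_partial2 d1).deriv, (psx_partial1 d2).deriv, sub_self]
  · intro x t ht
    obtain ⟨τx, ux, d1, d2⟩ := key x t ht
    have hσ : 0 < s (x, t) - r (x, t) := sub_pos.2 (hlt (x, t) ht)
    have q4 : deriv (fun x' => K * psxTau K γ (s (x', t) - r (x', t)) ^ (-γ)) x =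
        -(soundP K γ (psxTau K γ (s (x, t) - r (x, t))) * soundP K γ (psxTau K γ (s (x, t) - r (x, t)))) * τx :=
      (HasDerivAt.comp (h₂ := fun y => K * y ^ (-γ)) (h := fun x' => psxTau K γ (s (x', t) - r (x', t))) x
        (psx_d_p hK hγ (psx_tau_pos hK hγ hσ)) (psx_partial1 d1)).deriv
    rw [(psx_partial2 d2).deriv, q4, psx_sound_tau hK hγ hσ]
    ring

end

lemma psx_cutoff {K γ : ℝ} (hK : 0 < K) (hγ : 1 < γ) {ε : ℝ} (hε : 0 < ε) :
    ∃ Ce : ℝ → ℝ, (∀ σ, 0 < Ce σ) ∧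
      (∀ σ, HasDerivAt Ce (2 * ((γ + 1) / (γ - 1) / (2 * max σ ε)) * Ce σ) σ) ∧
      ∀ σ, ε ≤ σ → Ce σ = psxC K γ σ := by
  have cf : Continuous fun y : ℝ => 1 / max y ε :=
    continuous_const.div (continuous_id.max continuous_const) fun y => (lt_max_of_lt_right hε).ne'
  set l : ℝ → ℝ := fun σ => ∫ y in ε..σ, 1 / max y ε with hl
  have dl : ∀ σ, HasDerivAt l (1 / max σ ε) σ := fun σ =>
    intervalIntegral.integral_hasDerivAt_right (cf.intervalIntegrable _ _)
      (cf.stronglyMeasurableAtFilter _ _) cf.continuousAt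
  refine ⟨fun σ => psxC K γ ε * Real.exp ((γ + 1) / (γ - 1) * l σ),
    fun σ => mul_pos (psx_C_pos hK hγ hε) (Real.exp_pos _), fun σ => ?_, fun σ hσ => ?_⟩
  · refine ((((dl σ).const_mul ((γ + 1) / (γ - 1))).exp).const_mul (psxC K γ ε)).congr_deriv ?_
    have : 0 < max σ ε := lt_max_of_lt_right hε
    field_simp
  · have hσ0 : 0 < σ := hε.trans_le hσ
    have e : l σ = Real.log (σ / ε) := by
      rw [hl, ← integral_one_div_of_pos hε hσ0]
      refine intervalIntegral.integral_congr fun y hy => ?_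
      rw [uIcc_of_le hσ] at hy
      simp only [max_eq_left hy.1]
    have hA := psx_A_pos hK hγ
    simp only [e]
    rw [mul_comm ((γ + 1) / (γ - 1)), ← Real.rpow_def_of_pos (by positivity), psxC, psxC, mul_assoc,
      ← Real.mul_rpow (by positivity) (by positivity)]
    congr 2
    field_simp

lemma psx_eta_anti {K γ : ℝ} (hK : 0 < K) (hγ : 1 < γ) {a b : ℝ} (ha : 0 < a) (hab : a ≤ b) :
    etaP K γ b ≤ etaP K γ a := by
  unfold etaP
  exact mul_le_mul_of_nonneg_left (Real.rpow_le_rpow_of_nonpos ha hab (by linarith)) (psx_A_pos hK hγ).le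

lemma psx_sound_anti {K γ : ℝ} (hK : 0 < K) (hγ : 1 < γ) {a b : ℝ} (ha : 0 < a) (hab : a ≤ b) :
    soundP K γ b ≤ soundP K γ a := by
  unfold soundP
  exact mul_le_mul_of_nonneg_left (Real.rpow_le_rpow_of_nonpos ha hab (by linarith)) (psx_q_pos hK hγ).le

lemma psx_eta_lt {K γ : ℝ} (hK : 0 < K) (hγ : 1 < γ) {a b : ℝ} (ha : 0 < a) (hab : a < b) :
    etaP K γ b < etaP K γ a := by
  unfold etaP
  exact mul_lt_mul_of_pos_left (Real.rpow_lt_rpow_of_neg ha hab (by linarith)) (psx_A_pos hK hγ)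

lemma psx_exist_T {K₁ γ M₁ M₂ : ℝ} (hK : 0 < K₁) (hγ : 1 < γ) {τ₀ u₀ : ℝ → ℝ}
    (hA : AssumptionA M₁ M₂ τ₀ u₀)
    (hrar : ∀ x, 0 ≤ deriv (fun x' => u₀ x' + etaP K₁ γ (τ₀ x')) x
              ∧ 0 ≤ deriv (fun x' => u₀ x' - etaP K₁ γ (τ₀ x')) x) {T : ℝ} (hT : 0 < T) :
    ∃ τ u : ℝ → ℝ → ℝ,
      PSysSol K₁ γ (Ico 0 T) 1 τ u ∧ (∀ x, τ x 0 = τ₀ x) ∧ (∀ x, u x 0 = u₀ x) := by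
  obtain ⟨cτ, cu, hM₁, hM₂, hb, hlow⟩ := hA
  have τpos : ∀ x, 0 < τ₀ x := fun x => hM₂.trans_le (hlow x)
  have dτ : ∀ x, HasDerivAt τ₀ (deriv τ₀ x) x := fun x =>
    ((cτ.differentiable (by simp)) x).hasDerivAt
  have du : ∀ x, HasDerivAt u₀ (deriv u₀ x) x := fun x =>
    ((cu.differentiable (by simp)) x).hasDerivAt
  have cτ' : Continuous (deriv τ₀) := cτ.continuous_deriv (by simp)
  have cu' : Continuous (deriv u₀) := cu.continuous_deriv (by simp)
  have dη : ∀ x, HasDerivAt (fun x => etaP K₁ γ (τ₀ x)) (-soundP K₁ γ (τ₀ x) * deriv τ₀ x) x := fun x =>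
    (psx_d_eta hγ (τpos x)).comp x (dτ x)
  have b1 : ∀ x, τ₀ x ≤ M₁ := fun x => by
    have := hb x
    linarith [le_abs_self (τ₀ x), abs_nonneg (deriv τ₀ x), abs_nonneg (u₀ x), abs_nonneg (deriv u₀ x)]
  have b2 : ∀ x, |deriv τ₀ x| ≤ M₁ := fun x => by
    have := hb x
    linarith [abs_nonneg (τ₀ x), abs_nonneg (deriv τ₀ x), abs_nonneg (u₀ x), abs_nonneg (deriv u₀ x)]
  have b3 : ∀ x, |u₀ x| ≤ M₁ := fun x => by
    have := hb x
    linarith [abs_nonneg (τ₀ x), abs_nonneg (deriv τ₀ x), abs_nonneg (u₀ x), abs_nonneg (deriv u₀ x)]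
  have b4 : ∀ x, |deriv u₀ x| ≤ M₁ := fun x => by
    have := hb x
    linarith [abs_nonneg (τ₀ x), abs_nonneg (deriv τ₀ x), abs_nonneg (u₀ x), abs_nonneg (deriv u₀ x)]
  have csnd : Continuous fun x => soundP K₁ γ (τ₀ x) :=
    psx_sound_cont.comp_continuous cτ.continuous τpos
  set M := M₁ + soundP K₁ γ M₂ * M₁ with hM
  have hsM := psx_sound_pos hK hγ hM₂
  have hMpos : 0 < M := by positivity
  have b5 : ∀ x, |soundP K₁ γ (τ₀ x) * deriv τ₀ x| ≤ soundP K₁ γ M₂ * M₁ := fun x => by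
    rw [abs_mul, abs_of_pos (psx_sound_pos hK hγ (τpos x))]
    exact mul_le_mul (psx_sound_anti hK hγ hM₂ (hlow x)) (b2 x) (abs_nonneg _) hsM.le
  set s₀ : ℝ → ℝ := fun x => u₀ x + etaP K₁ γ (τ₀ x) with hs₀
  set r₀ : ℝ → ℝ := fun x => u₀ x - etaP K₁ γ (τ₀ x) with hr₀
  have ds : ∀ x, HasDerivAt s₀ (deriv u₀ x + -soundP K₁ γ (τ₀ x) * deriv τ₀ x) x := fun x =>
    (du x).add (dη x)
  have dr : ∀ x, HasDerivAt r₀ (deriv u₀ x - -soundP K₁ γ (τ₀ x) * deriv τ₀ x) x := fun x =>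
    (du x).sub (dη x)
  -- the cutoff
  set Z := M₁ + M * T + 1 with hZ
  have hZpos : 0 < Z := by positivity
  set ε := 2 * etaP K₁ γ Z with hεd
  have hε : 0 < ε := mul_pos two_pos (psx_eta_pos hK hγ hZpos)
  obtain ⟨Ce, Ce0, dCe, Ceq⟩ := psx_cutoff hK hγ hε
  have hθ : 0 < (γ + 1) / (γ - 1) := div_pos (by linarith) (by linarith)
  have mx : ∀ σ : ℝ, 0 < max σ ε := fun σ => lt_max_of_lt_right hε
  have Cmono : Monotone Ce := by
    refine monotone_of_deriv_nonneg (fun σ => (dCe σ).differentiableAt) fun σ => ?_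
    rw [(dCe σ).deriv]
    have := mx σ
    have := Ce0 σ
    positivity
  set N := 2 * M₁ + 2 * etaP K₁ γ M₂ with hN
  have rng : ∀ a b, -N ≤ s₀ a - r₀ b ∧ s₀ a - r₀ b ≤ N := by
    intro a b
    have h1 := abs_le.1 (b3 a)
    have h2 := abs_le.1 (b3 b)
    have h3 := psx_eta_anti hK hγ hM₂ (hlow a)
    have h4 := psx_eta_anti hK hγ hM₂ (hlow b)
    have h5 := psx_eta_pos hK hγ (τpos a)
    have h6 := psx_eta_pos hK hγ (τpos b)
    simp only [hs₀, hr₀]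
    constructor <;> linarith
  obtain ⟨s, r, cs, cr, init, hd⟩ := psx_abstract_existence Ce
    (fun σ => (γ + 1) / (γ - 1) / (2 * max σ ε)) s₀ r₀
    (fun x => deriv u₀ x + -soundP K₁ γ (τ₀ x) * deriv τ₀ x)
    (fun x => deriv u₀ x - -soundP K₁ γ (τ₀ x) * deriv τ₀ x)
    ((γ + 1) / (γ - 1) / (2 * ε)) M (Ce (-N)) (Ce N) (Ce0 _) dCe
    (continuous_const.div (by fun_prop) fun σ => (mul_pos two_pos (mx σ)).ne')
    (fun σ => by have := mx σ; positivity)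
    (fun σ => by
      have := le_max_right σ ε
      gcongr)
    ds dr (by fun_prop) (by fun_prop)
    (fun x => by rw [← (ds x).deriv]; exact (hrar x).1)
    (fun x => by
      have h1 := abs_le.1 (b5 x); have h2 := abs_le.1 (b4 x)
      simp only [hM]; linarith)
    (fun x => by rw [← (dr x).deriv]; exact (hrar x).2)
    (fun x => by
      have h1 := abs_le.1 (b5 x); have h2 := abs_le.1 (b4 x)
      simp only [hM]; linarith)
    (fun a b => Cmono (rng a b).1) (fun a b => Cmono (rng a b).2)
  -- the auxiliary function
  have cCe : Continuous Ce := continuous_iff_continuousAt.2 fun σ => (dCe σ).continuousAt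
  have cf : Continuous fun y : ℝ => 1 / (2 * Ce y) :=
    continuous_const.div (by fun_prop) fun y => (mul_pos two_pos (Ce0 y)).ne'
  set G : ℝ → ℝ := fun σ => ∫ y in ε..σ, 1 / (2 * Ce y) with hG
  have dG : ∀ σ, HasDerivAt G (1 / (2 * Ce σ)) σ := fun σ =>
    intervalIntegral.integral_hasDerivAt_right (cf.intervalIntegrable _ _)
      (cf.stronglyMeasurableAtFilter _ _) cf.continuousAt
  have Gmono : StrictMono G := by
    refine strictMono_of_deriv_pos fun σ => ?_
    rw [(dG σ).deriv]
    have := Ce0 σ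
    positivity
  have Gε : G ε = 0 := intervalIntegral.integral_same
  have Gτ : ∀ σ, ε ≤ σ → G σ = psxTau K₁ γ ε - psxTau K₁ γ σ := by
    intro σ hσ
    have := intervalIntegral.integral_eq_sub_of_hasDerivAt (f := fun y => -psxTau K₁ γ y)
      (f' := fun y => 1 / (2 * Ce y)) (a := ε) (b := σ) (fun y hy => by
        rw [uIcc_of_le hσ] at hy
        refine (psx_d_tau hK hγ (hε.trans_le hy.1)).neg.congr_deriv ?_
        rw [Ceq y hy.1, neg_neg]) (cf.intervalIntegrable _ _)
    show ∫ y in ε..σ, 1 / (2 * Ce y) = _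
    rw [this]; ring
  have hτε : psxTau K₁ γ ε = Z := psx_tau_eta hK hγ hZpos
  have σ0 : ∀ x, s (x, 0) - r (x, 0) = 2 * etaP K₁ γ (τ₀ x) := fun x => by
    rw [(init x).1, (init x).2]; simp only [hs₀, hr₀]; ring
  have low : ∀ x t, 0 ≤ t → t < T → ε ≤ s (x, t) - r (x, t) := by
    intro x t h0 h1
    have dφ : ∀ y, 0 ≤ y → ∃ d, 0 ≤ d ∧
        HasDerivAt (fun y => G (s (x, y) - r (x, y)) + M * y) d y := by
      intro y hy
      obtain ⟨sx, rx, hsx, hrx, d1, d2⟩ := hd (x, y) hy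
      refine ⟨_, ?_, (HasDerivAt.comp (h := fun y => s (x, y) - r (x, y)) y (dG _)
        ((psx_partial2 d1).sub (psx_partial2 d2))).add ((hasDerivAt_id y).const_mul M)⟩
      have hc := Ce0 (s (x, y) - r (x, y))
      have : 1 / (2 * Ce (s (x, y) - r (x, y))) *
        (-(Ce (s (x, y) - r (x, y)) * sx) - Ce (s (x, y) - r (x, y)) * rx) + M * 1 =
          M - (sx + rx) / 2 := by field_simp; ring
      rw [this]; linarith
    have mono : MonotoneOn (fun y => G (s (x, y) - r (x, y)) + M * y) (Icc 0 t) := by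
      refine monotoneOn_of_deriv_nonneg (convex_Icc 0 t) (fun y hy => ?_) (fun y hy => ?_) fun y hy => ?_
      · obtain ⟨d, _, h⟩ := dφ y hy.1
        exact h.continuousAt.continuousWithinAt
      · rw [interior_Icc] at hy
        obtain ⟨d, _, h⟩ := dφ y hy.1.le
        exact h.differentiableAt.differentiableWithinAt
      · rw [interior_Icc] at hy
        obtain ⟨d, h2, h⟩ := dφ y hy.1.le
        rw [h.deriv]; exact h2
    have h2 := mono ⟨le_rfl, h0⟩ ⟨h0, le_rfl⟩ h0
    simp only [σ0] at h2
    have hMT : M * t ≤ M * T := by gcongr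
    have hMT0 : 0 < M * T := by positivity
    have h3 : ε ≤ 2 * etaP K₁ γ (τ₀ x) := by
      have := psx_eta_anti hK hγ (τpos x) (show τ₀ x ≤ Z by linarith [b1 x])
      linarith
    rw [Gτ _ h3, hτε, psx_tau_eta hK hγ (τpos x)] at h2
    refine Gmono.le_iff_le.1 ?_
    rw [Gε]
    linarith [b1 x]
  refine ⟨_, _, psx_of_RS hK hγ (T := T) cs cr (fun p hp => ?_) (fun p hp => ?_), fun x => ?_, fun x => ?_⟩
  · have := low p.1 p.2 hp.1 hp.2
    exact sub_pos.1 (hε.trans_le this)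
  · obtain ⟨sx, rx, _, _, d1, d2⟩ := hd p hp.1
    have := Ceq _ (low p.1 p.2 hp.1 hp.2)
    simp only [Prod.mk.eta] at this
    rw [this] at d1 d2
    exact ⟨sx, rx, d1, d2⟩
  · simp only [σ0]
    exact psx_tau_eta hK hγ (τpos x)
  · simp only [(init x).1, (init x).2, hs₀, hr₀]
    ring

lemma psx_PS_mono {K γ : ℝ} {I J : Set ℝ} {τ u : ℝ → ℝ → ℝ} (hIJ : I ⊆ J)
    (h : PSysSol K γ J 1 τ u) : PSysSol K γ I 1 τ u := by
  obtain ⟨h1, h2, h3, h4, h5⟩ := h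
  exact ⟨fun x t ht => h1 x t (hIJ ht), h2.mono (prod_mono le_rfl hIJ), h3.mono (prod_mono le_rfl hIJ),
    fun x t ht => h4 x t (hIJ ht), fun x t ht => h5 x t (hIJ ht)⟩

lemma psx_PS_uniq {K₁ γ M₁ M₂ : ℝ} (hK : 0 < K₁) (hγ : 1 < γ) {τ₀ u₀ : ℝ → ℝ}
    (hA : AssumptionA M₁ M₂ τ₀ u₀) {T : ℝ} (hT : 0 < T) {τ u τ' u' : ℝ → ℝ → ℝ}
    (h : PSysSol K₁ γ (Ico 0 T) 1 τ u) (hτ : ∀ x, τ x 0 = τ₀ x) (hu : ∀ x, u x 0 = u₀ x)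
    (h' : PSysSol K₁ γ (Ico 0 T) 1 τ' u') (hτ' : ∀ x, τ' x 0 = τ₀ x) (hu' : ∀ x, u' x 0 = u₀ x)
    (x t : ℝ) (h0 : 0 ≤ t) (h1 : t < T) : τ x t = τ' x t ∧ u x t = u' x t := by
  obtain ⟨cτ, cu, hM₁, hM₂, hb, hlow⟩ := hA
  have b3 : ∀ x, |u₀ x| ≤ M₁ := fun x => by
    have := hb x
    linarith [abs_nonneg (τ₀ x), abs_nonneg (deriv τ₀ x), abs_nonneg (u₀ x), abs_nonneg (deriv u₀ x)]
  have hE := psx_eta_pos hK hγ hM₂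
  have key := psx_uniq (fun σ hσ => (psx_C_pos hK hγ hσ).le) (psx_C_mono hK hγ)
    (fun σ hσ => psx_d_C hK hγ hσ) (psx_C_cont hK hγ) (psx_to_RS hK hγ hT h) (psx_to_RS hK hγ hT h')
    (M₁ + etaP K₁ γ M₂) (-(M₁ + etaP K₁ γ M₂)) (by linarith)
    (fun y => by
      simp only [hτ, hu]
      linarith [psx_eta_anti hK hγ hM₂ (hlow y), (abs_le.1 (b3 y)).2])
    (fun y => by
      simp only [hτ, hu]
      linarith [psx_eta_anti hK hγ hM₂ (hlow y), (abs_le.1 (b3 y)).1])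
    (fun y => by simp only [hτ, hu, hτ', hu']) (fun y => by simp only [hτ, hu, hτ', hu']) x t h0 h1
  simp only at key
  obtain ⟨k1, k2⟩ := key
  refine ⟨?_, by linarith⟩
  have e : etaP K₁ γ (τ x t) = etaP K₁ γ (τ' x t) := by linarith
  rw [← psx_tau_eta hK hγ (h.1 x t ⟨h0, h1⟩), e, psx_tau_eta hK hγ (h'.1 x t ⟨h0, h1⟩)]

lemma psx_patch {K γ : ℝ} {τs us : ℕ → ℝ → ℝ → ℝ}
    (h : ∀ n : ℕ, PSysSol K γ (Ico 0 ((n : ℝ) + 1)) 1 (τs n) (us n))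
    (ag : ∀ (n m : ℕ) (x t : ℝ), 0 ≤ t → t < n + 1 → t < m + 1 →
      τs n x t = τs m x t ∧ us n x t = us m x t) :
    PSysSol K γ (Ici 0) 1 (fun x t => τs (⌊t⌋₊ + 1) x t) (fun x t => us (⌊t⌋₊ + 1) x t) := by
  have fl : ∀ t : ℝ, t < ((⌊t⌋₊ + 1 : ℕ) : ℝ) + 1 := fun t => by
    have := Nat.lt_floor_add_one t
    push_cast
    linarith
  have loc : ∀ t₀ : ℝ, 0 ≤ t₀ → ∀ᶠ t in 𝓝 t₀, ∀ x,
      τs (⌊t⌋₊ + 1) x t = τs (⌊t₀⌋₊ + 1) x t ∧ us (⌊t⌋₊ + 1) x t = us (⌊t₀⌋₊ + 1) x t := by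
    intro t₀ h0
    rcases h0.lt_or_eq with h0 | h0
    · filter_upwards [Ioo_mem_nhds h0 (fl t₀)] with t ht x
      exact ag _ _ x t ht.1.le (fl t) ht.2
    · subst h0
      filter_upwards [Iio_mem_nhds (zero_lt_one (α := ℝ))] with t ht x
      have e : ⌊t⌋₊ = 0 := Nat.floor_eq_zero.2 ht
      simp [e]
  have cd : ∀ (f : ℕ → ℝ → ℝ → ℝ), (∀ n : ℕ, ContDiffOn ℝ ((1 : ℕ) : WithTop ℕ∞) (fun p : ℝ × ℝ => f n p.1 p.2)
        (univ ×ˢ Ico 0 ((n : ℝ) + 1))) →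
      (∀ t₀ : ℝ, 0 ≤ t₀ → ∀ᶠ t in 𝓝 t₀, ∀ x, f (⌊t⌋₊ + 1) x t = f (⌊t₀⌋₊ + 1) x t) →
      ContDiffOn ℝ ((1 : ℕ) : WithTop ℕ∞) (fun p : ℝ × ℝ => f (⌊p.2⌋₊ + 1) p.1 p.2) (univ ×ˢ Ici 0) := by
    intro f hf hl p hp
    have hp2 : 0 ≤ p.2 := hp.2
    have h1 := hf (⌊p.2⌋₊ + 1) p ⟨trivial, hp2, fl p.2⟩
    have hmem : univ ×ˢ Ico 0 (((⌊p.2⌋₊ + 1 : ℕ) : ℝ) + 1) ∈ 𝓝[univ ×ˢ Ici (0:ℝ)] p := by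
      have : {q : ℝ × ℝ | q.2 < ((⌊p.2⌋₊ + 1 : ℕ) : ℝ) + 1} ∈ 𝓝 p :=
        (isOpen_lt continuous_snd continuous_const).mem_nhds (fl p.2)
      filter_upwards [mem_nhdsWithin_of_mem_nhds this, self_mem_nhdsWithin] with q h1 h2
      exact ⟨trivial, h2.2, h1⟩
    refine (h1.mono_of_mem_nhdsWithin hmem).congr_of_eventuallyEq ?_ rfl
    have h2 := (continuous_snd.tendsto p).eventually (hl p.2 hp2)
    filter_upwards [mem_nhdsWithin_of_mem_nhds h2] with q hq
    exact hq q.1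
  refine ⟨fun x t ht => (h _).1 x t ⟨ht, fl t⟩,
    cd τs (fun n => (h n).2.1) fun t₀ h0 => (loc t₀ h0).mono fun t ht x => (ht x).1,
    cd us (fun n => (h n).2.2.1) fun t₀ h0 => (loc t₀ h0).mono fun t ht x => (ht x).2, ?_, ?_⟩
  · intro x t ht
    have e : deriv (fun t' => τs (⌊t'⌋₊ + 1) x t') t = deriv (fun t' => τs (⌊t⌋₊ + 1) x t') t :=
      EventuallyEq.deriv_eq ((loc t ht).mono fun t' h => (h x).1)
    rw [e]
    exact (h (⌊t⌋₊ + 1)).2.2.2.1 x t ⟨ht, fl t⟩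
  · intro x t ht
    have e : deriv (fun t' => us (⌊t'⌋₊ + 1) x t') t = deriv (fun t' => us (⌊t⌋₊ + 1) x t') t :=
      EventuallyEq.deriv_eq ((loc t ht).mono fun t' h => (h x).2)
    rw [e]
    exact (h (⌊t⌋₊ + 1)).2.2.2.2 x t ⟨ht, fl t⟩


/-- Theorem 2.2 (sufficiency): for `γ > 1` and initial data satisfying Assumption A, if
`s_x(x,0) ≥ 0` and `r_x(x,0) ≥ 0` for all `x` (nowhere compressive data), then the Cauchy
problem for the p-system admits a unique global-in-time `C¹` solution on `ℝ × [0,∞)`. -/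
theorem psystem_global_existence_of_rarefaction
    (K₁ γ M₁ M₂ : ℝ) (hK₁ : 0 < K₁) (hγ : 1 < γ)
    (τ₀ u₀ : ℝ → ℝ) (hA : AssumptionA M₁ M₂ τ₀ u₀)
    (hrar : ∀ x, 0 ≤ deriv (fun x' => u₀ x' + etaP K₁ γ (τ₀ x')) x
              ∧ 0 ≤ deriv (fun x' => u₀ x' - etaP K₁ γ (τ₀ x')) x) :
    (∃ τ u : ℝ → ℝ → ℝ,
        PSysSol K₁ γ (Set.Ici 0) 1 τ u ∧ (∀ x, τ x 0 = τ₀ x) ∧ (∀ x, u x 0 = u₀ x)) ∧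
    (∀ τ u τ' u' : ℝ → ℝ → ℝ,
        PSysSol K₁ γ (Set.Ici 0) 1 τ u → (∀ x, τ x 0 = τ₀ x) → (∀ x, u x 0 = u₀ x) →
        PSysSol K₁ γ (Set.Ici 0) 1 τ' u' → (∀ x, τ' x 0 = τ₀ x) → (∀ x, u' x 0 = u₀ x) →
        ∀ x t : ℝ, 0 ≤ t → τ x t = τ' x t ∧ u x t = u' x t) := by
  constructor
  · have hpos : ∀ n : ℕ, (0 : ℝ) < (n : ℝ) + 1 := fun n => by positivity
    choose τs us hsol hτ hu using fun n : ℕ => psx_exist_T hK₁ hγ hA hrar (hpos n)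
    refine ⟨_, _, psx_patch hsol ?_, fun x => hτ _ x, fun x => hu _ x⟩
    intro n m x t h0 h1 h2
    have hT : (0 : ℝ) < min ((n : ℝ) + 1) ((m : ℝ) + 1) := lt_min (hpos n) (hpos m)
    exact psx_PS_uniq hK₁ hγ hA hT
      (psx_PS_mono (Ico_subset_Ico_right (min_le_left _ _)) (hsol n)) (hτ n) (hu n)
      (psx_PS_mono (Ico_subset_Ico_right (min_le_right _ _)) (hsol m)) (hτ m) (hu m) x t h0 (lt_min h1 h2)
  · intro τ u τ' u' h hτ hu h' hτ' hu' x t ht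
    exact psx_PS_uniq hK₁ hγ hA (show (0 : ℝ) < t + 1 by linarith)
      (psx_PS_mono Ico_subset_Ici_self h) hτ hu
      (psx_PS_mono Ico_subset_Ici_self h') hτ' hu' x t ht (by linarith)
end

section
/- (Lemma 2.10) Let p be a general pressure with p ∈ C³((0,∞)), p'(τ) < 0 and p''(τ) > 0 for all τ > 0, and let the initial data (τ₀,u₀) satisfy Assumption A. Then every C¹ solution (τ,u) of the p-system with pressure p on ℝ × [0,T) with this initial data satisfies y(x,t) ≤ Y and q(x,t) ≤ Q for all (x,t), where Y = max{0, sup_x y(x,0)} and Q = max{0, sup_x q(x,0)}. -/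
open Real Set MeasureTheory Filter

/-- A `Cᵏ` solution `(τ, u)` of the p-system with general pressure `p` on `ℝ × I`. -/
def GenPSysSol (p : ℝ → ℝ) (I : Set ℝ) (k : ℕ) (τ u : ℝ → ℝ → ℝ) : Prop :=
  (∀ x t, t ∈ I → 0 < τ x t) ∧
  ContDiffOn ℝ k (fun q : ℝ × ℝ => τ q.1 q.2) (Set.univ ×ˢ I) ∧
  ContDiffOn ℝ k (fun q : ℝ × ℝ => u q.1 q.2) (Set.univ ×ˢ I) ∧
  (∀ x : ℝ, ∀ t ∈ I, deriv (fun t' => τ x t') t - deriv (fun x' => u x' t) x = 0) ∧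
  (∀ x : ℝ, ∀ t ∈ I, deriv (fun t' => u x t') t + deriv (fun x' => p (τ x' t)) x = 0)

open scoped Topology

lemma ps_chain {F Fx Ft : ℝ → ℝ → ℝ} {T : ℝ}
    (hx : ∀ x t, HasDerivAt (fun x' => F x' t) (Fx x t) x)
    (ht : ∀ x, ∀ t ∈ Ioo 0 T, HasDerivAt (fun t' => F x t') (Ft x t) t)
    (cx : Continuous (fun p : ℝ × ℝ => Fx p.1 p.2))
    (ct : Continuous (fun p : ℝ × ℝ => Ft p.1 p.2))
    {X Θ : ℝ → ℝ} {v w s : ℝ} (hs : Θ s ∈ Ioo 0 T)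
    (hX : HasDerivAt X v s) (hΘ : HasDerivAt Θ w s) :
    HasDerivAt (fun s => F (X s) (Θ s)) (Fx (X s) (Θ s) * v + Ft (X s) (Θ s) * w) s := by
  have key := hasStrictFDerivAt_uncurry_coprod (𝕜 := ℝ) (u := (X s, Θ s)) (f := F)
    (f₁ := fun x t => (ContinuousLinearMap.toSpanSingleton ℝ (Fx x t)))
    (f₂ := fun x t => (ContinuousLinearMap.toSpanSingleton ℝ (Ft x t)))
    (Eventually.of_forall fun v => (hx v.1 v.2).hasFDerivAt)
    (by
      have : ∀ᶠ v : ℝ × ℝ in 𝓝 (X s, Θ s), v.2 ∈ Ioo 0 T :=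
        continuous_snd.continuousAt.eventually (isOpen_Ioo.mem_nhds hs)
      filter_upwards [this] with v hv
      exact (ht v.1 v.2 hv).hasFDerivAt)
    (by
      have : Continuous (fun p : ℝ × ℝ => (ContinuousLinearMap.toSpanSingleton ℝ (Fx p.1 p.2))) := by
        exact (ContinuousLinearMap.toSpanSingletonCLE (𝕜 := ℝ) (E := ℝ)).continuous.comp cx
      exact this.continuousAt)
    (by
      have : Continuous (fun p : ℝ × ℝ => (ContinuousLinearMap.toSpanSingleton ℝ (Ft p.1 p.2))) := by
        exact (ContinuousLinearMap.toSpanSingletonCLE (𝕜 := ℝ) (E := ℝ)).continuous.comp ct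
      exact this.continuousAt)
  have h2 := key.hasFDerivAt.comp_hasDerivAt s (hX.prodMk hΘ)
  have h3 : HasDerivAt (fun s => F (X s) (Θ s)) _ s := h2
  convert h3 using 1
  change _ = v • Fx (X s) (Θ s) + w • Ft (X s) (Θ s)
  simp only [smul_eq_mul]
  ring

lemma ps_slope_lt {f : ℝ → ℝ} {d k : ℝ} (hf : HasDerivAt f d 0) (hd : d < k) :
    ∀ᶠ η in 𝓝[>] (0 : ℝ), f η < f 0 + k * η := by
  have h := (hasDerivAt_iff_tendsto_slope.1 hf).mono_left
    (nhdsWithin_mono 0 (fun x (hx : x ∈ Ioi 0) => (ne_of_gt hx : x ≠ 0)))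
  filter_upwards [h.eventually (gt_mem_nhds hd), self_mem_nhdsWithin] with η h1 h2
  have h2' : 0 < η := h2
  rw [slope_def_field, sub_zero, div_lt_iff₀ h2'] at h1
  linarith

structure PCore (c dc h : ℝ → ℝ) (τ u τx ux : ℝ → ℝ → ℝ) (T : ℝ) : Prop where
  c_pos : ∀ v, 0 < v → 0 < c v
  c_der : ∀ v, 0 < v → HasDerivAt c (dc v) v
  dc_cont : ContinuousOn dc (Ioi 0)
  dc_np : ∀ v, 0 < v → dc v ≤ 0
  h_der : ∀ v, 0 < v → HasDerivAt h (c v) v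
  τ_pos : ∀ x t, 0 < τ x t
  τ_cont : Continuous (fun p : ℝ × ℝ => τ p.1 p.2)
  u_cont : Continuous (fun p : ℝ × ℝ => u p.1 p.2)
  τx_cont : Continuous (fun p : ℝ × ℝ => τx p.1 p.2)
  ux_cont : Continuous (fun p : ℝ × ℝ => ux p.1 p.2)
  τ_x : ∀ x t, HasDerivAt (fun x' => τ x' t) (τx x t) x
  u_x : ∀ x t, HasDerivAt (fun x' => u x' t) (ux x t) x
  τ_t : ∀ x, ∀ t ∈ Ioo 0 T, HasDerivAt (fun t' => τ x t') (ux x t) t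
  u_t : ∀ x, ∀ t ∈ Ioo 0 T, HasDerivAt (fun t' => u x t') (c (τ x t) ^ 2 * τx x t) t

namespace PCore

variable {c dc h : ℝ → ℝ} {τ u τx ux : ℝ → ℝ → ℝ} {T : ℝ}

lemma cτ_cont (H : PCore c dc h τ u τx ux T) :
    Continuous (fun p : ℝ × ℝ => c (τ p.1 p.2)) :=
  continuous_iff_continuousAt.2 fun p =>
    ((H.c_der _ (H.τ_pos p.1 p.2)).continuousAt).comp
      (f := fun p : ℝ × ℝ => τ p.1 p.2) H.τ_cont.continuousAt

lemma hτ_cont (H : PCore c dc h τ u τx ux T) :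
    Continuous (fun p : ℝ × ℝ => h (τ p.1 p.2)) :=
  continuous_iff_continuousAt.2 fun p =>
    ((H.h_der _ (H.τ_pos p.1 p.2)).continuousAt).comp
      (f := fun p : ℝ × ℝ => τ p.1 p.2) H.τ_cont.continuousAt

lemma dcτ_cont (H : PCore c dc h τ u τx ux T) :
    Continuous (fun p : ℝ × ℝ => dc (τ p.1 p.2)) :=
  continuous_iff_continuousAt.2 fun p =>
    ((H.dc_cont.continuousAt (Ioi_mem_nhds (H.τ_pos p.1 p.2)))).comp
      (f := fun p : ℝ × ℝ => τ p.1 p.2) H.τ_cont.continuousAt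

/-- derivative of `u + a h(τ)` along curves -/
lemma chain_s (H : PCore c dc h τ u τx ux T) (a : ℝ)
    {X Θ : ℝ → ℝ} {v w s : ℝ} (hs : Θ s ∈ Ioo 0 T)
    (hX : HasDerivAt X v s) (hΘ : HasDerivAt Θ w s) :
    HasDerivAt (fun s => u (X s) (Θ s) + a * h (τ (X s) (Θ s)))
      ((ux (X s) (Θ s) + a * c (τ (X s) (Θ s)) * τx (X s) (Θ s)) * v
        + (c (τ (X s) (Θ s)) ^ 2 * τx (X s) (Θ s) + a * c (τ (X s) (Θ s)) * ux (X s) (Θ s)) * w) s := by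
  have h1 := ps_chain H.τ_x H.τ_t H.τx_cont H.ux_cont hs hX hΘ
  have h2 := ps_chain H.u_x H.u_t H.ux_cont ((H.cτ_cont.pow 2).mul H.τx_cont) hs hX hΘ
  have h3 := (H.h_der _ (H.τ_pos (X s) (Θ s))).comp s h1
  have h4 := h2.add (h3.const_mul a)
  refine (h4.congr_deriv ?_)
  ring

/-- Eulerian coordinate -/
noncomputable def z (τ u : ℝ → ℝ → ℝ) (x t : ℝ) : ℝ :=
  (∫ ξ in (0 : ℝ)..x, τ ξ t) + ∫ σ in (0 : ℝ)..t, u 0 σ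

lemma z_cont (H : PCore c dc h τ u τx ux T) :
    Continuous (fun p : ℝ × ℝ => z τ u p.1 p.2) := by
  unfold z
  refine Continuous.add ?_ ?_
  · refine intervalIntegral.continuous_parametric_intervalIntegral_of_continuous
      (f := fun (p : ℝ × ℝ) ξ => τ ξ p.2) ?_ continuous_fst
    exact H.τ_cont.comp (by fun_prop : Continuous fun q : (ℝ × ℝ) × ℝ => (q.2, q.1.2))
  · refine intervalIntegral.continuous_parametric_intervalIntegral_of_continuous
      (f := fun (p : ℝ × ℝ) σ => u 0 σ) ?_ continuous_snd
    exact H.u_cont.comp (by fun_prop : Continuous fun q : (ℝ × ℝ) × ℝ => ((0 : ℝ), q.2))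

lemma z_x (H : PCore c dc h τ u τx ux T) (x t : ℝ) :
    HasDerivAt (fun x' => z τ u x' t) (τ x t) x := by
  have hc : Continuous (fun ξ => τ ξ t) :=
    H.τ_cont.comp (by fun_prop : Continuous fun q : ℝ => (q, t))
  exact (hc.integral_hasStrictDerivAt 0 x).hasDerivAt.add_const _

lemma z_t (H : PCore c dc h τ u τx ux T) (x t : ℝ) (ht : t ∈ Ioo 0 T) :
    HasDerivAt (fun t' => z τ u x t') (u x t) t := by
  have hc : Continuous (fun σ => u 0 σ) :=
    H.u_cont.comp (by fun_prop : Continuous fun q : ℝ => ((0 : ℝ), q))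
  have hτc : ∀ t, Continuous (fun ξ => τ ξ t) := fun t =>
    H.τ_cont.comp (by fun_prop : Continuous fun q : ℝ => (q, t))
  have huxc : ∀ t, Continuous (fun ξ => ux ξ t) := fun t =>
    H.ux_cont.comp (by fun_prop : Continuous fun q : ℝ => (q, t))
  have h1 := (hc.integral_hasStrictDerivAt 0 t).hasDerivAt
  obtain ⟨C, hC⟩ := ((isCompact_uIcc (a := (0 : ℝ)) (b := x)).prod (isCompact_Icc (a := (0:ℝ)) (b := T))).exists_bound_of_continuousOn
    H.ux_cont.continuousOn
  have h2 := (intervalIntegral.hasDerivAt_integral_of_dominated_loc_of_deriv_le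
    (μ := volume) (a := 0) (b := x)
    (F := fun t ξ => τ ξ t) (F' := fun t ξ => ux ξ t) (x₀ := t) (s := Ioo 0 T)
    (bound := fun _ => C)
    (isOpen_Ioo.mem_nhds ht)
    (Eventually.of_forall fun t => (hτc t).aestronglyMeasurable)
    ((hτc t).intervalIntegrable _ _)
    ((huxc t).aestronglyMeasurable)
    (Eventually.of_forall fun ξ hξ t ht =>
      hC (ξ, t) ⟨uIoc_subset_uIcc hξ, Ioo_subset_Icc_self ht⟩)
    (continuous_const.intervalIntegrable _ _)
    (Eventually.of_forall fun ξ _ t ht => H.τ_t ξ t ht)).2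
  have h3 : ∫ ξ in (0:ℝ)..x, ux ξ t = u x t - u 0 t :=
    intervalIntegral.integral_eq_sub_of_hasDerivAt (fun ξ _ => H.u_x ξ t)
      ((huxc t).intervalIntegrable _ _)
  refine (h2.add h1).congr_deriv ?_
  rw [h3]; ring

lemma chain_z (H : PCore c dc h τ u τx ux T)
    {X Θ : ℝ → ℝ} {v w s : ℝ} (hs : Θ s ∈ Ioo 0 T)
    (hX : HasDerivAt X v s) (hΘ : HasDerivAt Θ w s) :
    HasDerivAt (fun s => z τ u (X s) (Θ s))
      (τ (X s) (Θ s) * v + u (X s) (Θ s) * w) s :=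
  ps_chain H.z_x H.z_t H.τ_cont H.u_cont hs hX hΘ

lemma z_mono (H : PCore c dc h τ u τx ux T) (t : ℝ) : StrictMono (fun x => z τ u x t) :=
  strictMono_of_hasDerivAt_pos (fun x => H.z_x x t) (fun x => H.τ_pos x t)

/-- Bound of the Eulerian sound speed in terms of the Riemann invariants. -/
lemma exists_K (H : PCore c dc h τ u τx ux T) (B : ℝ) :
    ∃ K, ∀ v, 0 < v → ∀ w, |w| + |h v| ≤ B → v * c v + |w| < K := by
  have hmono : StrictMonoOn h (Ioi 0) := by
    refine strictMonoOn_of_deriv_pos (convex_Ioi 0)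
      (fun v hv => (H.h_der v hv).continuousAt.continuousWithinAt) ?_
    intro v hv
    rw [interior_Ioi] at hv
    rw [(H.h_der v hv).deriv]; exact H.c_pos v hv
  have hanti : AntitoneOn c (Ioi 0) := by
    refine antitoneOn_of_deriv_nonpos (convex_Ioi 0)
      (fun v hv => (H.c_der v hv).continuousAt.continuousWithinAt)
      (fun v hv => by
        rw [interior_Ioi] at hv
        exact (H.c_der v hv).differentiableAt.differentiableWithinAt) ?_
    intro v hv
    rw [interior_Ioi] at hv
    rw [(H.c_der v hv).deriv]; exact H.dc_np v hv
  have hhalf : ∀ v, 0 < v → v * c v ≤ 2 * (h v - h (v / 2)) := by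
    intro v hv
    obtain ⟨ξ, hξ, he⟩ := exists_hasDerivAt_eq_slope h c (by linarith : v / 2 < v)
      (fun w hw => (H.h_der w (by linarith [hw.1])).continuousAt.continuousWithinAt)
      (fun w hw => H.h_der w (by linarith [hw.1]))
    have h1 : c v ≤ c ξ := hanti (by simp only [mem_Ioi]; linarith [hξ.1]) hv hξ.2.le
    rw [he, le_div_iff₀ (by linarith)] at h1
    linarith
  by_cases hb : ∃ a, ∀ v, 0 < v → a ≤ h v
  · obtain ⟨a, ha⟩ := hb
    refine ⟨2 * (B - a) + B + 1, fun v hv w hw => ?_⟩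
    have h1 := hhalf v hv
    have h2 := ha (v / 2) (by linarith)
    have h3 := le_abs_self (h v)
    have h4 := abs_nonneg w
    have h5 := abs_nonneg (h v)
    linarith
  · push Not at hb
    obtain ⟨m, hm, hmB⟩ := hb (-B)
    refine ⟨2 * (B - h (m / 2)) + B + 1, fun v hv w hw => ?_⟩
    have h1 := hhalf v hv
    have h3 := le_abs_self (h v)
    have h3' := neg_abs_le (h v)
    have h4 := abs_nonneg w
    have h5 := abs_nonneg (h v)
    have hmv : m < v := by
      by_contra hc
      have := hmono.monotoneOn (mem_Ioi.2 hv) (mem_Ioi.2 hm) (not_lt.1 hc)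
      linarith
    have h2 : h (m / 2) < h (v / 2) :=
      hmono (by simp only [mem_Ioi]; linarith) (by simp only [mem_Ioi]; linarith) (by linarith)
    linarith

lemma tube (H : PCore c dc h τ u τx ux T) {t₀ K L R B : ℝ} (ht₀ : t₀ < T)
    (hK : ∀ v, 0 < v → ∀ w, |w| + |h v| ≤ B + T → v * c v + |w| < K)
    (hL : K * t₀ < L) (hK0 : 0 < K)
    (hR : L < z τ u R 0) (hR' : z τ u (-R) 0 < -L)
    (hB : ∀ x, |u x 0| + |h (τ x 0)| < B) :
    ∀ t ∈ Icc 0 t₀, (L - K * t < z τ u R t ∧ z τ u (-R) t < -(L - K * t)) ∧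
      ∀ x, |z τ u x t| ≤ L - K * t → |u x t| + |h (τ x t)| < B + t := by
  by_contra hcon
  -- the bad set
  let m : ℝ × ℝ → ℝ := fun P => |u P.1 P.2| + |h (τ P.1 P.2)|
  have hm : Continuous m := H.u_cont.abs.add H.hτ_cont.abs
  have hz := H.z_cont
  have hzR : ∀ x, Continuous fun t => z τ u x t := fun x =>
    hz.comp (by fun_prop : Continuous fun t : ℝ => (x, t))
  let bad : Set (ℝ × ℝ) := (Icc (-R) R ×ˢ Icc 0 t₀) ∩
    ({P | z τ u R P.2 ≤ L - K * P.2} ∪ {P | -(L - K * P.2) ≤ z τ u (-R) P.2} ∪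
      ({P | |z τ u P.1 P.2| ≤ L - K * P.2} ∩ {P | B + P.2 ≤ m P}))
  have hcl : IsCompact bad := by
    refine (isCompact_Icc.prod isCompact_Icc).inter_right ?_
    refine ((isClosed_le ?_ ?_).union (isClosed_le ?_ ?_)).union
      ((isClosed_le ?_ ?_).inter (isClosed_le ?_ ?_))
    · exact (hzR R).comp continuous_snd
    · fun_prop
    · fun_prop
    · exact (hzR (-R)).comp continuous_snd
    · exact hz.abs
    · fun_prop
    · fun_prop
    · exact hm
  have hRR : -R < R := by
    by_contra hc
    have := (H.z_mono 0).monotone (not_lt.1 hc)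
    have hL0 : 0 < L := by
      by_contra h0
      push Not at hcon
      obtain ⟨t, ht, -⟩ := hcon
      have : 0 ≤ K * t₀ := mul_nonneg hK0.le (ht.1.trans ht.2)
      linarith
    linarith
  have hmemR : ∀ t ∈ Icc 0 t₀, L - K * t < z τ u R t → z τ u (-R) t < -(L - K * t) →
      ∀ x, |z τ u x t| ≤ L - K * t → x ∈ Icc (-R) R := by
    intro t ht h1 h2 x hx
    rw [abs_le] at hx
    constructor
    · exact ((H.z_mono t).lt_iff_lt.1 (by simp only; linarith : (fun x => z τ u x t) (-R) < (fun x => z τ u x t) x)).le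
    · exact ((H.z_mono t).lt_iff_lt.1 (by simp only; linarith : (fun x => z τ u x t) x < (fun x => z τ u x t) R)).le
  have hne : bad.Nonempty := by
    push Not at hcon
    obtain ⟨t, ht, hc⟩ := hcon
    by_cases h1 : L - K * t < z τ u R t
    · by_cases h2 : z τ u (-R) t < -(L - K * t)
      · obtain ⟨x, hx, hx2⟩ := hc ⟨h1, h2⟩
        exact ⟨(x, t), ⟨hmemR t ht h1 h2 x hx, ht⟩, Or.inr ⟨hx, hx2⟩⟩
      · exact ⟨(R, t), ⟨⟨hRR.le, le_rfl⟩, ht⟩, Or.inl (Or.inr (not_lt.1 h2))⟩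
    · exact ⟨(R, t), ⟨⟨hRR.le, le_rfl⟩, ht⟩, Or.inl (Or.inl (not_lt.1 h1))⟩
  obtain ⟨⟨x₁, t₁⟩, hP, hmin⟩ := hcl.exists_isMinOn hne continuous_snd.continuousOn
  obtain ⟨⟨-, ht1⟩, hP3⟩ := hP
  simp only at ht1
  have hLt : ∀ t ∈ Icc 0 t₀, 0 < L - K * t := fun t ht => by
    have := mul_le_mul_of_nonneg_left ht.2 hK0.le
    linarith
  have hbefore : ∀ t ∈ Ico 0 t₁, (L - K * t < z τ u R t ∧ z τ u (-R) t < -(L - K * t)) ∧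
      ∀ x, |z τ u x t| ≤ L - K * t → m (x, t) < B + t := by
    intro t ht
    have ht' : t ∈ Icc 0 t₀ := ⟨ht.1, ht.2.le.trans ht1.2⟩
    have hnb : ∀ x, (x, t) ∉ bad := fun x hx => by
      have h1 : t₁ ≤ t := hmin hx
      exact absurd ht.2 (not_lt.2 h1)
    have h1 : L - K * t < z τ u R t := by
      by_contra hc
      exact hnb R ⟨⟨⟨hRR.le, le_rfl⟩, ht'⟩, Or.inl (Or.inl (not_lt.1 hc))⟩
    have h2 : z τ u (-R) t < -(L - K * t) := by
      by_contra hc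
      exact hnb R ⟨⟨⟨hRR.le, le_rfl⟩, ht'⟩, Or.inl (Or.inr (not_lt.1 hc))⟩
    refine ⟨⟨h1, h2⟩, fun x hx => ?_⟩
    by_contra hc
    exact hnb x ⟨⟨hmemR t ht' h1 h2 x hx, ht'⟩, Or.inr ⟨hx, not_lt.1 hc⟩⟩
  have ht1pos : 0 < t₁ := by
    rcases ht1.1.lt_or_eq with h0 | h0
    · exact h0
    · exfalso
      subst h0
      rcases hP3 with (h1 | h1) | h1
      · simp only [mem_ofPred_eq, mul_zero, sub_zero] at h1; linarith
      · simp only [mem_ofPred_eq, mul_zero, sub_zero] at h1; linarith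
      · have := h1.2
        simp only [mem_ofPred_eq, m] at this
        linarith [hB x₁]
  have ht1T : t₁ < T := ht1.2.trans_lt ht₀
  -- backward segments
  have hΘ : HasDerivAt (fun η : ℝ => t₁ - η) (-1) 0 := by
    simpa using (hasDerivAt_id (0 : ℝ)).const_sub t₁
  have hX : ∀ x v : ℝ, HasDerivAt (fun η : ℝ => x + v * η) v 0 := fun x v => by
    simpa using ((hasDerivAt_id (0 : ℝ)).const_mul v).const_add x
  have hΘmem : (fun η : ℝ => t₁ - η) 0 ∈ Ioo 0 T := by simpa using ⟨ht1pos, ht1T⟩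
  have hsmall : ∀ᶠ η in 𝓝[>] (0 : ℝ), t₁ - η ∈ Ico 0 t₁ := by
    filter_upwards [Ioo_mem_nhdsGT ht1pos] with η hη
    exact ⟨by linarith [hη.2], by linarith [hη.1]⟩
  have hzline : ∀ x v, |z τ u x t₁| ≤ L - K * t₁ → |τ x t₁ * v - u x t₁| < K →
      ∀ᶠ η in 𝓝[>] (0 : ℝ), |z τ u (x + v * η) (t₁ - η)| ≤ L - K * (t₁ - η) := by
    intro x v h1 h2
    have hd := H.chain_z hΘmem (hX x v) hΘ
    simp only [mul_zero, add_zero, sub_zero] at hd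
    have hd' := hd.neg
    rw [abs_lt] at h2
    rw [abs_le] at h1
    have e1 := ps_slope_lt hd (k := K) (by linarith)
    have e2 := ps_slope_lt hd' (k := K) (by linarith)
    filter_upwards [e1, e2] with η g1 g2
    simp only [mul_zero, add_zero, sub_zero, Pi.neg_apply] at g1 g2
    rw [abs_le]
    constructor <;> linarith
  have hclosure : ∀ x, |z τ u x t₁| ≤ L - K * t₁ → m (x, t₁) ≤ B + t₁ := by
    intro x hx
    have hτp := H.τ_pos x t₁
    have e1 := hzline x (u x t₁ / τ x t₁) hx (by
      rw [mul_div_cancel₀ _ hτp.ne', sub_self, abs_zero]; exact hK0)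
    have hc1 : Tendsto (fun η : ℝ => m (x + u x t₁ / τ x t₁ * η, t₁ - η)) (𝓝[>] 0) (𝓝 (m (x, t₁))) := by
      have : Continuous (fun η : ℝ => m (x + u x t₁ / τ x t₁ * η, t₁ - η)) :=
        hm.comp (by fun_prop)
      have h2 := this.tendsto 0
      simp only [mul_zero, add_zero, sub_zero] at h2
      exact h2.mono_left nhdsWithin_le_nhds
    refine le_of_tendsto hc1 ?_
    filter_upwards [e1, hsmall] with η g1 g2
    have := (hbefore _ g2).2 _ g1
    linarith [g2.2]
  have hspeed : ∀ x, |z τ u x t₁| ≤ L - K * t₁ → τ x t₁ * c (τ x t₁) + |u x t₁| < K := by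
    intro x hx
    have h1 := hclosure x hx
    exact hK _ (H.τ_pos _ _) _ (by simp only [m] at h1; linarith)
  have hlim : ∀ᶠ t in 𝓝[<] t₁, t ∈ Ico 0 t₁ := by
    filter_upwards [Ioo_mem_nhdsLT ht1pos] with t ht
    exact ⟨ht.1.le, ht.2⟩
  have hLpos := hLt t₁ ht1
  have hKc : Continuous fun t => L - K * t := by fun_prop
  rcases hP3 with (h1 | h1) | h1
  · have h2 : L - K * t₁ ≤ z τ u R t₁ :=
      le_of_tendsto_of_tendsto ((hKc.tendsto t₁).mono_left nhdsWithin_le_nhds)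
        (((hzR R).tendsto t₁).mono_left nhdsWithin_le_nhds)
        (by filter_upwards [hlim] with t ht using (hbefore t ht).1.1.le)
    have h1' : z τ u R t₁ ≤ L - K * t₁ := h1
    have h3 : |z τ u R t₁| ≤ L - K * t₁ := by rw [abs_le]; constructor <;> linarith
    have h4 := hspeed R h3
    have h5 : 0 < τ R t₁ * c (τ R t₁) := mul_pos (H.τ_pos _ _) (H.c_pos _ (H.τ_pos _ _))
    have e := hzline R 0 h3 (by rw [mul_zero, zero_sub, abs_neg]; linarith)
    obtain ⟨η, g1, g2⟩ := (e.and hsmall).exists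
    have g3 := (hbefore _ g2).1.1
    rw [zero_mul, add_zero] at g1
    linarith [le_abs_self (z τ u R (t₁ - η))]
  · have h2 : z τ u (-R) t₁ ≤ -(L - K * t₁) :=
      le_of_tendsto_of_tendsto (((hzR (-R)).tendsto t₁).mono_left nhdsWithin_le_nhds)
        ((hKc.neg.tendsto t₁).mono_left nhdsWithin_le_nhds)
        (by filter_upwards [hlim] with t ht using (hbefore t ht).1.2.le)
    have h1' : -(L - K * t₁) ≤ z τ u (-R) t₁ := h1
    have h3 : |z τ u (-R) t₁| ≤ L - K * t₁ := by rw [abs_le]; constructor <;> linarith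
    have h4 := hspeed (-R) h3
    have h5 : 0 < τ (-R) t₁ * c (τ (-R) t₁) := mul_pos (H.τ_pos _ _) (H.c_pos _ (H.τ_pos _ _))
    have e := hzline (-R) 0 h3 (by rw [mul_zero, zero_sub, abs_neg]; linarith)
    obtain ⟨η, g1, g2⟩ := (e.and hsmall).exists
    have g3 := (hbefore _ g2).1.2
    rw [zero_mul, add_zero] at g1
    linarith [neg_abs_le (z τ u (-R) (t₁ - η))]
  · obtain ⟨h1, h2⟩ := h1
    simp only [mem_ofPred_eq] at h1 h2
    have h4 := hspeed x₁ h1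
    have hcp := H.c_pos _ (H.τ_pos x₁ t₁)
    have h5 : 0 < τ x₁ t₁ * c (τ x₁ t₁) := mul_pos (H.τ_pos _ _) hcp
    have hu1 := le_abs_self (u x₁ t₁)
    have hu2 := neg_abs_le (u x₁ t₁)
    -- generic contradiction
    have key : ∀ a b : ℝ, (a = 1 ∨ a = -1) → (b = 1 ∨ b = -1) →
        B + t₁ ≤ b * (u x₁ t₁ + a * h (τ x₁ t₁)) → False := by
      intro a b ha hb hab
      have hv : |τ x₁ t₁ * (a * c (τ x₁ t₁)) - u x₁ t₁| < K := by
        rw [abs_lt]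
        rcases ha with rfl | rfl <;> constructor <;> linarith
      have e1 := hzline x₁ (a * c (τ x₁ t₁)) h1 hv
      have hd := (H.chain_s a hΘmem (hX x₁ (a * c (τ x₁ t₁))) hΘ).const_mul (-b)
      have e2 := ps_slope_lt hd (k := 1) (by
        simp only [mul_zero, add_zero, sub_zero]
        have haa : a ^ 2 = 1 := by rcases ha with rfl | rfl <;> norm_num
        have : -b * ((ux x₁ t₁ + a * c (τ x₁ t₁) * τx x₁ t₁) * (a * c (τ x₁ t₁)) +
          (c (τ x₁ t₁) ^ 2 * τx x₁ t₁ + a * c (τ x₁ t₁) * ux x₁ t₁) * -1) = 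
          -b * (c (τ x₁ t₁) ^ 2 * τx x₁ t₁) * (a ^ 2 - 1) := by ring
        rw [this, haa]; norm_num)
      obtain ⟨η, g1, g2, g3⟩ := (e1.and (e2.and hsmall)).exists
      have g4 := (hbefore _ g3).2 _ g1
      simp only [mul_zero, add_zero, sub_zero, m] at g2 g4
      have : b * (u (x₁ + a * c (τ x₁ t₁) * η) (t₁ - η) +
          a * h (τ (x₁ + a * c (τ x₁ t₁) * η) (t₁ - η))) ≤
          |u (x₁ + a * c (τ x₁ t₁) * η) (t₁ - η)| + |h (τ (x₁ + a * c (τ x₁ t₁) * η) (t₁ - η))| := by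
        have q1 := le_abs_self (u (x₁ + a * c (τ x₁ t₁) * η) (t₁ - η))
        have q2 := neg_abs_le (u (x₁ + a * c (τ x₁ t₁) * η) (t₁ - η))
        have q3 := le_abs_self (h (τ (x₁ + a * c (τ x₁ t₁) * η) (t₁ - η)))
        have q4 := neg_abs_le (h (τ (x₁ + a * c (τ x₁ t₁) * η) (t₁ - η)))
        rcases ha with rfl | rfl <;> rcases hb with rfl | rfl <;> linarith
      linarith
    simp only [m] at h2
    rcases abs_cases (u x₁ t₁) with ⟨hu, -⟩ | ⟨hu, -⟩ <;>
      rcases abs_cases (h (τ x₁ t₁)) with ⟨hh, -⟩ | ⟨hh, -⟩ <;> rw [hu, hh] at h2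
    · exact key 1 1 (Or.inl rfl) (Or.inl rfl) (by linarith)
    · exact key (-1) 1 (Or.inr rfl) (Or.inl rfl) (by linarith)
    · exact key (-1) (-1) (Or.inr rfl) (Or.inr rfl) (by linarith)
    · exact key 1 (-1) (Or.inl rfl) (Or.inr rfl) (by linarith)

lemma exists_char (H : PCore c dc h τ u τx ux T) {t₀ B M : ℝ} (ht₀ : t₀ ∈ Ioo 0 T)
    (hB : ∀ x, |u x 0| + |h (τ x 0)| < B) (hM : 0 < M) (hMτ : ∀ x, M ≤ τ x 0) (xs : ℝ) :
    ∃ X : ℝ → ℝ, ContinuousOn X (Icc 0 t₀) ∧ X t₀ = xs ∧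
      ∀ t ∈ Ioo 0 t₀, HasDerivAt X (c (τ (X t) t)) t := by
  obtain ⟨K₀, hK₀⟩ := H.exists_K (B + T)
  obtain ⟨K, hK0, hK⟩ : ∃ K, 0 < K ∧
      ∀ v, 0 < v → ∀ w, |w| + |h v| ≤ B + T → v * c v + |w| < K :=
    ⟨max K₀ 1, by positivity, fun v hv w hw => (hK₀ v hv w hw).trans_le (le_max_left _ _)⟩
  set L := K * t₀ + |z τ u xs t₀| + 1 with hLdef
  have hLpos : 0 < L := by
    have := mul_pos hK0 ht₀.1
    have := abs_nonneg (z τ u xs t₀)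
    linarith
  set R := (L + 1) / M with hRdef
  have hRpos : 0 < R := by positivity
  have hMR : M * R = L + 1 := by rw [hRdef]; field_simp
  have hτc : Continuous (fun ξ => τ ξ 0) :=
    H.τ_cont.comp (by fun_prop : Continuous fun q : ℝ => (q, (0:ℝ)))
  have hR1 : L < z τ u R 0 := by
    have h1 : ∫ ξ in (0:ℝ)..R, M ≤ ∫ ξ in (0:ℝ)..R, τ ξ 0 :=
      intervalIntegral.integral_mono_on hRpos.le (by simp) (hτc.intervalIntegrable _ _)
        (fun x _ => hMτ x)
    have h2 : z τ u R 0 = ∫ ξ in (0:ℝ)..R, τ ξ 0 := by simp [z]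
    rw [h2]
    simp only [intervalIntegral.integral_const, smul_eq_mul, sub_zero] at h1
    linarith
  have hR2 : z τ u (-R) 0 < -L := by
    have h1 : ∫ ξ in (-R)..(0:ℝ), M ≤ ∫ ξ in (-R)..(0:ℝ), τ ξ 0 :=
      intervalIntegral.integral_mono_on (by linarith) (by simp) (hτc.intervalIntegrable _ _)
        (fun x _ => hMτ x)
    have h2 : z τ u (-R) 0 = - ∫ ξ in (-R)..(0:ℝ), τ ξ 0 := by
      simp [z, intervalIntegral.integral_symm (-R) 0]
    rw [h2]
    simp only [intervalIntegral.integral_const, smul_eq_mul, zero_sub, neg_neg] at h1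
    linarith
  have htube := H.tube ht₀.2 hK (by have := abs_nonneg (z τ u xs t₀); linarith) hK0 hR1 hR2 hB
  -- the truncated field
  let cl : ℝ → ℝ := fun x => max (-R) (min x R)
  have hcl : LipschitzWith 1 cl := (LipschitzWith.id.min_const R).const_max (-R)
  have hclm : ∀ x, cl x ∈ Icc (-R) R := fun x =>
    ⟨le_max_left _ _, max_le (by linarith) (min_le_right _ _)⟩
  have hclid : ∀ x ∈ Icc (-R) R, cl x = x := fun x hx => by
    simp only [cl]; rw [min_eq_left hx.2, max_eq_right hx.1]
  let f : ℝ → ℝ → ℝ := fun t x => c (τ (cl x) t)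
  have hcomp := (isCompact_Icc (a := -R) (b := R)).prod (isCompact_Icc (a := (0:ℝ)) (b := t₀))
  obtain ⟨C1, hC1⟩ := hcomp.exists_bound_of_continuousOn H.cτ_cont.continuousOn
  obtain ⟨C2, hC2⟩ := hcomp.exists_bound_of_continuousOn (H.dcτ_cont.mul H.τx_cont).continuousOn
  have hPL : IsPicardLindelof f (tmin := 0) (tmax := t₀) ⟨t₀, ht₀.1.le, le_rfl⟩ xs
      (C1.toNNReal * t₀.toNNReal) 0 C1.toNNReal C2.toNNReal := by
    refine ⟨fun t ht => ?_, fun x _ => ?_, fun t ht x _ => ?_, ?_⟩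
    · have h1 : LipschitzOnWith C2.toNNReal (fun x => c (τ x t)) (Icc (-R) R) := by
        refine (convex_Icc (-R) R).lipschitzOnWith_of_nnnorm_hasDerivWithin_le
          (f' := fun x => dc (τ x t) * τx x t) (fun x hx => ?_) (fun x hx => ?_)
        · exact (((H.c_der _ (H.τ_pos x t)).comp x (H.τ_x x t))).hasDerivWithinAt
        · have := hC2 (x, t) ⟨hx, ht⟩
          rw [← NNReal.coe_le_coe, coe_nnnorm]
          exact this.trans (Real.le_coe_toNNReal _)
      have h2 := h1.comp (hcl.lipschitzOnWith (s := Metric.closedBall xs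
        ((C1.toNNReal * t₀.toNNReal : NNReal) : ℝ))) (fun x _ => hclm x)
      rw [mul_one] at h2
      exact h2
    · exact (H.cτ_cont.comp (by fun_prop : Continuous fun t : ℝ => (cl x, t))).continuousOn
    · exact (hC1 (cl x, t) ⟨hclm x, ht⟩).trans (Real.le_coe_toNNReal _)
    · simp [ht₀.1.le]
  obtain ⟨X, hX0, hXd⟩ := hPL.exists_eq_forall_mem_Icc_hasDerivWithinAt₀
  simp only at hX0
  have hXc : ContinuousOn X (Icc 0 t₀) := fun t ht => (hXd t ht).continuousWithinAt
  have hXd' : ∀ t ∈ Ioo 0 t₀, HasDerivAt X (f t (X t)) t := fun t ht =>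
    (hXd t (Ioo_subset_Icc_self ht)).hasDerivAt (Icc_mem_nhds ht.1 ht.2)
  have hmemR : ∀ t ∈ Icc 0 t₀, ∀ x, |z τ u x t| ≤ L - K * t → x ∈ Icc (-R) R := by
    intro t ht x hx
    have h12 := (htube t ht).1
    rw [abs_le] at hx
    constructor
    · exact ((H.z_mono t).lt_iff_lt.1 (by linarith [h12.2] : (fun x => z τ u x t) (-R) < (fun x => z τ u x t) x)).le
    · exact ((H.z_mono t).lt_iff_lt.1 (by linarith [h12.1] : (fun x => z τ u x t) x < (fun x => z τ u x t) R)).le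
  have hwc : ContinuousOn (fun t => z τ u (X t) t) (Icc 0 t₀) :=
    H.z_cont.comp_continuousOn (hXc.prodMk continuousOn_id)
  have hstay : ∀ t ∈ Icc 0 t₀, |z τ u (X t) t| < L - K * t := by
    by_contra hcon
    push Not at hcon
    obtain ⟨s, hs, hsb⟩ := hcon
    let bad : Set ℝ := {t | t ∈ Icc 0 t₀ ∧ L - K * t ≤ |z τ u (X t) t|}
    have hbc : IsCompact bad := by
      have : IsClosed bad :=
        isClosed_Icc.isClosed_le (by fun_prop) hwc.abs
      exact isCompact_Icc.of_isClosed_subset this (fun t ht => ht.1)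
    obtain ⟨t2, ht2, hmax⟩ := hbc.exists_isMaxOn ⟨s, hs, hsb⟩ continuousOn_id
    have hlt : t2 < t₀ := by
      rcases ht2.1.2.lt_or_eq with h0 | h0
      · exact h0
      · exfalso
        have := ht2.2
        rw [h0, hX0] at this
        linarith
    have hafter : ∀ t ∈ Ioc t2 t₀, |z τ u (X t) t| < L - K * t := by
      intro t ht
      by_contra hc
      have : t ≤ t2 := hmax (⟨⟨ht2.1.1.trans ht.1.le, ht.2⟩, not_lt.1 hc⟩ : t ∈ bad)
      linarith [ht.1]
    have hder : ∀ t ∈ Ioo t2 t₀, HasDerivAt (fun t => z τ u (X t) t)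
        (τ (X t) t * c (τ (X t) t) + u (X t) t * 1) t := by
      intro t ht
      have h0 : t ∈ Ioo 0 t₀ := ⟨ht2.1.1.trans_lt ht.1, ht.2⟩
      have h1 := hmemR t (Ioo_subset_Icc_self h0) _ (hafter t ⟨ht.1, ht.2.le⟩).le
      have h2 := hXd' t h0
      simp only [f] at h2
      rw [hclid _ h1] at h2
      exact H.chain_z (Θ := fun t => t) (s := t) ⟨h0.1, h0.2.trans ht₀.2⟩ h2 (hasDerivAt_id t)
    obtain ⟨ξ, hξ, he⟩ := exists_hasDerivAt_eq_slope _ _ hlt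
      (hwc.mono (Icc_subset_Icc_left ht2.1.1)) hder
    have hξ0 : ξ ∈ Icc 0 t₀ := ⟨ht2.1.1.trans hξ.1.le, hξ.2.le⟩
    have hm := (htube ξ hξ0).2 _ (hafter ξ ⟨hξ.1, hξ.2.le⟩).le
    have hsp := hK _ (H.τ_pos (X ξ) ξ) (u (X ξ) ξ) (by linarith [hξ.2, ht₀.2])
    have hp : 0 < τ (X ξ) ξ * c (τ (X ξ) ξ) := mul_pos (H.τ_pos _ _) (H.c_pos _ (H.τ_pos _ _))
    rw [eq_div_iff (by linarith)] at he
    have hd : 0 < t₀ - t2 := by linarith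
    have hu1 := le_abs_self (u (X ξ) ξ)
    have hu2 := neg_abs_le (u (X ξ) ξ)
    have e1 : z τ u (X t₀) t₀ - z τ u (X t2) t2 ≤ K * (t₀ - t2) := by
      rw [← he]; exact mul_le_mul_of_nonneg_right (by linarith) hd.le
    have e2 : -(K * (t₀ - t2)) ≤ z τ u (X t₀) t₀ - z τ u (X t2) t2 := by
      rw [← he, ← neg_mul]; exact mul_le_mul_of_nonneg_right (by linarith) hd.le
    have e3 := ht2.2
    rw [hX0] at e1 e2
    have e4 := le_abs_self (z τ u xs t₀)
    have e5 := neg_abs_le (z τ u xs t₀)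
    rcases le_abs.1 e3 with e3 | e3 <;> linarith
  refine ⟨X, hXc, hX0, fun t ht => ?_⟩
  have h2 := hXd' t ht
  have ht' := Ioo_subset_Icc_self ht
  simp only [f] at h2
  rwa [hclid _ (hmemR t ht' _ (hstay t ht').le)] at h2

lemma grad_der (H : PCore c dc h τ u τx ux T) {t₀ : ℝ} (ht₀ : t₀ ∈ Ioo 0 T) {X : ℝ → ℝ}
    (hXc : ContinuousOn X (Icc 0 t₀))
    (hX : ∀ t ∈ Ioo 0 t₀, HasDerivAt X (c (τ (X t) t)) t) :
    ∀ t ∈ Ioo 0 t₀, HasDerivAt (fun t => ux (X t) t - c (τ (X t) t) * τx (X t) t)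
      (-((ux (X t) t - c (τ (X t) t) * τx (X t) t) * (dc (τ (X t) t) * τx (X t) t))) t := by
  let sx : ℝ → ℝ → ℝ := fun x t => ux x t - c (τ x t) * τx x t
  let Cx : ℝ → ℝ → ℝ := fun x t => dc (τ x t) * τx x t
  have sxc : Continuous (fun p : ℝ × ℝ => sx p.1 p.2) := H.ux_cont.sub (H.cτ_cont.mul H.τx_cont)
  have Cxc : Continuous (fun p : ℝ × ℝ => Cx p.1 p.2) := H.dcτ_cont.mul H.τx_cont
  have hCx : ∀ x t, HasDerivAt (fun x => c (τ x t)) (Cx x t) x := fun x t =>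
    (H.c_der _ (H.τ_pos x t)).comp x (H.τ_x x t)
  have hSx : ∀ x t, HasDerivAt (fun x => u x t + (-1) * h (τ x t)) (sx x t) x := fun x t => by
    refine ((H.u_x x t).add (((H.h_der _ (H.τ_pos x t)).comp x (H.τ_x x t)).const_mul (-1))).congr_deriv ?_
    simp only [sx]; ring
  let e : ℕ → ℝ := fun n => 1 / ((n : ℝ) + 1)
  have hepos : ∀ n, 0 < e n := fun n => by positivity
  have he : Tendsto e atTop (𝓝 0) := tendsto_one_div_add_atTop_nhds_zero_nat
  let F : ℕ → ℝ → ℝ := fun n t =>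
    (e n)⁻¹ * ((u (X t + e n) t + (-1) * h (τ (X t + e n) t)) - (u (X t) t + (-1) * h (τ (X t) t)))
  let F' : ℕ → ℝ → ℝ := fun n t =>
    -(sx (X t + e n) t * ((e n)⁻¹ * (c (τ (X t + e n) t) - c (τ (X t) t))))
  intro t ht
  refine hasDerivAt_of_tendstoUniformlyOn (l := atTop) (f := F) (f' := F')
    (g := fun t => sx (X t) t) (g' := fun t => -(sx (X t) t * Cx (X t) t))
    isOpen_Ioo ?_ ?_ ?_ ht
  · obtain ⟨ρ, hρ⟩ := isCompact_Icc.exists_bound_of_continuousOn hXc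
    let S : Set (ℝ × ℝ × ℝ) := Icc (-ρ - 1) (ρ + 1) ×ˢ Icc (-ρ - 1) (ρ + 1) ×ˢ Icc 0 t₀
    have hS : IsCompact S := isCompact_Icc.prod (isCompact_Icc.prod isCompact_Icc)
    have hφ : Continuous (fun P : ℝ × ℝ × ℝ => sx P.1 P.2.2 * Cx P.2.1 P.2.2) :=
      (sxc.comp (by fun_prop : Continuous fun P : ℝ × ℝ × ℝ => (P.1, P.2.2))).mul
        (Cxc.comp (by fun_prop : Continuous fun P : ℝ × ℝ × ℝ => (P.2.1, P.2.2)))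
    have huc := hS.uniformContinuousOn_of_continuous hφ.continuousOn
    rw [Metric.uniformContinuousOn_iff] at huc
    rw [Metric.tendstoUniformlyOn_iff]
    intro ε hε
    obtain ⟨δ, hδ, hd⟩ := huc ε hε
    filter_upwards [he.eventually (gt_mem_nhds hδ), he.eventually (gt_mem_nhds one_pos)] with n hn hn1 s hs
    have hen := hepos n
    have hXs := hρ s (Ioo_subset_Icc_self hs)
    rw [Real.norm_eq_abs, abs_le] at hXs
    obtain ⟨ξ, hξ, hξe⟩ := exists_hasDerivAt_eq_slope (fun x => c (τ x s)) (fun x => Cx x s)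
      (by linarith : X s < X s + e n)
      (fun x _ => (hCx x s).continuousAt.continuousWithinAt) (fun x _ => hCx x s)
    have hF' : F' n s = -(sx (X s + e n) s * Cx ξ s) := by
      simp only [F', hξe]
      rw [add_sub_cancel_left, div_eq_inv_mul]
    have hs' := Ioo_subset_Icc_self hs
    have := hd (X s, X s, s) ⟨⟨by linarith, by linarith⟩, ⟨by linarith, by linarith⟩, hs'⟩
      (X s + e n, ξ, s) ⟨⟨by linarith, by linarith⟩, ⟨by linarith [hξ.1], by linarith [hξ.2]⟩, hs'⟩
      (by
        simp only [Prod.dist_eq, Real.dist_eq, max_lt_iff]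
        refine ⟨?_, ?_, ?_⟩
        · rw [abs_lt]; constructor <;> linarith
        · rw [abs_lt]; constructor <;> linarith [hξ.1, hξ.2]
        · simpa using hδ)
    rw [hF', dist_neg_neg]
    exact this
  · refine Eventually.of_forall fun n s hs => ?_
    have hsT : s ∈ Ioo 0 T := ⟨hs.1, hs.2.trans ht₀.2⟩
    have h1 := H.chain_s (-1) (Θ := fun t => t) (s := s) hsT ((hX s hs).add_const (e n)) (hasDerivAt_id s)
    have h2 := H.chain_s (-1) (Θ := fun t => t) (s := s) hsT (hX s hs) (hasDerivAt_id s)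
    refine ((h1.sub h2).const_mul (e n)⁻¹).congr_deriv ?_
    simp only [F', sx]
    ring
  · intro s hs
    have h1 := hasDerivAt_iff_tendsto_slope_zero.1 (hSx (X s) s)
    have h2 : Tendsto e atTop (𝓝[≠] 0) :=
      tendsto_nhdsWithin_iff.2 ⟨he, Eventually.of_forall fun n => (hepos n).ne'⟩
    exact h1.comp h2

lemma main_le (H : PCore c dc h τ u τx ux T) {t₀ B M : ℝ} (ht₀ : t₀ ∈ Ioo 0 T)
    (hB : ∀ x, |u x 0| + |h (τ x 0)| < B) (hM : 0 < M) (hMτ : ∀ x, M ≤ τ x 0) (xs : ℝ) :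
    ∃ x₀, √(c (τ xs t₀)) * (ux xs t₀ - c (τ xs t₀) * τx xs t₀) ≤
      √(c (τ x₀ 0)) * (ux x₀ 0 - c (τ x₀ 0) * τx x₀ 0) := by
  obtain ⟨X, hXc, hX0, hXd⟩ := H.exists_char ht₀ hB hM hMτ xs
  refine ⟨X 0, ?_⟩
  have hg := H.grad_der ht₀ hXc hXd
  let Y : ℝ → ℝ := fun t => √(c (τ (X t) t)) * (ux (X t) t - c (τ (X t) t) * τx (X t) t)
  have hYc : ContinuousOn Y (Icc 0 t₀) := by
    have : Continuous (fun p : ℝ × ℝ => √(c (τ p.1 p.2)) * (ux p.1 p.2 - c (τ p.1 p.2) * τx p.1 p.2)) :=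
      H.cτ_cont.sqrt.mul (H.ux_cont.sub (H.cτ_cont.mul H.τx_cont))
    exact this.comp_continuousOn (hXc.prodMk continuousOn_id)
  have hYd : ∀ t ∈ Ioo 0 t₀, ∃ d ≤ 0, HasDerivAt Y d t := by
    intro t ht
    have htT : t ∈ Ioo 0 T := ⟨ht.1, ht.2.trans ht₀.2⟩
    have hτp := H.τ_pos (X t) t
    have hcp := H.c_pos _ hτp
    have h1 := ps_chain (Θ := fun t => t) (s := t) H.τ_x H.τ_t H.τx_cont H.ux_cont htT (hXd t ht) (hasDerivAt_id t)
    have h2 := (HasDerivAt.comp t (h := fun s => τ (X s) s) (H.c_der _ hτp) h1).sqrt hcp.ne'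
    have h3 := h2.mul (hg t ht)
    refine ⟨_, ?_, h3⟩
    have hA : 0 < √(c (τ (X t) t)) := Real.sqrt_pos.2 hcp
    have hA2 : c (τ (X t) t) = √(c (τ (X t) t)) ^ 2 := (Real.sq_sqrt hcp.le).symm
    have hdc := H.dc_np _ hτp
    simp only [Function.comp_apply]
    generalize √(c (τ (X t) t)) = A at hA hA2
    rw [hA2]
    have : dc (τ (X t) t) * (τx (X t) t * A ^ 2 + ux (X t) t * 1) / (2 * A) * (ux (X t) t - A ^ 2 * τx (X t) t) +
      A * -((ux (X t) t - A ^ 2 * τx (X t) t) * (dc (τ (X t) t) * τx (X t) t)) =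
      dc (τ (X t) t) * ((ux (X t) t - A ^ 2 * τx (X t) t) ^ 2 / (2 * A)) := by
      field_simp
      ring
    rw [this]
    exact mul_nonpos_of_nonpos_of_nonneg hdc (by positivity)
  have hanti : AntitoneOn Y (Icc 0 t₀) := by
    refine antitoneOn_of_deriv_nonpos (convex_Icc 0 t₀) hYc ?_ ?_
    · intro t ht
      rw [interior_Icc] at ht
      obtain ⟨d, _, hd⟩ := hYd t ht
      exact hd.differentiableAt.differentiableWithinAt
    · intro t ht
      rw [interior_Icc] at ht
      obtain ⟨d, hd0, hd⟩ := hYd t ht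
      rw [hd.deriv]; exact hd0
  have := hanti (left_mem_Icc.2 ht₀.1.le) (right_mem_Icc.2 ht₀.1.le) ht₀.1.le
  simp only [Y, hX0] at this
  exact this

end PCore

lemma ps_partials {F : ℝ → ℝ → ℝ} {T : ℝ}
    (hF : ContDiffOn ℝ 1 (fun q : ℝ × ℝ => F q.1 q.2) (Set.univ ×ˢ Ico 0 T)) :
    (∀ x, ∀ t ∈ Ico 0 T, HasDerivAt (fun x' => F x' t) (deriv (fun x' => F x' t) x) x) ∧
    ContinuousOn (fun q : ℝ × ℝ => deriv (fun x' => F x' q.2) q.1) (Set.univ ×ˢ Ico 0 T) ∧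
    (∀ x, ∀ t ∈ Ioo 0 T, DifferentiableAt ℝ (fun t' => F x t') t) := by
  have hU : UniqueDiffOn ℝ ((Set.univ : Set ℝ) ×ˢ Ico (0:ℝ) T) :=
    uniqueDiffOn_univ.prod (uniqueDiffOn_Ico 0 T)
  have hx : ∀ x, ∀ t ∈ Ico 0 T, HasDerivAt (fun x' => F x' t)
      (fderivWithin ℝ (fun q : ℝ × ℝ => F q.1 q.2) (Set.univ ×ˢ Ico 0 T) (x, t) (1, 0)) x := by
    intro x t ht
    have h1 := (hF.differentiableOn one_ne_zero (x, t) ⟨mem_univ _, ht⟩).hasFDerivWithinAt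
    have h2 : HasDerivWithinAt (fun x' : ℝ => (x', t)) ((1 : ℝ), (0 : ℝ)) univ x :=
      ((hasDerivAt_id x).prodMk (hasDerivAt_const x t)).hasDerivWithinAt
    have hm : MapsTo (fun x' : ℝ => (x', t)) univ ((Set.univ : Set ℝ) ×ˢ Ico (0:ℝ) T) :=
      fun x' _ => ⟨mem_univ _, ht⟩
    have h3 := HasFDerivWithinAt.comp_hasDerivWithinAt (f := fun x' : ℝ => (x', t)) x h1 h2 hm
    exact hasDerivWithinAt_univ.1 h3
  refine ⟨fun x t ht => (hx x t ht).differentiableAt.hasDerivAt, ?_, ?_⟩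
  · have h1 := hF.continuousOn_fderivWithin hU le_rfl
    have h2 : ContinuousOn (fun q : ℝ × ℝ =>
      fderivWithin ℝ (fun q : ℝ × ℝ => F q.1 q.2) (Set.univ ×ˢ Ico 0 T) q (1, 0))
      (Set.univ ×ˢ Ico 0 T) := h1.clm_apply continuousOn_const
    refine h2.congr fun q hq => ?_
    exact (hx q.1 q.2 hq.2).deriv
  · intro x t ht
    have hn : (Set.univ : Set ℝ) ×ˢ Ico (0:ℝ) T ∈ 𝓝 (x, t) :=
      prod_mem_nhds univ_mem (Ico_mem_nhds ht.1 ht.2)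
    have h1 := (hF.contDiffAt hn).differentiableAt one_ne_zero
    exact DifferentiableAt.comp (f := fun t' : ℝ => (x, t')) t h1 (by fun_prop)

lemma ps_y_part
    (p : ℝ → ℝ) (T M₁ M₂ : ℝ)
    (hp : ContDiffOn ℝ 3 p (Set.Ioi 0))
    (hp' : ∀ v ∈ Set.Ioi (0 : ℝ), deriv p v < 0)
    (hp'' : ∀ v ∈ Set.Ioi (0 : ℝ), 0 < deriv (deriv p) v)
    (τ₀ u₀ : ℝ → ℝ) (hA : AssumptionA M₁ M₂ τ₀ u₀)
    (τ u : ℝ → ℝ → ℝ) (hsol : GenPSysSol p (Set.Ico 0 T) 1 τ u)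
    (hτ0 : ∀ x, τ x 0 = τ₀ x) (hu0 : ∀ x, u x 0 = u₀ x)
    (y : ℝ → ℝ → ℝ)
    (hy : ∀ x t, y x t = Real.sqrt (Real.sqrt (-deriv p (τ x t)))
        * deriv (fun x' => u x' t + ∫ ξ in (τ x' t)..1, Real.sqrt (-deriv p ξ)) x) :
    ∀ x : ℝ, ∀ t ∈ Set.Ico 0 T, y x t ≤ max 0 (⨆ x', y x' 0) := by
  obtain ⟨hpos, hτC, huC, heq1, heq2⟩ := hsol
  obtain ⟨-, -, hM1, hM2, hbd, hlow⟩ := hA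
  have hτC1 : ContDiffOn ℝ 1 (fun q : ℝ × ℝ => τ q.1 q.2) (Set.univ ×ˢ Ico 0 T) := by exact_mod_cast hτC
  have huC1 : ContDiffOn ℝ 1 (fun q : ℝ × ℝ => u q.1 q.2) (Set.univ ×ˢ Ico 0 T) := by exact_mod_cast huC
  obtain ⟨τx1, τx2, τt1⟩ := ps_partials hτC1
  obtain ⟨ux1, ux2, ut1⟩ := ps_partials huC1
  let c : ℝ → ℝ := fun v => √(-deriv p v)
  let dc : ℝ → ℝ := fun v => -(deriv (deriv p) v) / (2 * √(-deriv p v))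
  let h : ℝ → ℝ := fun v => -∫ ξ in v..1, c ξ
  have hp2 : ContDiffOn ℝ 2 (deriv p) (Ioi 0) := hp.deriv_of_isOpen isOpen_Ioi (by norm_num)
  have hppc : ContinuousOn (deriv (deriv p)) (Ioi 0) :=
    hp2.continuousOn_deriv_of_isOpen isOpen_Ioi (by norm_num)
  have cpos : ∀ v, 0 < v → 0 < c v := fun v hv => Real.sqrt_pos.2 (by linarith [hp' v hv])
  have csq : ∀ v, 0 < v → c v ^ 2 = -deriv p v := fun v hv => Real.sq_sqrt (by linarith [hp' v hv])
  have cder : ∀ v, 0 < v → HasDerivAt c (dc v) v := fun v hv => by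
    have h1 : HasDerivAt (deriv p) (deriv (deriv p) v) v :=
      ((hp2.contDiffAt (Ioi_mem_nhds hv)).differentiableAt (by norm_num)).hasDerivAt
    exact h1.neg.sqrt (by have := hp' v hv; simp only [Pi.neg_apply]; linarith)
  have ccont : ContinuousOn c (Ioi 0) := fun v hv => (cder v hv).continuousAt.continuousWithinAt
  have hder : ∀ v, 0 < v → HasDerivAt h (c v) v := fun v hv => by
    have hii : IntervalIntegrable c volume 1 v := by
      refine (ccont.mono ?_).intervalIntegrable
      intro w hw
      rw [mem_uIcc] at hw
      rcases hw with hw | hw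
      · exact lt_of_lt_of_le one_pos hw.1
      · exact lt_of_lt_of_le hv hw.1
    have h1 := intervalIntegral.integral_hasDerivAt_right hii
      (ccont.stronglyMeasurableAtFilter isOpen_Ioi v hv) (cder v hv).continuousAt
    have : h = fun v => ∫ ξ in (1:ℝ)..v, c ξ := by
      funext w; simp only [h]; rw [intervalIntegral.integral_symm, neg_neg]
    rw [this]; exact h1
  have hycalc : ∀ x, ∀ t ∈ Ico 0 T, y x t = √(c (τ x t)) *
      (deriv (fun x' => u x' t) x - c (τ x t) * deriv (fun x' => τ x' t) x) := by
    intro x t ht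
    rw [hy]
    congr 1
    have h1 := ((hder _ (hpos x t ht)).comp x (τx1 x t ht))
    have h2 := (ux1 x t ht).sub h1
    have h3 : (fun x' => u x' t + ∫ ξ in (τ x' t)..1, Real.sqrt (-deriv p ξ)) =
        (fun x' => u x' t) - (h ∘ fun x' => τ x' t) := by
      funext x'; simp [h, c]
    rw [h3, h2.deriv]
  have hT0 : ∀ t ∈ Ico 0 T, (0 : ℝ) ∈ Ico 0 T := fun t ht => ⟨le_rfl, ht.1.trans_lt ht.2⟩
  have hτI : ∀ x, τ x 0 ∈ Icc M₂ M₁ := fun x => by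
    rw [hτ0]
    have := hbd x
    have a1 := abs_nonneg (deriv τ₀ x)
    have a2 := abs_nonneg (u₀ x)
    have a3 := abs_nonneg (deriv u₀ x)
    exact ⟨hlow x, by linarith [le_abs_self (τ₀ x)]⟩
  have hsub : Icc M₂ M₁ ⊆ Ioi 0 := fun v hv => hM2.trans_le hv.1
  obtain ⟨Ch, hCh⟩ := (isCompact_Icc (a := M₂) (b := M₁)).exists_bound_of_continuousOn
    (f := h) (fun v hv => (hder v (hsub hv)).continuousAt.continuousWithinAt)
  obtain ⟨Cc, hCc⟩ := (isCompact_Icc (a := M₂) (b := M₁)).exists_bound_of_continuousOn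
    (ccont.mono hsub)
  intro x t ht
  have hbdd : BddAbove (range fun x' => y x' 0) := by
    refine ⟨√Cc * (M₁ + Cc * M₁), ?_⟩
    rintro _ ⟨x', rfl⟩
    simp only
    rw [hycalc x' 0 (hT0 t ht)]
    have e1 : (fun x' => u x' 0) = u₀ := funext hu0
    have e2 : (fun x' => τ x' 0) = τ₀ := funext hτ0
    rw [e1, e2]
    have b1 := hbd x'
    have a0 := abs_nonneg (τ₀ x')
    have a1 := abs_nonneg (deriv τ₀ x')
    have a2 := abs_nonneg (u₀ x')
    have a3 := abs_nonneg (deriv u₀ x')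
    have b2 : c (τ x' 0) ≤ Cc := (le_abs_self _).trans (hCc _ (hτI x'))
    have b3 := cpos _ (hpos x' 0 (hT0 t ht))
    have b4 : deriv u₀ x' - c (τ x' 0) * deriv τ₀ x' ≤ M₁ + Cc * M₁ := by
      have d1 : -(c (τ x' 0) * deriv τ₀ x') ≤ Cc * M₁ := by
        calc -(c (τ x' 0) * deriv τ₀ x') = c (τ x' 0) * (-deriv τ₀ x') := by ring
          _ ≤ c (τ x' 0) * M₁ :=
            mul_le_mul_of_nonneg_left (by linarith [neg_abs_le (deriv τ₀ x')]) b3.le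
          _ ≤ Cc * M₁ := mul_le_mul_of_nonneg_right b2 hM1.le
      linarith [le_abs_self (deriv u₀ x')]
    have b5 : 0 ≤ M₁ + Cc * M₁ := by
      have := mul_nonneg (b3.le.trans b2) hM1.le
      linarith
    calc _ ≤ √(c (τ x' 0)) * (M₁ + Cc * M₁) := mul_le_mul_of_nonneg_left b4 (Real.sqrt_nonneg _)
      _ ≤ _ := mul_le_mul_of_nonneg_right (Real.sqrt_le_sqrt b2) b5
  rcases ht.1.eq_or_lt with h0 | h0
  · subst h0
    exact (le_ciSup hbdd x).trans (le_max_right _ _)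
  -- clamping
  set T' := (t + T) / 2 with hT'
  have htT := ht.2
  have hT'T : T' < T := by linarith
  have hT'0 : 0 < T' := by linarith
  let κ : ℝ → ℝ := fun s => max 0 (min s T')
  have hκc : Continuous κ := by fun_prop
  have hκm : ∀ s, κ s ∈ Ico 0 T := fun s =>
    ⟨le_max_left _ _, max_lt (by linarith) ((min_le_right _ _).trans_lt hT'T)⟩
  have hκid : ∀ s ∈ Icc 0 T', κ s = s := fun s hs => by
    simp only [κ]; rw [min_eq_left hs.2, max_eq_right hs.1]
  have hκe : ∀ s ∈ Ioo 0 T', κ =ᶠ[𝓝 s] id := fun s hs => by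
    filter_upwards [Icc_mem_nhds hs.1 hs.2] with r hr using hκid r hr
  have hcl : Continuous (fun q : ℝ × ℝ => (q.1, κ q.2)) := by fun_prop
  have hmaps : ∀ q : ℝ × ℝ, (q.1, κ q.2) ∈ (Set.univ : Set ℝ) ×ˢ Ico 0 T := fun q =>
    ⟨mem_univ _, hκm _⟩
  have H : PCore c dc h (fun x s => τ x (κ s)) (fun x s => u x (κ s))
      (fun x s => deriv (fun x' => τ x' (κ s)) x) (fun x s => deriv (fun x' => u x' (κ s)) x) T' := by
    refine ⟨cpos, cder, ?_, ?_, hder, ?_, ?_, ?_, ?_, ?_, ?_, ?_, ?_, ?_⟩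
    · refine ContinuousOn.div hppc.neg (continuousOn_const.mul ccont) fun v hv => ?_
      have := cpos v hv
      positivity
    · intro v hv
      refine div_nonpos_of_nonpos_of_nonneg ?_ (by positivity)
      linarith [hp'' v hv]
    · exact fun x s => hpos x _ (hκm s)
    · exact hτC1.continuousOn.comp_continuous hcl hmaps
    · exact huC1.continuousOn.comp_continuous hcl hmaps
    · exact τx2.comp_continuous hcl hmaps
    · exact ux2.comp_continuous hcl hmaps
    · exact fun x s => τx1 x _ (hκm s)
    · exact fun x s => ux1 x _ (hκm s)
    · intro x s hs
      have hsT : s ∈ Ioo 0 T := ⟨hs.1, hs.2.trans hT'T⟩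
      have e1 := hκid s (Ioo_subset_Icc_self hs)
      have h1 := (τt1 x s hsT).hasDerivAt
      have h2 := heq1 x s (Ioo_subset_Ico_self hsT)
      rw [sub_eq_zero.1 h2] at h1
      simp only [e1]
      refine h1.congr_of_eventuallyEq ?_
      filter_upwards [hκe s hs] with r hr
      rw [hr]; rfl
    · intro x s hs
      have hsT : s ∈ Ioo 0 T := ⟨hs.1, hs.2.trans hT'T⟩
      have hsT' := Ioo_subset_Ico_self hsT
      have e1 := hκid s (Ioo_subset_Icc_self hs)
      have h1 := (ut1 x s hsT).hasDerivAt
      have h2 := heq2 x s hsT'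
      have h3 : HasDerivAt p (deriv p (τ x s)) (τ x s) :=
        ((hp.contDiffAt (Ioi_mem_nhds (hpos x s hsT'))).differentiableAt (by norm_num)).hasDerivAt
      have h4 := h3.comp x (τx1 x s hsT')
      have h5 : deriv (fun x' => p (τ x' s)) x = deriv p (τ x s) * deriv (fun x' => τ x' s) x := h4.deriv
      rw [h5] at h2
      simp only [e1]
      rw [csq _ (hpos x s hsT')]
      have h6 : deriv (fun t' => u x t') s = -deriv p (τ x s) * deriv (fun x' => τ x' s) x := by linarith
      rw [h6] at h1
      refine h1.congr_of_eventuallyEq ?_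
      filter_upwards [hκe s hs] with r hr
      rw [hr]; rfl
  have k0 : κ 0 = 0 := hκid 0 ⟨le_rfl, hT'0.le⟩
  have kt : κ t = t := hκid t ⟨h0.le, by linarith⟩
  obtain ⟨x₀, hx₀⟩ := H.main_le (t₀ := t) (B := M₁ + Ch + 1) (M := M₂) ⟨h0, by linarith⟩
    (fun x => by
      simp only [k0]
      have b := hCh _ (hτI x)
      rw [Real.norm_eq_abs] at b
      have := hbd x
      have a1 := abs_nonneg (deriv τ₀ x)
      have a2 := abs_nonneg (τ₀ x)
      have a3 := abs_nonneg (deriv u₀ x)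
      rw [hu0]
      linarith)
    hM2 (fun x => by simp only [k0]; rw [hτ0]; exact hlow x) x
  simp only [k0, kt] at hx₀
  rw [← hycalc x t ht, ← hycalc x₀ 0 (hT0 t ht)] at hx₀
  exact (hx₀.trans (le_ciSup hbdd x₀)).trans (le_max_right _ _)

/-- Lemma 2.10: for a general pressure `p ∈ C³((0,∞))` with `p' < 0`, `p'' > 0`, and
initial data satisfying Assumption A, every `C¹` solution of the p-system on `ℝ × [0,T)`
satisfies `y ≤ Y := max{0, sup_x y(x,0)}` and `q ≤ Q := max{0, sup_x q(x,0)}`, where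
`y = √c · s_x`, `q = √c · r_x`, `c = √(−p')`,
`s = u + ∫_τ^1 c`, `r = u − ∫_τ^1 c`. -/
theorem psystem_general_pressure_gradient_upper_bound
    (p : ℝ → ℝ) (T M₁ M₂ : ℝ) (hT : 0 < T)
    (hp : ContDiffOn ℝ 3 p (Set.Ioi 0))
    (hp' : ∀ v ∈ Set.Ioi (0 : ℝ), deriv p v < 0)
    (hp'' : ∀ v ∈ Set.Ioi (0 : ℝ), 0 < deriv (deriv p) v)
    (τ₀ u₀ : ℝ → ℝ) (hA : AssumptionA M₁ M₂ τ₀ u₀)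
    (τ u : ℝ → ℝ → ℝ) (hsol : GenPSysSol p (Set.Ico 0 T) 1 τ u)
    (hτ0 : ∀ x, τ x 0 = τ₀ x) (hu0 : ∀ x, u x 0 = u₀ x)
    (y q : ℝ → ℝ → ℝ)
    (hy : ∀ x t, y x t = Real.sqrt (Real.sqrt (-deriv p (τ x t)))
        * deriv (fun x' => u x' t + ∫ ξ in (τ x' t)..1, Real.sqrt (-deriv p ξ)) x)
    (hq : ∀ x t, q x t = Real.sqrt (Real.sqrt (-deriv p (τ x t)))
        * deriv (fun x' => u x' t - ∫ ξ in (τ x' t)..1, Real.sqrt (-deriv p ξ)) x) :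
    ∀ x : ℝ, ∀ t ∈ Set.Ico 0 T,
      y x t ≤ max 0 (⨆ x', y x' 0) ∧ q x t ≤ max 0 (⨆ x', q x' 0) := by
  intro x t ht
  refine ⟨ps_y_part p T M₁ M₂ hp hp' hp'' τ₀ u₀ hA τ u hsol hτ0 hu0 y hy x t ht, ?_⟩
  have key := ps_y_part p T M₁ M₂ hp hp' hp'' (fun x => τ₀ (-x)) (fun x => -u₀ (-x)) ?_
    (fun x t => τ (-x) t) (fun x t => -u (-x) t) ?_ (fun x => hτ0 (-x)) (fun x => by rw [hu0])
    (fun x t => q (-x) t) ?_ (-x) t ht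
  · simp only [neg_neg] at key
    have e : (⨆ x', q (-x') 0) = ⨆ x', q x' 0 :=
      (Equiv.neg ℝ).iSup_comp (g := fun x' => q x' 0)
    rwa [e] at key
  · obtain ⟨h1, h2, h3, h4, h5, h6⟩ := hA
    refine ⟨h1.comp contDiff_neg, (h2.comp contDiff_neg).neg, h3, h4, fun x => ?_, fun x => h6 (-x)⟩
    have e1 : deriv (fun x => τ₀ (-x)) x = -deriv τ₀ (-x) := deriv_comp_neg τ₀ x
    have e2 : deriv (fun x => -u₀ (-x)) x = deriv u₀ (-x) := by
      rw [deriv.fun_neg, deriv_comp_neg u₀ x, neg_neg]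
    rw [e1, e2, abs_neg, abs_neg]
    exact h5 (-x)
  · obtain ⟨h1, h2, h3, h4, h5⟩ := hsol
    have hm : MapsTo (fun r : ℝ × ℝ => (-r.1, r.2)) (Set.univ ×ˢ Ico 0 T) (Set.univ ×ˢ Ico 0 T) :=
      fun r hr => ⟨mem_univ _, hr.2⟩
    have hc : ContDiffOn ℝ 1 (fun r : ℝ × ℝ => (-r.1, r.2)) (Set.univ ×ˢ Ico 0 T) :=
      (by fun_prop : ContDiff ℝ 1 (fun r : ℝ × ℝ => (-r.1, r.2))).contDiffOn
    refine ⟨fun x t ht => h1 (-x) t ht, ?_, ?_, fun x t ht => ?_, fun x t ht => ?_⟩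
    · exact h2.comp (by exact_mod_cast hc) hm
    · exact (h3.comp (by exact_mod_cast hc) hm).neg
    · have e2 : deriv (fun x' => -u (-x') t) x = deriv (fun x' => u x' t) (-x) := by
        rw [deriv.fun_neg, deriv_comp_neg (fun x' => u x' t) x, neg_neg]
      rw [e2]; exact h4 (-x) t ht
    · have e1 : deriv (fun x' => p (τ (-x') t)) x = -deriv (fun x' => p (τ x' t)) (-x) :=
        deriv_comp_neg (fun x' => p (τ x' t)) x
      rw [e1, deriv.fun_neg]
      linarith [h5 (-x) t ht]
  · intro x t
    rw [hq]
    congr 1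
    have e : (fun x' => -u (-x') t + ∫ ξ in (τ (-x') t)..1, √(-deriv p ξ)) =
        fun x' => -((fun x' => u x' t - ∫ ξ in (τ x' t)..1, √(-deriv p ξ)) (-x')) := by
      funext x'; simp only; ring
    rw [e, deriv.fun_neg, deriv_comp_neg (fun x' => u x' t - ∫ ξ in (τ x' t)..1, √(-deriv p ξ)) x, neg_neg]
end
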